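/- Let {ε_q} be any choice of signs ±1 indexed by primes, let a ∈ {1,3}, and let x be large with 3 ≤ y ≤ log log x. Then the number of primes p ≤ x with p ≡ a (mod 4) and (q/p) = ε_q for every prime q ≤ y equals π(x)/2^{π(y)+1} + O(x e^{−c√(log x)}) for some absolute constant c > 0. -/

import Mathlib

open scoped Classical

/-!
For odd `n` the Jacobi symbols `(g / n)` at `g = -1` and at the primes `g ≤ Y` determine `n` modulo
`4` and all the `(q / n)` with `q ≤ Y`. With `η_g` the prescribed values, expanding the product of
the factors `1 + η_g (g / p)` and summing over the primes `p ≤ N` expresses the count as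
`2 ^ -(π(Y) + 1)` times a signed sum of character sums `∑ (E / p)`, one for each product `E` of some
of the `g`. The empty product contributes `π(N)`. For `E ≠ 1` reciprocity makes `(E / ·)` a
nontrivial real character modulo `4 |E|`, which is at most a power of `log N` since `|E|` divides
the primorial of `Y`, and the Siegel–Walfisz theorem bounds its sum over primes.

Siegel–Walfisz is needed only for these real characters. Zeros near the line `re s = 1` are excluded
by the inequality `3 + 4 cos θ + cos 2θ ≥ 0` away from the real axis, and on it by Siegel's theorem,
proved in Estermann's way from the Taylor coefficients at `2` of
`ζ(s) L(s, χ₁) L(s, χ₂) L(s, χ₁χ₂)`. Dividing out zeros by Blaschke factors bounds `L'/L` there, and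
a Perron formula with the absolutely convergent kernel `1 / (s (s + 1))` gives a smoothed sum over
primes; differencing in the cutoff and partial summation remove the smoothing and the weight
`log p`.
-/

section LogDeriv

open Complex Metric

theorem exists_eq_mul_cexp_of_ne_zero {g : ℂ → ℂ} {c : ℂ} {R : ℝ}
    (hg : DifferentiableOn ℂ g (ball c R)) (h0 : ∀ z ∈ ball c R, g z ≠ 0) :
    ∃ h : ℂ → ℂ, h c = 0 ∧ (∀ z ∈ ball c R, HasDerivAt h (logDeriv g z) z) ∧
      ∀ z ∈ ball c R, g z = g c * exp (h z) := by
  obtain ⟨h, hh⟩ := ((hg.deriv isOpen_ball).div hg h0).isExactOn_ball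
  have hderiv : ∀ z ∈ ball c R, HasDerivAt (fun z ↦ h z - h c) (logDeriv g z) z :=
    fun z hz ↦ (hh z hz).sub_const _
  refine ⟨fun z ↦ h z - h c, sub_self _, hderiv, fun z hz ↦ ?_⟩
  have hlog : Set.EqOn (logDeriv g) (logDeriv fun z ↦ exp (h z - h c)) (ball c R) := by
    intro w hw
    rw [logDeriv_apply (fun z ↦ exp (h z - h c)), (hderiv w hw).cexp.deriv,
      mul_div_cancel_left₀ _ (exp_ne_zero _)]
  obtain ⟨k, -, hk⟩ := (logDeriv_eqOn_iff hg
    (fun w hw ↦ (hderiv w hw).cexp.differentiableAt.differentiableWithinAt)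
    isOpen_ball (convex_ball c R).isPreconnected (fun w _ ↦ exp_ne_zero _) h0).mp hlog
  have hkc : g c = k := by
    simpa using hk (mem_ball_self ((dist_nonneg).trans_lt (mem_ball.mp hz)))
  simpa [hkc] using hk hz

theorem norm_logDeriv_le_of_norm_le_exp_mul {g : ℂ → ℂ} {c z : ℂ} {r R M : ℝ} (hM : 0 < M)
    (hg : DifferentiableOn ℂ g (ball c R)) (h0 : ∀ z ∈ ball c R, g z ≠ 0)
    (hb : ∀ z ∈ ball c R, ‖g z‖ ≤ Real.exp M * ‖g c‖) (hrR : r < R) (hz : ‖z - c‖ ≤ r) :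
    ‖logDeriv g z‖ ≤ 4 * M * (R + r) / (R - r) ^ 2 := by
  have hr : 0 ≤ r := (norm_nonneg _).trans hz
  have hR : 0 < R := hr.trans_lt hrR
  obtain ⟨h, hc, hderiv, hexp⟩ := exists_eq_mul_cexp_of_ne_zero hg h0
  have hre : ∀ w ∈ ball c R, (h w).re ≤ M := by
    intro w hw
    have hw' := hb w hw
    rw [hexp w hw, norm_mul, norm_exp, mul_comm] at hw'
    exact Real.exp_le_exp.mp
      (le_of_mul_le_mul_right hw' (norm_pos_iff.mpr (h0 c (mem_ball_self hR))))
  have hshift : ∀ u ∈ ball (0 : ℂ) R, c + u ∈ ball c R := fun u hu ↦ by simpa using hu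
  have hh : ∀ w, ‖w - c‖ ≤ (R + r) / 2 → ‖h w‖ ≤ 2 * M * (R + r) / (R - r) := by
    intro w hw
    have hBC := borelCaratheodory_zero (f := fun u ↦ h (c + u)) (z := w - c) hM
      (fun u hu ↦ ((hderiv _ (hshift u hu)).comp_const_add c u).differentiableAt
        |>.differentiableWithinAt) (fun u hu ↦ hre _ (hshift u hu)) hR
      (by rw [mem_ball_zero_iff]; linarith) (by simpa using hc)
    rw [add_sub_cancel] at hBC
    refine hBC.trans ?_
    rw [div_le_div_iff₀ (by linarith) (by linarith)]
    nlinarith [mul_nonneg (mul_pos hM hR).le (show 0 ≤ R + r - 2 * ‖w - c‖ by linarith)]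
  have hball : closedBall z ((R - r) / 2) ⊆ closedBall c ((R + r) / 2) :=
    closedBall_subset_closedBall' (by rw [dist_eq_norm]; linarith)
  have hsub : closedBall z ((R - r) / 2) ⊆ ball c R :=
    hball.trans (closedBall_subset_ball (by linarith))
  have hdiff : DifferentiableOn ℂ h (ball c R) := fun w hw ↦
    (hderiv w hw).differentiableAt.differentiableWithinAt
  have hcauchy := norm_deriv_le_of_forall_mem_sphere_norm_le (half_pos (sub_pos.mpr hrR))
    (hdiff.diffContOnCl_ball hsub) (fun w hw ↦ hh w (by
      simpa [dist_eq_norm] using hball (sphere_subset_closedBall hw)))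
  rw [(hderiv z (hsub (mem_closedBall_self (by linarith)))).deriv] at hcauchy
  refine hcauchy.trans (le_of_eq ?_)
  have := (sub_pos.mpr hrR).ne'
  field_simp
  ring

/-- The function `G` with one zero at `ρ` divided out by the Blaschke factor of the unit disc. For
`G ρ = 0` this is `z ↦ (1 - conj ρ * z) * G z / (z - ρ)`, extended holomorphically to `z = ρ`. -/
noncomputable def blaschkeQuotient (G : ℂ → ℂ) (ρ z : ℂ) : ℂ :=
  (1 - starRingEnd ℂ ρ * z) * dslope G ρ z

namespace blaschkeQuotient

variable {G : ℂ → ℂ} {ρ : ℂ}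

theorem eq_sub_mul_dslope (hρ : G ρ = 0) (z : ℂ) : G z = (z - ρ) * dslope G ρ z := by
  simpa [hρ] using (sub_smul_dslope G ρ z).symm

theorem differentiable_dslope (hG : Differentiable ℂ G) : Differentiable ℂ (dslope G ρ) := by
  rw [← differentiableOn_univ] at hG ⊢
  exact (Complex.differentiableOn_dslope Filter.univ_mem).mpr hG

theorem differentiable (hG : Differentiable ℂ G) : Differentiable ℂ (blaschkeQuotient G ρ) := by
  have := differentiable_dslope (ρ := ρ) hG
  unfold blaschkeQuotient
  fun_prop

theorem norm_le (hG : Differentiable ℂ G) (hρ : G ρ = 0) {B : ℝ}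
    (hB : ∀ z, ‖z‖ ≤ 1 → ‖G z‖ ≤ B) {z : ℂ} (hz : ‖z‖ ≤ 1) :
    ‖blaschkeQuotient G ρ z‖ ≤ B := by
  refine norm_le_of_forall_mem_frontier_norm_le (U := ball 0 1) isBounded_ball
    (differentiable hG).diffContOnCl (fun w hw ↦ ?_) ?_
  · have hw1 : ‖w‖ = 1 := by simpa [frontier_ball] using hw
    have hfactor : 1 - starRingEnd ℂ ρ * w = starRingEnd ℂ (w - ρ) * w := by
      rw [map_sub, sub_mul, conj_mul', hw1]
      simp
    calc ‖blaschkeQuotient G ρ w‖ = ‖G w‖ := by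
          rw [blaschkeQuotient, hfactor, eq_sub_mul_dslope hρ w, norm_mul, norm_mul, norm_mul,
            norm_conj, hw1, mul_one]
      _ ≤ B := hB w hw1.le
  · simpa [closure_ball] using hz

theorem two_mul_norm_le (hρ : G ρ = 0) (hρ2 : ‖ρ‖ ≤ 1 / 2) :
    2 * ‖G 0‖ ≤ ‖blaschkeQuotient G ρ 0‖ := by
  rw [eq_sub_mul_dslope hρ 0]
  simp only [blaschkeQuotient, zero_sub, norm_mul, norm_neg, mul_zero, sub_zero, one_mul]
  nlinarith [norm_nonneg (dslope G ρ 0)]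

theorem eq_zero_of_eq_zero (hρ : G ρ = 0) (hρ2 : ‖ρ‖ < 1) {z : ℂ} (hz : ‖z‖ ≤ 1)
    (h : blaschkeQuotient G ρ z = 0) : G z = 0 := by
  rcases mul_eq_zero.mp h with hfactor | hslope
  · have hnorm : ‖ρ‖ * ‖z‖ = 1 := by
      simpa using congrArg norm (sub_eq_zero.mp hfactor).symm
    nlinarith [norm_nonneg z, norm_nonneg ρ]
  · rw [eq_sub_mul_dslope hρ, hslope, mul_zero]

theorem logDeriv_eq (hG : Differentiable ℂ G) (hρ : G ρ = 0) (h0 : G 0 ≠ 0) :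
    logDeriv G 0 = (-1 / ρ + starRingEnd ℂ ρ) + logDeriv (blaschkeQuotient G ρ) 0 := by
  have hD := differentiable_dslope (ρ := ρ) hG 0
  have hD0 : dslope G ρ 0 ≠ 0 := fun h ↦ h0 (by rw [eq_sub_mul_dslope hρ, h, mul_zero])
  have hρ0 : 0 - ρ ≠ 0 := fun h ↦ h0 (by rw [eq_sub_mul_dslope hρ, h, zero_mul])
  have hlinear : deriv (fun z : ℂ ↦ 1 - starRingEnd ℂ ρ * z) 0 = -starRingEnd ℂ ρ := by
    simp
  have hlog : logDeriv G 0 = logDeriv (fun z ↦ (z - ρ) * dslope G ρ z) 0 := by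
    rw [← funext (eq_sub_mul_dslope hρ)]
  rw [hlog, logDeriv_mul 0 hρ0 hD0 (by fun_prop) hD]
  change _ = _ + logDeriv (fun z ↦ (1 - starRingEnd ℂ ρ * z) * dslope G ρ z) 0
  rw [logDeriv_mul 0 (by simp) hD0 (by fun_prop) hD, logDeriv_apply, logDeriv_apply _ (0 : ℂ),
    logDeriv_apply _ (0 : ℂ), hlinear]
  simp [neg_div, div_neg]

end blaschkeQuotient

theorem re_neg_inv_add_conj_nonneg {ρ : ℂ} (hρ : ‖ρ‖ ≤ 1) (hre : ρ.re ≤ 0) :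
    0 ≤ (-1 / ρ + starRingEnd ℂ ρ).re := by
  rcases eq_or_ne ρ 0 with rfl | h0
  · simp
  have hpos : 0 < normSq ρ := normSq_pos.mpr h0
  have hle : normSq ρ ≤ 1 := by
    rw [normSq_eq_norm_sq]
    exact pow_le_one₀ (norm_nonneg ρ) hρ
  have hfactor : (-1 / ρ + starRingEnd ℂ ρ).re = -ρ.re * (1 / normSq ρ - 1) := by
    simp [div_re]
    ring
  rw [hfactor]
  exact mul_nonneg (by linarith) (sub_nonneg.mpr (one_le_one_div hpos hle))

/- Each zero in the half disc contributes a nonnegative amount, and dividing it out at least doubles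
the value at the centre, so finitely many divisions lead to a zero-free function. -/
theorem neg_le_re_logDeriv_zero {G : ℂ → ℂ} {M : ℝ} (hM : 0 < M) (hG : Differentiable ℂ G)
    (h0 : G 0 ≠ 0) (hB : ∀ z, ‖z‖ ≤ 1 → ‖G z‖ ≤ Real.exp M * ‖G 0‖)
    (hzero : ∀ z, ‖z‖ ≤ 1 / 2 → G z = 0 → z.re ≤ 0) :
    -(8 * M) ≤ (logDeriv G 0).re := by
  suffices hind : ∀ (n : ℕ) (K : ℝ) (G : ℂ → ℂ), K < 2 ^ n → K ≤ Real.exp M →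
      Differentiable ℂ G → G 0 ≠ 0 → (∀ z, ‖z‖ ≤ 1 → ‖G z‖ ≤ K * ‖G 0‖) →
      (∀ z, ‖z‖ ≤ 1 / 2 → G z = 0 → z.re ≤ 0) → -(8 * M) ≤ (logDeriv G 0).re by
    obtain ⟨n, hn⟩ := pow_unbounded_of_one_lt (Real.exp M) one_lt_two
    exact hind n _ G hn le_rfl hG h0 hB hzero
  intro n
  induction n with
  | zero =>
    intro K G hK _ _ h0 hB _
    have hGK := hB 0 (by simp)
    nlinarith [norm_pos_iff.mpr h0]
  | succ n ih =>
    intro K G hK hKM hG h0 hB hzero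
    by_cases hex : ∃ ρ, ‖ρ‖ ≤ 1 / 2 ∧ G ρ = 0
    · obtain ⟨ρ, hρ, hρz⟩ := hex
      have hρ1 : ‖ρ‖ < 1 := by linarith
      have hdouble := blaschkeQuotient.two_mul_norm_le hρz hρ
      have hG0 := norm_pos_iff.mpr h0
      have hK0 : 0 < K := pos_of_mul_pos_left (hG0.trans_le (hB 0 (by simp))) hG0.le
      have hquot := ih (K / 2) (blaschkeQuotient G ρ) (by rw [pow_succ] at hK; linarith)
        (by linarith) (blaschkeQuotient.differentiable hG) (norm_pos_iff.mp (by linarith))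
        (fun z hz ↦ (blaschkeQuotient.norm_le hG hρz hB hz).trans (by nlinarith))
        (fun z hz h ↦ hzero z hz
          (blaschkeQuotient.eq_zero_of_eq_zero hρz hρ1 (by linarith) h))
      rw [blaschkeQuotient.logDeriv_eq hG hρz h0, add_re]
      linarith [re_neg_inv_add_conj_nonneg hρ1.le (hzero ρ hρ hρz)]
    · push Not at hex
      have hnorm := norm_logDeriv_le_of_norm_le_exp_mul (g := G) (c := 0) (z := 0) (r := 0)
        (R := 1 / 2) hM hG.differentiableOn
        (fun z hz ↦ hex z (mem_ball_zero_iff.mp hz).le)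
        (fun z hz ↦ (hB z (by linarith [mem_ball_zero_iff.mp hz])).trans (by gcongr))
        (by norm_num) (by simp)
      have habs := (abs_le.mp (abs_re_le_norm (logDeriv G 0))).1
      norm_num at hnorm
      linarith

theorem re_neg_inv_add_conj_sub_le_re_logDeriv_zero {G : ℂ → ℂ} {M : ℝ} (hM : 0 < M)
    (hG : Differentiable ℂ G) (h0 : G 0 ≠ 0)
    (hB : ∀ z, ‖z‖ ≤ 1 → ‖G z‖ ≤ Real.exp M * ‖G 0‖)
    (hzero : ∀ z, ‖z‖ ≤ 1 / 2 → G z = 0 → z.re ≤ 0) {ρ : ℂ} (hρ : ‖ρ‖ ≤ 1 / 2)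
    (hρz : G ρ = 0) :
    (-1 / ρ + starRingEnd ℂ ρ).re - 8 * M ≤ (logDeriv G 0).re := by
  have hdouble := blaschkeQuotient.two_mul_norm_le hρz hρ
  have hG0 := norm_pos_iff.mpr h0
  have hquot := neg_le_re_logDeriv_zero hM (blaschkeQuotient.differentiable (ρ := ρ) hG)
    (norm_pos_iff.mp (by linarith))
    (fun z hz ↦ (blaschkeQuotient.norm_le hG hρz hB hz).trans (by gcongr; linarith))
    (fun z hz h ↦ hzero z hz
      (blaschkeQuotient.eq_zero_of_eq_zero hρz (by linarith) (by linarith) h))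
  rw [blaschkeQuotient.logDeriv_eq hG hρz h0, add_re (-1 / ρ + _)]
  linarith

variable {f : ℂ → ℂ} {c : ℂ} {M R : ℝ}

theorem logDeriv_comp_rescale (hf : Differentiable ℂ f) :
    logDeriv (fun z : ℂ ↦ f (c + R * z)) 0 = R * logDeriv f c := by
  have hderiv : HasDerivAt (fun z : ℂ ↦ c + R * z) R 0 := by
    simpa using ((hasDerivAt_id (0 : ℂ)).const_mul (R : ℂ)).const_add c
  have := logDeriv_comp (f := f) (g := fun z : ℂ ↦ c + R * z) (hf _) hderiv.differentiableAt
  rw [hderiv.deriv] at this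
  simpa [Function.comp_def, mul_comm] using this

theorem neg_le_re_logDeriv (hR : 0 < R) (hM : 0 < M) (hf : Differentiable ℂ f) (h0 : f c ≠ 0)
    (hB : ∀ z, ‖z - c‖ ≤ R → ‖f z‖ ≤ Real.exp M * ‖f c‖)
    (hzero : ∀ z, ‖z - c‖ ≤ R / 2 → f z = 0 → z.re ≤ c.re) :
    -(8 * M / R) ≤ (logDeriv f c).re := by
  have hunit := neg_le_re_logDeriv_zero (G := fun z ↦ f (c + R * z)) hM (by fun_prop) (by simpa)
    (fun z hz ↦ by simpa using hB (c + R * z) (by simpa [abs_of_pos hR] using by nlinarith))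
    (fun z hz h ↦ by
      have := hzero (c + R * z) (by simpa [abs_of_pos hR] using by nlinarith) h
      simp only [add_re, re_ofReal_mul] at this
      nlinarith)
  rw [logDeriv_comp_rescale hf, re_ofReal_mul] at hunit
  rw [← neg_div, div_le_iff₀ hR]
  linarith

theorem inv_sub_le_re_logDeriv (hR : 0 < R) (hM : 0 < M) (hf : Differentiable ℂ f) (h0 : f c ≠ 0)
    (hB : ∀ z, ‖z - c‖ ≤ R → ‖f z‖ ≤ Real.exp M * ‖f c‖)
    (hzero : ∀ z, ‖z - c‖ ≤ R / 2 → f z = 0 → z.re ≤ c.re) {ρ : ℝ} (hρ : 0 < ρ)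
    (hρR : ρ ≤ R / 2) (hρz : f (c - ρ) = 0) :
    ρ⁻¹ - ρ / R ^ 2 - 8 * M / R ≤ (logDeriv f c).re := by
  have hunit := re_neg_inv_add_conj_sub_le_re_logDeriv_zero (G := fun z ↦ f (c + R * z))
    (ρ := (-(ρ / R) : ℝ)) hM (by fun_prop) (by simpa)
    (fun z hz ↦ by simpa using hB (c + R * z) (by simpa [abs_of_pos hR] using by nlinarith))
    (fun z hz h ↦ by
      have := hzero (c + R * z) (by simpa [abs_of_pos hR] using by nlinarith) h
      simp only [add_re, re_ofReal_mul] at this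
      nlinarith)
    (by
      rw [norm_real, norm_neg, Real.norm_of_nonneg (by positivity), div_le_iff₀ hR]
      linarith)
    (by
      rw [← hρz, ← ofReal_mul, mul_neg, mul_div_cancel₀ _ hR.ne', ofReal_neg, sub_eq_add_neg])
  have hre : ((-1 : ℂ) / (-(ρ / R) : ℝ) + starRingEnd ℂ (-(ρ / R) : ℝ)).re = R / ρ - ρ / R := by
    rw [conj_ofReal, ← ofReal_one, ← ofReal_neg, ← ofReal_div, ← ofReal_add, ofReal_re,
      neg_div_neg_eq, one_div_div, sub_eq_add_neg]
  rw [hre, logDeriv_comp_rescale hf, re_ofReal_mul] at hunit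
  have hscale : ρ⁻¹ - ρ / R ^ 2 - 8 * M / R = (R / ρ - ρ / R - 8 * M) / R := by field_simp
  rw [hscale, div_le_iff₀ hR]
  linarith

end LogDeriv

section LFunctionBound

open Complex Filter Finset Topology

theorem norm_ofReal_cpow_sub_le {w : ℂ} (hw : w.re ≤ 1) {a b : ℝ} (ha : 0 < a) (hab : a ≤ b) :
    ‖(b : ℂ) ^ w - (a : ℂ) ^ w‖ ≤ ‖w‖ * a ^ (w.re - 1) * (b - a) := by
  refine norm_image_sub_le_of_norm_deriv_le_segment' (f := fun x : ℝ ↦ (x : ℂ) ^ w)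
    (f' := fun x : ℝ ↦ w * (x : ℂ) ^ (w - 1)) ?_ ?_ b ⟨hab, le_rfl⟩
  · intro x hx
    have hslit : (x : ℂ) ∈ slitPlane := ofReal_mem_slitPlane.mpr (ha.trans_le hx.1)
    simpa using ((hasDerivAt_id (x : ℂ)).cpow_const (c := w) hslit).comp_ofReal.hasDerivWithinAt
  · intro x hx
    rw [norm_mul, norm_cpow_eq_rpow_re_of_pos (ha.trans_le hx.1), sub_re, one_re]
    exact mul_le_mul_of_nonneg_left
      (Real.rpow_le_rpow_of_nonpos ha hx.1 (by linarith)) (norm_nonneg w)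

theorem norm_natCast_add_one_cpow_sub_le {w : ℂ} (hw : w.re ≤ 1) (n : ℕ) :
    ‖((n + 1 : ℕ) : ℂ) ^ w - ((n + 2 : ℕ) : ℂ) ^ w‖ ≤ ‖w‖ * (n + 1 : ℝ) ^ (w.re - 1) := by
  have h := norm_ofReal_cpow_sub_le hw (a := n + 1) (b := n + 2) (by positivity) (by linarith)
  rw [norm_sub_rev]
  push_cast at h ⊢
  exact h.trans_eq (by ring)

theorem sum_range_natCast_add_eq_sum_zmod {M : Type*} [AddCommMonoid M] {q : ℕ} [NeZero q]
    (f : ZMod q → M) (m : ℕ) : ∑ k ∈ range q, f ((m + k : ℕ) : ZMod q) = ∑ u, f u := by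
  have hshift : ∑ u : ZMod q, f (m + u) = ∑ u, f u :=
    Fintype.sum_equiv (Equiv.addLeft (m : ZMod q)) _ _ fun _ ↦ rfl
  rw [← hshift]
  refine sum_bij' (fun k _ ↦ (k : ZMod q)) (fun u _ ↦ u.val) (by simp)
    (fun u _ ↦ by simp [ZMod.val_lt]) (fun k hk ↦ ZMod.val_natCast_of_lt (mem_range.mp hk))
    (by simp) (by simp)

theorem summable_natCast_add_one_rpow {δ : ℝ} (hδ : 0 < δ) :
    Summable fun n : ℕ ↦ (n + 1 : ℝ) ^ (-1 - δ) := by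
  simpa using (summable_nat_add_iff 1).mpr (Real.summable_nat_rpow (p := -1 - δ).mpr (by linarith))

theorem differentiableOn_tsum_of_norm_le_rpow {F : ℕ → ℂ → ℂ} {B : ℂ → ℝ}
    (hF : ∀ n, Differentiable ℂ (F n)) (hB : Continuous B)
    (hle : ∀ n s, 0 < s.re → ‖F n s‖ ≤ B s * (n + 1 : ℝ) ^ (-1 - s.re)) :
    DifferentiableOn ℂ (fun s ↦ ∑' n, F n s) {s | 0 < s.re} := by
  intro z (hz : 0 < z.re)
  let U : Set ℂ := {w | z.re / 2 < w.re} ∩ {w | B w < |B z| + 1}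
  have hU : IsOpen U :=
    (isOpen_lt continuous_const continuous_re).inter (isOpen_lt hB continuous_const)
  have hzU : z ∈ U := ⟨half_lt_self hz, (le_abs_self (B z)).trans_lt (lt_add_one |B z|)⟩
  have hdiff : DifferentiableOn ℂ (fun s ↦ ∑' n, F n s) U := by
    refine differentiableOn_tsum_of_summable_norm
      ((summable_natCast_add_one_rpow (half_pos hz)).mul_left (|B z| + 1))
      (fun n ↦ (hF n).differentiableOn) hU ?_
    rintro n w ⟨hre : z.re / 2 < w.re, hBw : B w < |B z| + 1⟩
    refine (hle n w (by linarith)).trans ?_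
    gcongr
    linarith [n.cast_nonneg (α := ℝ)]
  exact (hdiff.differentiableAt (hU.mem_nhds hzU)).differentiableWithinAt

theorem eqOn_re_pos_of_eqOn_one_lt_re {f g : ℂ → ℂ} (hf : DifferentiableOn ℂ f {s | 0 < s.re})
    (hg : DifferentiableOn ℂ g {s | 0 < s.re}) (hfg : Set.EqOn f g {s | 1 < s.re}) :
    Set.EqOn f g {s | 0 < s.re} := by
  have hopen (a : ℝ) : IsOpen {s : ℂ | a < s.re} := isOpen_lt continuous_const continuous_re
  exact (hf.analyticOnNhd (hopen 0)).eqOn_of_preconnected_of_eventuallyEq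
    (hg.analyticOnNhd (hopen 0)) (convex_halfSpace_re_gt 0).isPreconnected (z₀ := 2) (by simp)
    (hfg.eventuallyEq_of_mem ((hopen 1).mem_nhds (by simp)))

/-- The partial sum `∑_{1 ≤ k ≤ n} χ(k)`. -/
noncomputable def charPartialSum {q : ℕ} (χ : DirichletCharacter ℂ q) (n : ℕ) : ℂ :=
  ∑ k ∈ range n, χ (k + 1 : ℕ)

variable {q : ℕ} {χ : DirichletCharacter ℂ q}

theorem norm_charPartialSum_le (χ : DirichletCharacter ℂ q) (n : ℕ) :
    ‖charPartialSum χ n‖ ≤ n := by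
  simpa [charPartialSum] using
    norm_sum_le_of_le (range n) fun k _ ↦ χ.norm_le_one ((k + 1 : ℕ) : ZMod q)

/-- The `n`-th term of the series that summation by parts produces from `∑ χ(n) n⁻ˢ`; unlike the
original series, it converges absolutely for `0 < re s` when `χ` is nontrivial. -/
noncomputable def abelTerm (χ : DirichletCharacter ℂ q) (n : ℕ) (s : ℂ) : ℂ :=
  charPartialSum χ (n + 1) * (((n + 1 : ℕ) : ℂ) ^ (-s) - ((n + 2 : ℕ) : ℂ) ^ (-s))

theorem differentiable_abelTerm (χ : DirichletCharacter ℂ q) (n : ℕ) :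
    Differentiable ℂ (abelTerm χ n) := fun s ↦ by
  have hcpow (m : ℕ) [NeZero m] : DifferentiableAt ℂ (fun s : ℂ ↦ (m : ℂ) ^ (-s)) s :=
    differentiableAt_id.neg.const_cpow (.inl (NeZero.ne _))
  exact ((hcpow (n + 1)).sub (hcpow (n + 2))).const_mul _

theorem sum_range_succ_mul_cpow_eq (χ : DirichletCharacter ℂ q) (s : ℂ) (N : ℕ) :
    ∑ n ∈ range (N + 1), χ (n + 1 : ℕ) * ((n + 1 : ℕ) : ℂ) ^ (-s) =
      charPartialSum χ (N + 1) * ((N + 1 : ℕ) : ℂ) ^ (-s) + ∑ n ∈ range N, abelTerm χ n s := by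
  have hparts := sum_range_by_parts (fun n : ℕ ↦ ((n + 1 : ℕ) : ℂ) ^ (-s))
    (fun n : ℕ ↦ χ (n + 1 : ℕ)) (N + 1)
  simp only [smul_eq_mul, add_tsub_cancel_right] at hparts
  simp only [mul_comm (χ _), hparts, sub_eq_add_neg, ← sum_neg_distrib, abelTerm, charPartialSum]
  congr 1
  · ring
  · exact sum_congr rfl fun n _ ↦ by ring

variable [NeZero q]

theorem charPartialSum_add_modulus (hχ : χ ≠ 1) (n : ℕ) :
    charPartialSum χ (n + q) = charPartialSum χ n := by
  have hblock := sum_range_natCast_add_eq_sum_zmod (fun u ↦ χ u) (n + 1)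
  rw [MulChar.sum_eq_zero_of_ne_one hχ] at hblock
  simpa [charPartialSum, sum_range_add, add_right_comm] using hblock

theorem norm_charPartialSum_le_modulus (hχ : χ ≠ 1) (n : ℕ) : ‖charPartialSum χ n‖ ≤ q := by
  have hmod : charPartialSum χ n = charPartialSum χ (n % q) :=
    (Function.Periodic.map_mod_nat (charPartialSum_add_modulus hχ) n).symm
  rw [hmod]
  exact (norm_charPartialSum_le χ _).trans
    (by exact_mod_cast (Nat.mod_lt n (NeZero.pos q)).le)

theorem norm_charPartialSum_le_rpow_mul_rpow (hχ : χ ≠ 1) (n : ℕ) {δ : ℝ} (h0 : 0 ≤ δ)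
    (h1 : δ ≤ 1) : ‖charPartialSum χ n‖ ≤ (n : ℝ) ^ (1 - δ) * (q : ℝ) ^ δ := by
  calc ‖charPartialSum χ n‖ = ‖charPartialSum χ n‖ ^ (1 - δ) * ‖charPartialSum χ n‖ ^ δ := by
        rw [← Real.rpow_add' (norm_nonneg _) (by norm_num), sub_add_cancel, Real.rpow_one]
    _ ≤ (n : ℝ) ^ (1 - δ) * (q : ℝ) ^ δ := by
        have := sub_nonneg.mpr h1
        gcongr
        exacts [norm_charPartialSum_le χ n, norm_charPartialSum_le_modulus hχ n]

theorem norm_abelTerm_le (hχ : χ ≠ 1) (n : ℕ) {δ η : ℝ} (h0 : 0 ≤ δ) (h1 : δ ≤ 1) (hη : 0 ≤ η)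
    {s : ℂ} (hs : 1 - δ + η ≤ s.re) :
    ‖abelTerm χ n s‖ ≤ ‖s‖ * (q : ℝ) ^ δ * (n + 1 : ℝ) ^ (-1 - η) := by
  have hsum := norm_charPartialSum_le_rpow_mul_rpow hχ (n + 1) h0 h1
  have hdiff := norm_natCast_add_one_cpow_sub_le (w := -s) (by rw [neg_re]; linarith) n
  rw [norm_neg, neg_re] at hdiff
  push_cast at hsum
  calc ‖abelTerm χ n s‖
      ≤ ((n + 1 : ℝ) ^ (1 - δ) * (q : ℝ) ^ δ) * (‖s‖ * (n + 1 : ℝ) ^ (-s.re - 1)) := by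
        rw [abelTerm, norm_mul]; gcongr
    _ = ‖s‖ * (q : ℝ) ^ δ * (n + 1 : ℝ) ^ ((1 - δ) + (-s.re - 1)) := by
        rw [Real.rpow_add (by positivity)]; ring
    _ ≤ ‖s‖ * (q : ℝ) ^ δ * (n + 1 : ℝ) ^ (-1 - η) := by
        gcongr
        · linarith [n.cast_nonneg (α := ℝ)]
        · linarith

theorem tendsto_charPartialSum_mul_cpow (hχ : χ ≠ 1) {s : ℂ} (hs : 0 < s.re) :
    Tendsto (fun N : ℕ ↦ charPartialSum χ (N + 1) * ((N + 1 : ℕ) : ℂ) ^ (-s)) atTop (𝓝 0) := by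
  have hz : Tendsto (fun N : ℕ ↦ (q : ℝ) * ((N + 1 : ℕ) : ℝ) ^ (-s.re)) atTop (𝓝 0) := by
    simpa using ((tendsto_rpow_neg_atTop hs).comp
      (tendsto_natCast_atTop_atTop.comp (tendsto_add_atTop_nat 1))).const_mul (q : ℝ)
  refine squeeze_zero_norm (fun N ↦ ?_) hz
  rw [norm_mul, norm_natCast_cpow_of_pos N.succ_pos, neg_re]
  gcongr
  exact norm_charPartialSum_le_modulus hχ _

theorem LSeries_eq_tsum_abelTerm (hχ : χ ≠ 1) {s : ℂ} (hs : 1 < s.re) :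
    LSeries (χ ·) s = ∑' n, abelTerm χ n s := by
  have hterm (n : ℕ) : LSeries.term (χ ·) s (n + 1) =
      χ (n + 1 : ℕ) * ((n + 1 : ℕ) : ℂ) ^ (-s) := by
    rw [LSeries.term_of_ne_zero n.succ_ne_zero, cpow_neg, div_eq_mul_inv]
  have hL := ((hasSum_nat_add_iff' 1).mpr
    (χ.LSeriesSummable_of_one_lt_re hs).LSeriesHasSum).tendsto_sum_nat
  simp only [hterm, sum_range_one, LSeries.term_zero, sub_zero] at hL
  have hA : Summable (abelTerm χ · s) :=
    .of_norm_bounded ((summable_natCast_add_one_rpow one_pos).mul_left _)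
      fun n ↦ norm_abelTerm_le hχ n zero_le_one le_rfl zero_le_one (by linarith)
  have hlim := (tendsto_charPartialSum_mul_cpow hχ (zero_lt_one.trans hs)).add
    hA.hasSum.tendsto_sum_nat
  rw [zero_add] at hlim
  exact tendsto_nhds_unique (hL.comp (tendsto_add_atTop_nat 1))
    (hlim.congr fun N ↦ (sum_range_succ_mul_cpow_eq χ s N).symm)

theorem LFunction_eq_tsum_abelTerm (hχ : χ ≠ 1) {s : ℂ} (hs : 0 < s.re) :
    χ.LFunction s = ∑' n, abelTerm χ n s := by
  have hdiff : DifferentiableOn ℂ (fun s ↦ ∑' n, abelTerm χ n s) {s | 0 < s.re} :=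
    differentiableOn_tsum_of_norm_le_rpow (B := fun s ↦ ‖s‖ * (q : ℝ) ^ (1 : ℝ))
      (differentiable_abelTerm χ) (by fun_prop) fun n s hs ↦
        norm_abelTerm_le hχ n zero_le_one le_rfl hs.le (by linarith)
  refine eqOn_re_pos_of_eqOn_one_lt_re (χ.differentiable_LFunction hχ).differentiableOn hdiff
    (fun w hw ↦ ?_) hs
  rw [χ.LFunction_eq_LSeries hw, LSeries_eq_tsum_abelTerm hχ hw]

theorem exists_norm_LFunction_le {δ : ℝ} (h0 : 0 < δ) (h1 : δ ≤ 1) :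
    ∃ C > 0, ∀ (q : ℕ) [NeZero q] (χ : DirichletCharacter ℂ q), χ ≠ 1 → ∀ s : ℂ,
      1 - δ / 2 ≤ s.re → ‖χ.LFunction s‖ ≤ C * ‖s‖ * (q : ℝ) ^ δ := by
  have hs := summable_natCast_add_one_rpow (half_pos h0)
  refine ⟨∑' n : ℕ, (n + 1 : ℝ) ^ (-1 - δ / 2),
    hs.tsum_pos (fun n ↦ by positivity) 0 (by simp), fun q _ χ hχ s hre ↦ ?_⟩
  rw [LFunction_eq_tsum_abelTerm hχ (by linarith)]
  refine (tsum_of_norm_bounded (hs.mul_left (‖s‖ * (q : ℝ) ^ δ)).hasSum fun n ↦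
    norm_abelTerm_le hχ n h0.le h1 (half_pos h0).le (by linarith)).trans_eq ?_
  rw [tsum_mul_left]
  ring

end LFunctionBound

section Zeta

open Complex Filter Finset Topology

theorem riemannZeta_eq_div {s : ℂ} (hs : s ≠ 1) : riemannZeta s = riemannZeta₁ s / (s - 1) := by
  rw [riemannZeta_eq_inv_sub_mul hs, div_eq_inv_mul]

theorem riemannZeta₁_ne_zero_of_one_le_re {s : ℂ} (hs : 1 ≤ s.re) : riemannZeta₁ s ≠ 0 := by
  rcases eq_or_ne s 1 with rfl | hs1
  · simp
  · have hζ := riemannZeta_ne_zero_of_one_le_re hs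
    rw [riemannZeta_eq_div hs1] at hζ
    exact (div_ne_zero_iff.mp hζ).1

/-- The `n`-th term of the Euler–Maclaurin series `∑ ((s - 1) n⁻ˢ + (n + 1)¹⁻ˢ - n¹⁻ˢ)`, indexed
from `n + 1`, which represents `(s - 1) ζ(s) - 1` for `0 < re s`. -/
noncomputable def zetaTerm (n : ℕ) (s : ℂ) : ℂ :=
  ((n + 2 : ℕ) : ℂ) ^ (1 - s) - ((n + 1 : ℕ) : ℂ) ^ (1 - s) + (s - 1) * ((n + 1 : ℕ) : ℂ) ^ (-s)

theorem differentiable_zetaTerm (n : ℕ) : Differentiable ℂ (zetaTerm n) := fun s ↦ by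
  have hcpow (m : ℕ) [NeZero m] {f : ℂ → ℂ} (hf : Differentiable ℂ f) :
      DifferentiableAt ℂ (fun s : ℂ ↦ (m : ℂ) ^ f s) s :=
    (hf s).const_cpow (.inl (NeZero.ne _))
  exact ((hcpow (n + 2) (by fun_prop)).sub (hcpow (n + 1) (by fun_prop))).add
    ((differentiableAt_id.sub_const 1).mul (hcpow (n + 1) differentiable_id.neg))

theorem norm_zetaTerm_le (n : ℕ) {s : ℂ} (hs : 0 < s.re) :
    ‖zetaTerm n s‖ ≤ ‖s - 1‖ * ‖s‖ * (n + 1 : ℝ) ^ (-1 - s.re) := by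
  let a : ℝ := n + 1
  have ha : 0 < a := by positivity
  have hmvt := norm_image_sub_le_of_norm_deriv_le_segment'
    (f := fun x : ℝ ↦ (x : ℂ) ^ (1 - s) + (s - 1) * (a : ℂ) ^ (-s) * x)
    (f' := fun x : ℝ ↦ (1 - s) * ((x : ℂ) ^ (-s) - (a : ℂ) ^ (-s)))
    (a := a) (b := a + 1) (C := ‖s - 1‖ * ‖s‖ * a ^ (-1 - s.re)) ?_ ?_ (a + 1)
    ⟨by linarith, le_rfl⟩
  · calc ‖zetaTerm n s‖ = _ := by
          congr 1
          simp only [zetaTerm, a]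
          push_cast
          ring_nf
      _ ≤ _ := hmvt
      _ = ‖s - 1‖ * ‖s‖ * (n + 1 : ℝ) ^ (-1 - s.re) := by ring
  · intro x hx
    have hslit : (x : ℂ) ∈ slitPlane := ofReal_mem_slitPlane.mpr (ha.trans_le hx.1)
    have hcpow := ((hasDerivAt_id' (x : ℂ)).cpow_const (c := 1 - s) hslit).fun_add
      ((hasDerivAt_id' (x : ℂ)).const_mul ((s - 1) * (a : ℂ) ^ (-s)))
    convert hcpow.comp_ofReal.hasDerivWithinAt using 1
    rw [sub_sub_cancel_left]
    ring
  · intro x hx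
    have hdiff := norm_ofReal_cpow_sub_le (w := -s) (by rw [neg_re]; linarith) ha hx.1
    rw [norm_neg, neg_re, neg_sub_comm] at hdiff
    rw [norm_mul, norm_sub_rev 1 s, mul_assoc]
    gcongr
    exact hdiff.trans (mul_le_of_le_one_right (by positivity) (by linarith [hx.2]))

theorem sum_range_zetaTerm (s : ℂ) (N : ℕ) :
    ∑ n ∈ range N, zetaTerm n s =
      ((N + 1 : ℕ) : ℂ) ^ (1 - s) + (s - 1) * ∑ n ∈ range N, ((n + 1 : ℕ) : ℂ) ^ (-s) - 1 := by
  simp only [zetaTerm, sum_add_distrib, mul_sum,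
    sum_range_sub (fun n : ℕ ↦ ((n + 1 : ℕ) : ℂ) ^ (1 - s)), zero_add, Nat.cast_one, one_cpow]
  ring

theorem riemannZeta₁_eq_one_add_tsum_of_one_lt_re {s : ℂ} (hs : 1 < s.re) :
    riemannZeta₁ s = 1 + ∑' n, zetaTerm n s := by
  have hs1 : s ≠ 1 := by rintro rfl; simp at hs
  have hζ : HasSum (fun n : ℕ ↦ ((n + 1 : ℕ) : ℂ) ^ (-s)) (riemannZeta s) := by
    have hsum := (summable_nat_add_iff 1).mpr (summable_one_div_nat_cpow.mpr hs)
    simpa [zeta_eq_tsum_one_div_nat_add_one_cpow hs, cpow_neg] using hsum.hasSum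
  have hE : Summable (zetaTerm · s) :=
    .of_norm_bounded ((summable_natCast_add_one_rpow (zero_lt_one.trans hs)).mul_left _)
      fun n ↦ norm_zetaTerm_le n (zero_lt_one.trans hs)
  have hpow : Tendsto (fun N : ℕ ↦ ((N + 1 : ℕ) : ℂ) ^ (1 - s)) atTop (𝓝 0) := by
    rw [tendsto_zero_iff_norm_tendsto_zero]
    refine ((tendsto_rpow_neg_atTop (sub_pos.mpr hs)).comp
      (tendsto_natCast_atTop_atTop.comp (tendsto_add_atTop_nat 1))).congr fun N ↦ ?_
    rw [norm_natCast_cpow_of_pos N.succ_pos]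
    simp
  have hlim := (hpow.add (hζ.tendsto_sum_nat.const_mul (s - 1))).sub_const 1
  simp only [← sum_range_zetaTerm] at hlim
  rw [tendsto_nhds_unique hE.hasSum.tendsto_sum_nat hlim, riemannZeta_eq_div hs1,
    mul_div_cancel₀ _ (sub_ne_zero.mpr hs1)]
  ring

theorem riemannZeta₁_eq_one_add_tsum {s : ℂ} (hs : 0 < s.re) :
    riemannZeta₁ s = 1 + ∑' n, zetaTerm n s := by
  have hdiff : DifferentiableOn ℂ (fun s ↦ ∑' n, zetaTerm n s) {s | 0 < s.re} :=
    differentiableOn_tsum_of_norm_le_rpow (B := fun s ↦ ‖s - 1‖ * ‖s‖) differentiable_zetaTerm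
      (by fun_prop) fun n s hs ↦ norm_zetaTerm_le n hs
  exact eqOn_re_pos_of_eqOn_one_lt_re differentiable_riemannZeta₁.differentiableOn
    (hdiff.const_add 1) (fun w hw ↦ riemannZeta₁_eq_one_add_tsum_of_one_lt_re hw) hs

theorem exists_norm_riemannZeta₁_le {σ : ℝ} (hσ : 0 < σ) :
    ∃ C > 0, ∀ s : ℂ, σ ≤ s.re → ‖riemannZeta₁ s‖ ≤ 1 + C * (‖s - 1‖ * ‖s‖) := by
  have hsum := summable_natCast_add_one_rpow hσ
  refine ⟨∑' n : ℕ, (n + 1 : ℝ) ^ (-1 - σ), hsum.tsum_pos (fun n ↦ by positivity) 0 (by simp),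
    fun s hs ↦ ?_⟩
  have hle := tsum_of_norm_bounded (hsum.mul_left (‖s - 1‖ * ‖s‖)).hasSum fun n ↦
    (norm_zetaTerm_le n (hσ.trans_le hs)).trans (by
      gcongr
      linarith [n.cast_nonneg (α := ℝ)])
  rw [tsum_mul_left, mul_comm] at hle
  rw [riemannZeta₁_eq_one_add_tsum (hσ.trans_le hs)]
  exact (norm_add_le _ _).trans (by rw [norm_one]; gcongr)

theorem exists_norm_riemannZeta_le_div (σ₀ : ℝ) :
    ∃ C > 0, ∀ σ : ℝ, 1 < σ → σ ≤ σ₀ → ‖riemannZeta σ‖ ≤ C / (σ - 1) := by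
  obtain ⟨C, hC, hbound⟩ := exists_norm_riemannZeta₁_le one_pos
  refine ⟨1 + C * (|σ₀| * |σ₀|), by positivity, fun σ h1 h2 ↦ ?_⟩
  have hpos : 0 < σ - 1 := sub_pos.mpr h1
  have hnorm : ‖(σ : ℂ) - 1‖ = σ - 1 := by
    rw [← ofReal_one, ← ofReal_sub, Complex.norm_of_nonneg hpos.le]
  rw [riemannZeta_eq_div (by exact_mod_cast h1.ne'), norm_div, hnorm]
  gcongr
  refine (hbound σ (by simpa using h1.le)).trans ?_
  rw [hnorm, Complex.norm_of_nonneg (by linarith)]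
  gcongr <;> linarith [le_abs_self σ₀]

theorem logDeriv_riemannZeta {s : ℂ} (hs : s ≠ 1) (hζ : riemannZeta₁ s ≠ 0) :
    logDeriv riemannZeta s = logDeriv riemannZeta₁ s - 1 / (s - 1) := by
  have heq : riemannZeta =ᶠ[𝓝 s] fun z ↦ riemannZeta₁ z / (z - 1) := by
    filter_upwards [isOpen_ne.mem_nhds hs] with z hz using riemannZeta_eq_div hz
  rw [logDeriv_apply, heq.deriv_eq, heq.self_of_nhds, ← logDeriv_apply,
    logDeriv_div (g := (· - 1)) s hζ (sub_ne_zero.mpr hs)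
      differentiable_riemannZeta₁.differentiableAt (by fun_prop)]
  simp [logDeriv_apply]

theorem exists_neg_re_logDeriv_riemannZeta_le (σ₀ : ℝ) :
    ∃ C > 0, ∀ σ : ℝ, 1 < σ → σ ≤ σ₀ → (-logDeriv riemannZeta σ).re ≤ 1 / (σ - 1) + C := by
  have hcont : ContinuousOn (fun σ : ℝ ↦ logDeriv riemannZeta₁ σ) (Set.Icc 1 σ₀) := by
    have hζ := differentiable_riemannZeta₁
    have hderiv : Continuous (deriv riemannZeta₁) :=
      (hζ.contDiff (n := 1)).continuous_deriv le_rfl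
    exact (hderiv.comp continuous_ofReal).continuousOn.div
      (hζ.continuous.comp continuous_ofReal).continuousOn
      fun σ hσ ↦ riemannZeta₁_ne_zero_of_one_le_re (by simpa using hσ.1)
  obtain ⟨C, hC⟩ := isCompact_Icc.exists_bound_of_continuousOn hcont
  refine ⟨|C| + 1, by positivity, fun σ h1 h2 ↦ ?_⟩
  have hbound := (abs_le.mp ((abs_re_le_norm _).trans (hC σ ⟨h1.le, h2⟩))).1
  have hpole : (1 / ((σ : ℂ) - 1)).re = 1 / (σ - 1) := by
    rw [← ofReal_one, ← ofReal_sub, ← ofReal_div, ofReal_re]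
  rw [logDeriv_riemannZeta (by exact_mod_cast h1.ne')
    (riemannZeta₁_ne_zero_of_one_le_re (by simpa using h1.le)), neg_re, sub_re, hpole]
  linarith [le_abs_self C]

end Zeta

section ThreeFourOne

open ArithmeticFunction Complex

theorem norm_LSeries_le_re {f : ℕ → ℂ} {g : ℕ → ℝ} (hfg : ∀ n, ‖f n‖ ≤ g n) {s A : ℂ}
    (hg : LSeriesHasSum (g ·) (s.re : ℂ) A) : ‖LSeries f s‖ ≤ A.re := by
  refine tsum_of_norm_bounded (Complex.hasSum_re hg) fun n ↦ ?_
  rcases eq_or_ne n 0 with rfl | hn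
  · simp
  · rw [LSeries.norm_term_eq, if_neg hn, LSeries.term_of_ne_zero hn, ← ofReal_natCast,
      ← ofReal_cpow n.cast_nonneg, ← ofReal_div, ofReal_re]
    gcongr
    exact hfg n

theorem one_le_norm_LSeries_mul_norm_riemannZeta {q : ℕ} (χ : DirichletCharacter ℂ q) {s : ℂ}
    (hs : 1 < s.re) : 1 ≤ ‖LSeries (χ ·) s‖ * ‖riemannZeta s.re‖ := by
  have hμ : ∀ n, ‖((fun n : ℕ ↦ χ n) * fun n ↦ (moebius n : ℂ)) n‖ ≤ 1 := fun n ↦ by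
    rw [Pi.mul_apply, norm_mul, Complex.norm_intCast]
    exact mul_le_one₀ (χ.norm_le_one n) (abs_nonneg _) (by exact_mod_cast abs_moebius_le_one)
  have hζ := norm_LSeries_le_re hμ (A := riemannZeta s.re)
    (by simpa [Pi.one_def] using LSeriesHasSum_one (s := s.re) (by simpa using hs))
  calc (1 : ℝ) = ‖LSeries (χ ·) s‖ * ‖LSeries ((fun n : ℕ ↦ χ n) * fun n ↦ (moebius n : ℂ)) s‖ := by
        rw [← norm_mul, DirichletCharacter.LSeries.mul_mu_eq_one χ hs, norm_one]
    _ ≤ ‖LSeries (χ ·) s‖ * ‖riemannZeta s.re‖ := by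
        gcongr
        exact hζ.trans (re_le_norm _)

theorem exists_mul_le_norm_LFunction (σ₀ : ℝ) :
    ∃ c > 0, ∀ (q : ℕ) [NeZero q] (χ : DirichletCharacter ℂ q) (s : ℂ),
      1 < s.re → s.re ≤ σ₀ → c * (s.re - 1) ≤ ‖χ.LFunction s‖ := by
  obtain ⟨C, hC, hζ⟩ := exists_norm_riemannZeta_le_div σ₀
  refine ⟨1 / C, by positivity, fun q _ χ s h1 h2 ↦ ?_⟩
  have hpos : 0 < s.re - 1 := sub_pos.mpr h1
  have hinv : 1 ≤ ‖LSeries (χ ·) s‖ * (C / (s.re - 1)) :=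
    (one_le_norm_LSeries_mul_norm_riemannZeta χ h1).trans (by gcongr; exact hζ _ h1 h2)
  rw [← mul_div_assoc, le_div_iff₀ hpos, one_mul] at hinv
  rw [χ.LFunction_eq_LSeries h1, div_mul_eq_mul_div, one_mul, div_le_iff₀ hC]
  exact hinv

theorem LSeriesHasSum_vonMangoldt {s : ℂ} (hs : 1 < s.re) :
    LSeriesHasSum (fun n ↦ (Λ n : ℂ)) s (-logDeriv riemannZeta s) := by
  rw [logDeriv_apply, ← neg_div, ← LSeries_vonMangoldt_eq_deriv_riemannZeta_div hs]
  exact (LSeriesSummable_vonMangoldt hs).LSeriesHasSum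

theorem LSeriesHasSum_twist_vonMangoldt {q : ℕ} [NeZero q] (χ : DirichletCharacter ℂ q) {s : ℂ}
    (hs : 1 < s.re) :
    LSeriesHasSum (fun n ↦ χ n * (Λ n : ℂ)) s (-logDeriv χ.LFunction s) := by
  rw [logDeriv_apply, ← neg_div, χ.LFunction_eq_LSeries hs,
    χ.deriv_LFunction_eq_deriv_LSeries hs, ← χ.LSeries_twist_vonMangoldt_eq hs]
  exact (χ.LSeriesSummable_twist_vonMangoldt hs).LSeriesHasSum

theorem re_LSeries_term_ofReal {f : ℕ → ℂ} {n : ℕ} {x : ℝ} (hf : f n = x) (hn : n ≠ 0) (σ t : ℝ) :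
    (LSeries.term f (σ + t * I) n).re = x * (n : ℝ) ^ (-σ) * Real.cos (t * Real.log n) := by
  have hn' : (n : ℂ) ≠ 0 := Nat.cast_ne_zero.mpr hn
  have hcpow : (n : ℂ) ^ (-(t * I)) = exp ((-(t * Real.log n) : ℝ) * I) := by
    rw [cpow_def_of_ne_zero hn', ← natCast_log]
    push_cast
    ring_nf
  rw [LSeries.term_of_ne_zero hn, hf, div_eq_mul_inv, ← cpow_neg, neg_add, cpow_add _ _ hn', hcpow,
    ← ofReal_neg, ← ofReal_natCast, ← ofReal_cpow n.cast_nonneg, ← mul_assoc, ← ofReal_mul,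
    re_ofReal_mul, exp_ofReal_mul_I_re, Real.cos_neg]

theorem three_add_four_mul_cos_add_cos_nonneg {e : ℝ} (he : |e| ≤ 1) (θ : ℝ) :
    0 ≤ 3 + 4 * (e * Real.cos θ) + Real.cos (2 * θ) := by
  have hle : |e * Real.cos θ| ≤ |Real.cos θ| := by
    rw [abs_mul]
    exact mul_le_of_le_one_left (abs_nonneg _) he
  rw [Real.cos_two_mul, ← sq_abs (Real.cos θ)]
  nlinarith [neg_abs_le (e * Real.cos θ), sq_nonneg (|Real.cos θ| - 1)]

theorem exists_ofReal_eq_of_isQuadratic {q : ℕ} {χ : DirichletCharacter ℂ q}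
    (hχ : χ.IsQuadratic) (u : ZMod q) : ∃ e : ℝ, |e| ≤ 1 ∧ χ u = e := by
  rcases hχ u with h | h | h
  exacts [⟨0, by simp [h]⟩, ⟨1, by simp [h]⟩, ⟨-1, by simp [h]⟩]

/- As `χ` is real, the pole of `ζ` at `1` takes the place of `L(s, χ²)` at height `2t`. -/
theorem three_four_one_logDeriv_nonneg {q : ℕ} [NeZero q] {χ : DirichletCharacter ℂ q}
    (hχ : χ.IsQuadratic) {σ : ℝ} (hσ : 1 < σ) (t : ℝ) :
    0 ≤ 3 * (-logDeriv riemannZeta σ).re + 4 * (-logDeriv χ.LFunction (σ + t * I)).re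
      + (-logDeriv riemannZeta (σ + (2 * t : ℝ) * I)).re := by
  have hre (t : ℝ) : 1 < (σ + t * I : ℂ).re := by simpa using hσ
  have h₀ := Complex.hasSum_re (LSeriesHasSum_vonMangoldt (hre 0))
  have h₁ := Complex.hasSum_re (LSeriesHasSum_twist_vonMangoldt χ (hre t))
  have h₂ := Complex.hasSum_re (LSeriesHasSum_vonMangoldt (hre (2 * t)))
  rw [ofReal_zero, zero_mul, add_zero] at h₀
  refine (((h₀.mul_left 3).add (h₁.mul_left 4)).add h₂).nonneg fun n ↦ ?_
  rcases eq_or_ne n 0 with rfl | hn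
  · simp
  obtain ⟨e, he, hχe⟩ := exists_ofReal_eq_of_isQuadratic hχ (n : ZMod q)
  have hΛ₀ := re_LSeries_term_ofReal (f := fun n ↦ (Λ n : ℂ)) rfl hn σ 0
  rw [ofReal_zero, zero_mul, add_zero, zero_mul, Real.cos_zero] at hΛ₀
  rw [hΛ₀, re_LSeries_term_ofReal (x := e * Λ n) (by rw [hχe, ofReal_mul]) hn,
    re_LSeries_term_ofReal (x := Λ n) rfl hn, mul_assoc 2 t]
  have hpos : 0 ≤ Λ n * (n : ℝ) ^ (-σ) := mul_nonneg vonMangoldt_nonneg (by positivity)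
  have := mul_nonneg hpos (three_add_four_mul_cos_add_cos_nonneg he (t * Real.log n))
  linarith

end ThreeFourOne

section JacobiCharacter

/-- The Jacobi symbol `(D / n)` for odd `n`, extended by `0` to even `n`. This makes it periodic
in `n` of period `4 |D|`; it also removes the convention `jacobiSym D 0 = 1`. -/
def oddJacobiSym (D : ℤ) (n : ℕ) : ℤ := if Odd n then jacobiSym D n else 0

theorem oddJacobiSym_of_odd (D : ℤ) {n : ℕ} (hn : Odd n) : oddJacobiSym D n = jacobiSym D n :=
  if_pos hn

theorem oddJacobiSym_one_right (D : ℤ) : oddJacobiSym D 1 = 1 := by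
  rw [oddJacobiSym_of_odd D odd_one, jacobiSym.one_right]

theorem oddJacobiSym_mul_right (D : ℤ) (m n : ℕ) :
    oddJacobiSym D (m * n) = oddJacobiSym D m * oddJacobiSym D n := by
  simp only [oddJacobiSym, Nat.odd_mul, ite_and, ite_mul, mul_ite, zero_mul, mul_zero]
  by_cases hm : Odd m <;> by_cases hn : Odd n <;> simp only [hm, hn, if_true, if_false]
  exact jacobiSym.mul_right' D hm.pos.ne' hn.pos.ne'

theorem oddJacobiSym_mul_left (D E : ℤ) (n : ℕ) :
    oddJacobiSym (D * E) n = oddJacobiSym D n * oddJacobiSym E n := by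
  by_cases hn : Odd n <;> simp [oddJacobiSym, hn, jacobiSym.mul_left]

theorem oddJacobiSym_trichotomy (D : ℤ) (n : ℕ) :
    oddJacobiSym D n = 0 ∨ oddJacobiSym D n = 1 ∨ oddJacobiSym D n = -1 := by
  by_cases hn : Odd n
  · simpa [oddJacobiSym, hn] using jacobiSym.trichotomy D n
  · simp [oddJacobiSym, hn]

theorem oddJacobiSym_mod_right (D : ℤ) (n : ℕ) :
    oddJacobiSym D (n % (4 * D.natAbs)) = oddJacobiSym D n := by
  have hodd : Odd (n % (4 * D.natAbs)) ↔ Odd n := by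
    rw [Nat.odd_iff, Nat.odd_iff, Nat.mod_mod_of_dvd n (Dvd.dvd.mul_right (by norm_num) _)]
  by_cases hn : Odd n
  · simp only [oddJacobiSym, hodd, if_pos hn, ← jacobiSym.mod_right D hn]
  · simp only [oddJacobiSym, hodd, if_neg hn]

theorem oddJacobiSym_of_modEq_one {D : ℤ} {n : ℕ} (hn : n ≡ 1 [MOD 4 * D.natAbs]) :
    oddJacobiSym D n = 1 := by
  rw [← oddJacobiSym_mod_right, hn, oddJacobiSym_mod_right, oddJacobiSym_one_right]

theorem oddJacobiSym_ne_zero_iff {D : ℤ} {n : ℕ} :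
    oddJacobiSym D n ≠ 0 ↔ n.Coprime (4 * D.natAbs) := by
  have hcop : n.Coprime (4 * D.natAbs) ↔ Odd n ∧ n.Coprime D.natAbs := by
    rw [Nat.coprime_mul_iff_right, show 4 = 2 ^ 2 by norm_num,
      Nat.coprime_pow_right_iff two_pos, Nat.coprime_two_right]
  rw [hcop]
  by_cases hn : Odd n
  · have : NeZero n := ⟨hn.pos.ne'⟩
    rw [oddJacobiSym_of_odd D hn, ne_eq, jacobiSym.eq_zero_iff_not_coprime, not_not, Int.gcd_comm]
    exact (and_iff_right hn).symm
  · simp [oddJacobiSym, hn]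

theorem isUnit_of_coprime_val {N : ℕ} {u : ZMod N} (hu : u.val.Coprime N) : IsUnit u := by
  cases N with
  | zero => exact Int.isUnit_iff_natAbs_eq.mpr (Nat.coprime_zero_right _ |>.mp hu)
  | succ N => simpa using (ZMod.isUnit_iff_coprime u.val (N + 1)).mpr hu

/-- The real Dirichlet character `n ↦ (D / n)` modulo `4 |D|`. -/
noncomputable def jacobiChar (D : ℤ) : DirichletCharacter ℂ (4 * D.natAbs) where
  toFun u := oddJacobiSym D u.val
  map_one' := by
    rw [ZMod.val_one_eq_one_mod, oddJacobiSym_mod_right, oddJacobiSym_one_right, Int.cast_one]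
  map_mul' u v := by
    rw [ZMod.val_mul, oddJacobiSym_mod_right, oddJacobiSym_mul_right, Int.cast_mul]
  map_nonunit' u hu := by
    by_contra h
    exact hu (isUnit_of_coprime_val (oddJacobiSym_ne_zero_iff.mp (by exact_mod_cast h)))

theorem jacobiChar_natCast (D : ℤ) (n : ℕ) : jacobiChar D n = oddJacobiSym D n := by
  change (oddJacobiSym D (n : ZMod (4 * D.natAbs)).val : ℂ) = _
  rw [ZMod.val_natCast, oddJacobiSym_mod_right]

theorem jacobiChar_mul_natCast (D E : ℤ) (n : ℕ) :
    jacobiChar (D * E) n = jacobiChar D n * jacobiChar E n := by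
  simp only [jacobiChar_natCast, oddJacobiSym_mul_left, Int.cast_mul]

theorem isQuadratic_jacobiChar (D : ℤ) : (jacobiChar D).IsQuadratic := fun u ↦ by
  change (oddJacobiSym D u.val : ℂ) = 0 ∨ (oddJacobiSym D u.val : ℂ) = 1 ∨
    (oddJacobiSym D u.val : ℂ) = -1
  exact_mod_cast oddJacobiSym_trichotomy D u.val

theorem jacobiChar_ne_one_of_oddJacobiSym {D : ℤ} {n : ℕ} (hn : oddJacobiSym D n = -1) :
    jacobiChar D ≠ 1 := by
  intro h1
  have hval := jacobiChar_natCast D n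
  rw [h1, hn] at hval
  by_cases hu : IsUnit (n : ZMod (4 * D.natAbs))
  · norm_num [MulChar.one_apply hu] at hval
  · norm_num [MulChar.map_nonunit _ hu] at hval

theorem exists_natCast_legendreSym_eq_neg_one {p : ℕ} [Fact p.Prime] (hp : p ≠ 2) :
    ∃ r : ℕ, legendreSym p r = -1 := by
  obtain ⟨a, ha⟩ := FiniteField.exists_nonsquare (F := ZMod p) (by rwa [ZMod.ringChar_zmod_n])
  exact ⟨a.val, by rwa [legendreSym.eq_neg_one_iff, Int.cast_natCast, ZMod.natCast_zmod_val]⟩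

theorem exists_prime_gt_oddJacobiSym_mul_eq_neg_one {p : ℕ} (hp : p.Prime) (hodd : Odd p) {m : ℤ}
    (hm : m ≠ 0) (hpm : ¬ (p : ℤ) ∣ m) (B : ℕ) :
    ∃ n : ℕ, B < n ∧ n.Prime ∧ oddJacobiSym (p * m) n = -1 := by
  have : Fact p.Prime := ⟨hp⟩
  obtain ⟨r, hr⟩ := exists_natCast_legendreSym_eq_neg_one (p := p)
    (by rintro rfl; exact absurd hodd (by decide))
  have hcop : p.Coprime (4 * m.natAbs) :=
    Nat.Coprime.mul_right ((Nat.coprime_two_right.mpr hodd).pow_right 2)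
      (hp.coprime_iff_not_dvd.mpr fun h ↦ hpm (Int.natCast_dvd.mpr h))
  obtain ⟨k, hkr, hk1⟩ := Nat.chineseRemainder hcop r 1
  have hrp : r.Coprime p := by
    rw [Nat.coprime_comm, hp.coprime_iff_not_dvd, ← ZMod.natCast_eq_zero_iff, ← Int.cast_natCast,
      ← legendreSym.eq_zero_iff, hr]
    norm_num
  have hk : k.Coprime (p * (4 * m.natAbs)) :=
    .mul_right (hkr.gcd_eq.trans hrp) (hk1.gcd_eq.trans (Nat.gcd_one_left _))
  obtain ⟨n, hn, hnp, hnk⟩ := Nat.forall_exists_prime_gt_and_modEq B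
    (mul_ne_zero hp.ne_zero (mul_ne_zero four_ne_zero (Int.natAbs_ne_zero.mpr hm))) hk
  have hn1 : n ≡ 1 [MOD 4 * m.natAbs] := (hnk.of_mul_left _).trans hk1
  have hnr : n ≡ r [MOD p] := (hnk.of_mul_right _).trans hkr
  have hn4 : n % 4 = 1 := hn1.of_mul_right _
  have hnodd : Odd n := Nat.odd_iff.mpr (by lia)
  refine ⟨n, hn, hnp, ?_⟩
  rw [oddJacobiSym_mul_left, oddJacobiSym_of_modEq_one hn1, mul_one, oddJacobiSym_of_odd _ hnodd,
    jacobiSym.quadratic_reciprocity_one_mod_four' hodd hn4, jacobiSym.mod_left,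
    show (n : ℤ) % p = r % p by exact_mod_cast hnr, ← jacobiSym.mod_left,
    ← jacobiSym.legendreSym.to_jacobiSym, hr]

theorem exists_prime_gt_oddJacobiSym_neg_one (B : ℕ) :
    ∃ n : ℕ, B < n ∧ n.Prime ∧ oddJacobiSym (-1) n = -1 := by
  obtain ⟨n, hn, hnp, hmod : n % 4 = 3⟩ := Nat.forall_exists_prime_gt_and_modEq B (q := 4) (a := 3)
    (by norm_num) (by norm_num)
  have hodd : Odd n := Nat.odd_iff.mpr (by lia)
  refine ⟨n, hn, hnp, ?_⟩
  rw [oddJacobiSym_of_odd _ hodd, jacobiSym.at_neg_one hodd, ZMod.χ₄_nat_three_mod_four hmod]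

theorem exists_prime_gt_oddJacobiSym_two {D : ℤ} (hD : D = 2 ∨ D = -2) (B : ℕ) :
    ∃ n : ℕ, B < n ∧ n.Prime ∧ oddJacobiSym D n = -1 := by
  obtain ⟨n, hn, hnp, hmod : n % 8 = 5⟩ := Nat.forall_exists_prime_gt_and_modEq B (q := 8) (a := 5)
    (by norm_num) (by norm_num)
  have hodd : Odd n := Nat.odd_iff.mpr (by lia)
  refine ⟨n, hn, hnp, ?_⟩
  rw [oddJacobiSym_of_odd _ hodd]
  rcases hD with rfl | rfl
  · rw [jacobiSym.at_two hodd, ZMod.χ₈_nat_eq_if_mod_eight, if_neg (by lia), if_neg (by lia)]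
  · rw [jacobiSym.at_neg_two hodd, ZMod.χ₈'_nat_eq_if_mod_eight, if_neg (by lia), if_neg (by lia)]

theorem dvd_two_of_squarefree_of_forall_odd_prime_not_dvd {D : ℤ} (hD : Squarefree D)
    (hodd : ∀ p : ℕ, p.Prime → Odd p → ¬ (p : ℤ) ∣ D) : D ∣ 2 := by
  have hsub : D.natAbs.primeFactors ⊆ {2} := fun p hp ↦ by
    have hpp := Nat.prime_of_mem_primeFactors hp
    by_contra hp2
    exact hodd p hpp (hpp.odd_of_ne_two (by simpa using hp2))
      (Int.natCast_dvd.mpr (Nat.dvd_of_mem_primeFactors hp))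
  rw [← Int.natAbs_dvd_natAbs,
    ← Nat.prod_primeFactors_of_squarefree (Int.squarefree_natAbs.mpr hD)]
  simpa using Finset.prod_dvd_prod_of_subset _ _ (fun p ↦ p) hsub

theorem exists_prime_gt_oddJacobiSym_eq_neg_one {D : ℤ} (hD : Squarefree D) (h1 : D ≠ 1) (B : ℕ) :
    ∃ n : ℕ, B < n ∧ n.Prime ∧ oddJacobiSym D n = -1 := by
  by_cases hp : ∃ p : ℕ, p.Prime ∧ Odd p ∧ (p : ℤ) ∣ D
  · obtain ⟨p, hp, hodd, m, rfl⟩ := hp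
    refine exists_prime_gt_oddJacobiSym_mul_eq_neg_one hp hodd (right_ne_zero_of_mul hD.ne_zero)
      (fun hpm ↦ ?_) B
    exact (Nat.prime_iff_prime_int.mp hp).not_isUnit (hD p (mul_dvd_mul_left _ hpm))
  · push Not at hp
    have hD2 := Int.natAbs_dvd_natAbs.mpr (dvd_two_of_squarefree_of_forall_odd_prime_not_dvd hD hp)
    have hcases : D = -1 ∨ D = 2 ∨ D = -2 := by
      have := (Nat.dvd_prime Nat.prime_two).mp hD2
      lia
    rcases hcases with rfl | h2
    exacts [exists_prime_gt_oddJacobiSym_neg_one B, exists_prime_gt_oddJacobiSym_two h2 B]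

theorem jacobiChar_ne_one {D : ℤ} (hD : Squarefree D) (h1 : D ≠ 1) : jacobiChar D ≠ 1 :=
  let ⟨_, _, _, hn⟩ := exists_prime_gt_oddJacobiSym_eq_neg_one hD h1 0
  jacobiChar_ne_one_of_oddJacobiSym hn

theorem oddJacobiSym_mul_self {g : ℤ} {n : ℕ} (hn : n.Coprime (4 * g.natAbs)) :
    oddJacobiSym g n * oddJacobiSym g n = 1 := by
  have h0 := oddJacobiSym_ne_zero_iff.mpr hn
  rcases oddJacobiSym_trichotomy g n with h | h | h
  exacts [absurd h h0, by rw [h, one_mul], by rw [h]; norm_num]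

theorem jacobiChar_mul_ne_one {D E : ℤ} (hD : Squarefree D) (hE : Squarefree E) (hDE : D ≠ E) :
    jacobiChar (D * E) ≠ 1 := by
  have hg : 0 < Int.gcd D E := Int.gcd_pos_of_ne_zero_left _ hD.ne_zero
  obtain ⟨d, e, hde, hd, he⟩ := Int.exists_gcd_one hg
  set g : ℤ := (Int.gcd D E : ℤ)
  have hg0 : g ≠ 0 := Int.natCast_ne_zero.mpr hg.ne'
  have hsq : Squarefree (d * e) := squarefree_mul_iff.mpr
    ⟨(Int.isCoprime_iff_gcd_eq_one.mpr hde).isRelPrime, hD.squarefree_of_dvd ⟨g, hd⟩,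
      hE.squarefree_of_dvd ⟨g, he⟩⟩
  have hne : d * e ≠ 1 := fun h ↦ hDE <| by
    rcases Int.eq_one_or_neg_one_of_mul_eq_one' h with ⟨hd1, he1⟩ | ⟨hd1, he1⟩ <;>
      rw [hd, he, hd1, he1]
  obtain ⟨n, hn, hnp, hj⟩ :=
    exists_prime_gt_oddJacobiSym_eq_neg_one hsq hne (4 * g.natAbs)
  have hcop : n.Coprime (4 * g.natAbs) :=
    Nat.coprime_of_lt_prime (by simpa using hg0) hn hnp
  refine jacobiChar_ne_one_of_oddJacobiSym (n := n) ?_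
  rw [hd, he, show d * g * (e * g) = d * e * (g * g) by ring, oddJacobiSym_mul_left, hj,
    oddJacobiSym_mul_left, oddJacobiSym_mul_self hcop, mul_one]

end JacobiCharacter

section Estermann

open Complex Metric
open scoped Nat

/-- The coefficient of `(c - z) ^ n` in the Taylor expansion of `f` at `c`. -/
noncomputable def alternatingTaylorCoeff (f : ℂ → ℂ) (c : ℂ) (n : ℕ) : ℂ :=
  (-1) ^ n * iteratedDeriv n f c / n !

theorem hasSum_alternatingTaylorCoeff {f : ℂ → ℂ} (hf : Differentiable ℂ f) (c z : ℂ) :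
    HasSum (fun n ↦ alternatingTaylorCoeff f c n * (c - z) ^ n) (f z) := by
  refine (hasSum_taylorSeries_of_entire hf c z).congr_fun fun n ↦ ?_
  rw [alternatingTaylorCoeff, ← neg_sub z c, neg_pow (z - c), smul_eq_mul, smul_eq_mul]
  have hsign : (-1 : ℂ) ^ n * (-1) ^ n = 1 := by rw [← pow_add, Even.neg_one_pow ⟨n, rfl⟩]
  linear_combination ((n ! : ℂ)⁻¹ * (z - c) ^ n * iteratedDeriv n f c) * hsign

theorem norm_alternatingTaylorCoeff_le {f : ℂ → ℂ} {c : ℂ} {R B : ℝ} (hf : Differentiable ℂ f)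
    (hR : 0 < R) (hB : ∀ z ∈ sphere c R, ‖f z‖ ≤ B) (n : ℕ) :
    ‖alternatingTaylorCoeff f c n‖ ≤ B / R ^ n := by
  have hCauchy := norm_iteratedDeriv_le_of_forall_mem_sphere_norm_le n hR hf.diffContOnCl hB
  rw [alternatingTaylorCoeff, norm_div, norm_mul, norm_pow, norm_neg, norm_one, one_pow, one_mul,
    norm_natCast, div_le_iff₀' (by positivity), ← mul_div_assoc]
  exact hCauchy

theorem alternatingTaylorCoeff_inv_sub {c ρ : ℂ} (n : ℕ) :
    alternatingTaylorCoeff (fun z ↦ (z - ρ)⁻¹) c n = (c - ρ)⁻¹ ^ (n + 1) := by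
  have hderiv : iteratedDeriv n (fun z : ℂ ↦ (z - ρ)⁻¹) c = _ :=
    congrFun (iteratedDeriv_comp_sub_const n Inv.inv ρ) c
  rw [alternatingTaylorCoeff, hderiv, iteratedDeriv_eq_iterate, iter_deriv_inv, ← mul_assoc,
    ← mul_assoc, ← pow_add, Even.neg_one_pow ⟨n, rfl⟩, one_mul,
    mul_div_cancel_left₀ _ (Nat.cast_ne_zero.mpr n.factorial_ne_zero), inv_pow, ← zpow_natCast,
    ← zpow_neg]
  congr 1
  push_cast
  ring

theorem alternatingTaylorCoeff_div_sub {G : ℂ → ℂ} (hG : Differentiable ℂ G) {c ρ : ℂ}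
    (hc : c ≠ ρ) (n : ℕ) :
    alternatingTaylorCoeff (fun s ↦ G s / (s - ρ)) c n =
      alternatingTaylorCoeff (dslope G ρ) c n + G ρ * (c - ρ)⁻¹ ^ (n + 1) := by
  have hsplit : (fun s ↦ G s / (s - ρ)) =ᶠ[nhds c] fun s ↦ dslope G ρ s + G ρ * (s - ρ)⁻¹ := by
    filter_upwards [isOpen_ne.mem_nhds hc] with z hz
    rw [dslope_of_ne _ hz, slope_def_field]
    ring
  have hinv : ContDiffAt ℂ n (fun s : ℂ ↦ (s - ρ)⁻¹) c :=
    (contDiffAt_id.sub contDiffAt_const).inv (sub_ne_zero.mpr hc)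
  rw [← alternatingTaylorCoeff_inv_sub, alternatingTaylorCoeff, hsplit.iteratedDeriv_eq,
    iteratedDeriv_fun_add (blaschkeQuotient.differentiable_dslope hG).contDiff.contDiffAt
      (contDiffAt_const.mul hinv), iteratedDeriv_const_mul _ hinv]
  simp only [alternatingTaylorCoeff]
  ring

theorem sub_sub_le_of_hasSum_mul_pow {h : ℕ → ℝ} {r θ B c lam S : ℝ} (hr : 1 < r) (hθ : 0 ≤ θ)
    (hrθ : θ * r < 1) (hB : ∀ m, |h m| ≤ B * θ ^ m) (hlam : ∀ m, 0 ≤ h m + lam)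
    (h0 : c ≤ h 0 + lam) (hS : HasSum (fun m ↦ h m * r ^ m) S) {M : ℕ} (hM : 0 < M) :
    c - lam * ((r ^ M - 1) / (r - 1)) - B * (θ * r) ^ M / (1 - θ * r) ≤ S := by
  have hhead : c - lam * ((r ^ M - 1) / (r - 1)) ≤ ∑ m ∈ Finset.range M, h m * r ^ m := by
    rw [← geom_sum_eq hr.ne', Finset.mul_sum, sub_le_iff_le_add, ← Finset.sum_add_distrib]
    have hfirst : c ≤ h 0 * r ^ 0 + lam * r ^ 0 := by simpa using h0
    refine hfirst.trans (Finset.single_le_sum (f := fun m ↦ h m * r ^ m + lam * r ^ m)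
      (fun m _ ↦ ?_) (Finset.mem_range.mpr hM))
    rw [← add_mul]
    exact mul_nonneg (hlam m) (by positivity)
  have hgeom : HasSum (fun m : ℕ ↦ B * (θ * r) ^ M * (θ * r) ^ m)
      (B * (θ * r) ^ M * (1 - θ * r)⁻¹) :=
    (hasSum_geometric_of_lt_one (by positivity) hrθ).mul_left _
  have htail := tsum_of_norm_bounded (f := fun m ↦ h (m + M) * r ^ (m + M)) hgeom fun m ↦ by
    calc ‖h (m + M) * r ^ (m + M)‖ = |h (m + M)| * r ^ (m + M) := by
          rw [norm_mul, Real.norm_eq_abs, Real.norm_of_nonneg (by positivity)]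
      _ ≤ B * θ ^ (m + M) * r ^ (m + M) := by gcongr; exact hB _
      _ = B * (θ * r) ^ M * (θ * r) ^ m := by ring
  rw [← div_eq_mul_inv] at htail
  rw [← hS.tsum_eq, ← hS.summable.sum_add_tsum_nat_add M]
  linarith [neg_le_of_abs_le htail]

theorem norm_dslope_le_of_mem_sphere {G : ℂ → ℂ} {c ρ z : ℂ} {K R : ℝ}
    (hK : ∀ w, ‖w - c‖ ≤ R → ‖G w‖ ≤ K) (hρ : ‖ρ - c‖ < R) (hz : z ∈ sphere c R) :
    ‖dslope G ρ z‖ ≤ 2 * K / (R - ‖ρ - c‖) := by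
  have hzc : ‖z - c‖ = R := mem_sphere_iff_norm.mp hz
  have hne : z ≠ ρ := by
    rintro rfl
    exact hρ.ne hzc
  have hdist : R - ‖ρ - c‖ ≤ ‖z - ρ‖ := by
    simpa [hzc] using norm_sub_norm_le (z - c) (ρ - c)
  have hnum := norm_sub_le_of_le (hK z hzc.le) (hK ρ hρ.le)
  rw [dslope_of_ne _ hne, slope_def_field, norm_div, two_mul]
  have := sub_pos.mpr hρ
  gcongr
  exact (norm_nonneg _).trans hnum

theorem re_dslope_one_ofReal (G : ℂ → ℂ) {s : ℝ} (hs : s ≠ 1) :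
    (dslope G 1 s).re = ((G 1).re - (G s).re) / (1 - s) := by
  rw [dslope_of_ne _ (by exact_mod_cast hs), slope_def_field,
    show (s : ℂ) - 1 = ((s - 1 : ℝ) : ℂ) by push_cast; rfl, div_ofReal_re, sub_re,
    ← neg_div_neg_eq, neg_sub, neg_sub]

theorem half_mul_one_sub_le_re_mul_pow {G : ℂ → ℂ} (hG : Differentiable ℂ G) {c₀ K : ℝ}
    (hK : ∀ z, ‖z - 2‖ ≤ 4 / 3 → ‖G z‖ ≤ K)
    (hpos : ∀ m : ℕ, 0 ≤ ((-1) ^ m * iteratedDeriv m (fun s ↦ G s / (s - 1)) 2).re)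
    (h0 : c₀ ≤ (G 2).re) {s : ℝ} (hs : 7 / 8 ≤ s) (hs1 : s < 1) (hGs : 0 ≤ (G s).re) {M : ℕ}
    (hM : 0 < M) (hKM : 40 * K * (27 / 32) ^ M ≤ c₀ / 2) :
    c₀ / 2 * (1 - s) ≤ (G 1).re * (2 - s) ^ M := by
  have hH := blaschkeQuotient.differentiable_dslope (ρ := 1) hG
  set h : ℕ → ℝ := fun m ↦ (alternatingTaylorCoeff (dslope G 1) 2 m).re
  have hcoeff (m : ℕ) : h m + (G 1).re =
      (alternatingTaylorCoeff (fun s ↦ G s / (s - 1)) 2 m).re := by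
    rw [alternatingTaylorCoeff_div_sub hG (by norm_num)]
    norm_num [h]
  have hlam (m : ℕ) : 0 ≤ h m + (G 1).re := by
    rw [hcoeff, alternatingTaylorCoeff, div_natCast_re]
    exact div_nonneg (hpos m) (by positivity)
  have hbound (m : ℕ) : |h m| ≤ 6 * K * (3 / 4) ^ m := by
    refine (abs_re_le_norm _).trans ((norm_alternatingTaylorCoeff_le hH (by norm_num) (fun z hz ↦
      norm_dslope_le_of_mem_sphere hK (by norm_num) hz) m).trans_eq ?_)
    rw [show (3 / 4 : ℝ) = (4 / 3)⁻¹ by norm_num, inv_pow]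
    norm_num
    ring
  have hsum : HasSum (fun m ↦ h m * (2 - s) ^ m) (dslope G 1 s).re := by
    refine (hasSum_re (hasSum_alternatingTaylorCoeff hH 2 s)).congr_fun fun m ↦ ?_
    rw [← re_mul_ofReal]
    push_cast
    rfl
  have hseries := sub_sub_le_of_hasSum_mul_pow (c := c₀) (by linarith) (by norm_num)
    (by linarith) hbound hlam (by rw [hcoeff]; norm_num [alternatingTaylorCoeff, h0]) hsum hM
  have htail : 6 * K * (3 / 4 * (2 - s)) ^ M / (1 - 3 / 4 * (2 - s)) ≤ c₀ / 2 := by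
    have hK0 : 0 ≤ K := (norm_nonneg _).trans (hK 2 (by norm_num))
    refine le_trans ?_ hKM
    rw [div_le_iff₀ (by linarith)]
    calc 6 * K * (3 / 4 * (2 - s)) ^ M ≤ 6 * K * (27 / 32) ^ M := by gcongr <;> linarith
      _ ≤ 40 * K * (27 / 32) ^ M * (1 - 3 / 4 * (2 - s)) := by
          nlinarith [mul_nonneg hK0 (pow_nonneg (by norm_num : (0 : ℝ) ≤ 27 / 32) M)]
  have hpos1 : 0 < 1 - s := by linarith
  have hmain : c₀ / 2 - (G 1).re * (((2 - s) ^ M - 1) / (1 - s)) ≤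
      ((G 1).re - (G s).re) / (1 - s) := by
    rw [← re_dslope_one_ofReal G hs1.ne]
    rw [show 2 - s - 1 = 1 - s by ring] at hseries
    linarith
  rw [le_div_iff₀ hpos1, sub_mul, mul_assoc _ (_ / _), div_mul_cancel₀ _ hpos1.ne'] at hmain
  linarith

theorem pow_natCeil_log_le_inv {X : ℝ} (hX : 1 < X) :
    (27 / 32 : ℝ) ^ ⌈7 * Real.log X⌉₊ ≤ X⁻¹ := by
  have hM : 7 * Real.log X ≤ ⌈7 * Real.log X⌉₊ := Nat.le_ceil _
  generalize ⌈7 * Real.log X⌉₊ = M at *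
  calc (27 / 32 : ℝ) ^ M ≤ Real.exp (-(1 / 7)) ^ M := by
        gcongr
        linarith [Real.one_sub_le_exp_neg (1 / 7)]
    _ = Real.exp (-(M / 7)) := by rw [← Real.exp_nat_mul]; ring_nf
    _ ≤ Real.exp (-Real.log X) := by gcongr; linarith
    _ = X⁻¹ := by rw [Real.exp_neg, Real.exp_log (by linarith)]

theorem pow_natCeil_log_le_two_mul_rpow {X s : ℝ} (hX : 1 < X) (hs : 1 / 2 ≤ s) (hs1 : s < 1) :
    (2 - s) ^ ⌈7 * Real.log X⌉₊ ≤ 2 * X ^ (7 * (1 - s)) := by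
  have hM : ⌈7 * Real.log X⌉₊ < 7 * Real.log X + 1 :=
    Nat.ceil_lt_add_one (mul_pos (by norm_num) (Real.log_pos hX)).le
  generalize ⌈7 * Real.log X⌉₊ = M at *
  have hexp : Real.exp (1 - s) ≤ 2 := by
    refine (Real.exp_le_exp.mpr (by linarith : 1 - s ≤ 1 / 2)).trans ?_
    rw [← neg_neg (1 / 2 : ℝ), Real.exp_neg]
    exact inv_le_of_inv_le₀ (by norm_num) (by linarith [Real.one_sub_le_exp_neg (1 / 2)])
  calc (2 - s) ^ M ≤ Real.exp (1 - s) ^ M := by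
        gcongr <;> linarith [Real.add_one_le_exp (1 - s)]
    _ = Real.exp ((1 - s) * M) := by rw [← Real.exp_nat_mul, mul_comm]
    _ ≤ Real.exp ((1 - s) + Real.log X * (7 * (1 - s))) := by
        gcongr
        nlinarith
    _ ≤ 2 * X ^ (7 * (1 - s)) := by
        rw [Real.exp_add, ← Real.rpow_def_of_pos (by linarith)]
        gcongr

/- Take `M` of size `7 log (80K / c₀)` above: `exp (-1 / 7) ≥ 27 / 32`, so the tail beyond `M` is
negligible. -/
theorem mul_rpow_le_re_of_alternating {G : ℂ → ℂ} (hG : Differentiable ℂ G) {c₀ K : ℝ}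
    (hc₀ : 0 < c₀) (hK : ∀ z, ‖z - 2‖ ≤ 4 / 3 → ‖G z‖ ≤ K)
    (hpos : ∀ m : ℕ, 0 ≤ ((-1) ^ m * iteratedDeriv m (fun s ↦ G s / (s - 1)) 2).re)
    (h0 : c₀ ≤ (G 2).re) {s : ℝ} (hs : 7 / 8 ≤ s) (hs1 : s < 1) (hGs : 0 ≤ (G s).re) :
    c₀ / 4 * (1 - s) * (80 * K / c₀) ^ (-7 * (1 - s)) ≤ (G 1).re := by
  set X := 80 * K / c₀ with hXdef
  have hX : 1 < X := by
    rw [hXdef, one_lt_div hc₀]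
    linarith [(h0.trans (re_le_norm _)).trans (hK 2 (by norm_num))]
  have hM : 0 < ⌈7 * Real.log X⌉₊ :=
    Nat.ceil_pos.mpr (mul_pos (by norm_num) (Real.log_pos hX))
  have hKX : 40 * K = c₀ / 2 * X := by rw [hXdef]; field_simp; ring
  have hkey := half_mul_one_sub_le_re_mul_pow hG hK hpos h0 hs hs1 hGs hM <| by
    calc 40 * K * (27 / 32) ^ ⌈7 * Real.log X⌉₊ ≤ c₀ / 2 * X * X⁻¹ := by
          rw [hKX]
          gcongr
          exact pow_natCeil_log_le_inv hX
      _ = c₀ / 2 := mul_inv_cancel_right₀ (by linarith) _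
  have hbase : 0 < (2 - s) ^ ⌈7 * Real.log X⌉₊ := pow_pos (by linarith) _
  rw [neg_mul, Real.rpow_neg (by linarith), ← div_eq_mul_inv]
  calc c₀ / 4 * (1 - s) / X ^ (7 * (1 - s))
      = c₀ / 2 * (1 - s) / (2 * X ^ (7 * (1 - s))) := by field_simp; ring
    _ ≤ c₀ / 2 * (1 - s) / (2 - s) ^ ⌈7 * Real.log X⌉₊ := by
        have := sub_pos.mpr hs1
        gcongr
        exact pow_natCeil_log_le_two_mul_rpow hX (by linarith) hs1
    _ ≤ (G 1).re := (div_le_iff₀ hbase).mpr hkey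

end Estermann

section QuadraticLFunction

open Complex DirichletCharacter
open scoped ComplexOrder

variable {q : ℕ} {χ : DirichletCharacter ℂ q}

theorem natCast_cpow_neg_ofReal (n : ℕ) (σ : ℝ) :
    (n : ℂ) ^ (-(σ : ℂ)) = ((n : ℝ) ^ (-σ) : ℝ) := by
  rw [ofReal_cpow n.cast_nonneg, ofReal_neg, ofReal_natCast]

theorem im_abelTerm_ofReal (hχ : χ.IsQuadratic) (n : ℕ) (σ : ℝ) : (abelTerm χ n σ).im = 0 := by
  have hsum : (charPartialSum χ (n + 1)).im = 0 := by
    rw [charPartialSum, im_sum]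
    refine Finset.sum_eq_zero fun k _ ↦ ?_
    obtain ⟨e, -, he⟩ := exists_ofReal_eq_of_isQuadratic hχ ((k + 1 : ℕ) : ZMod q)
    rw [he, ofReal_im]
  rw [abelTerm, natCast_cpow_neg_ofReal, natCast_cpow_neg_ofReal, ← ofReal_sub, im_mul_ofReal, hsum,
    zero_mul]

theorem LFunction_pos_of_one_lt [NeZero q] (hχ : χ.IsQuadratic) {σ : ℝ} (hσ : 1 < σ) :
    0 < χ.LFunction σ := by
  have hs : 1 < (σ : ℂ).re := hσ
  rw [χ.LFunction_eq_LSeries hs]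
  refine lt_of_le_of_ne ?_ (LSeries_ne_zero_of_one_lt_re χ hs).symm
  refine isClosed_Ici.mem_of_tendsto (LSeries_eulerProduct_hasProd χ hs) (.of_forall fun S ↦ ?_)
  change 0 ≤ ∏ p ∈ S, (1 - χ ((p : ℕ) : ZMod q) * ((p : ℕ) : ℂ) ^ (-(σ : ℂ)))⁻¹
  refine Finset.prod_nonneg fun p _ ↦ ?_
  obtain ⟨e, he, hχe⟩ := exists_ofReal_eq_of_isQuadratic hχ ((p : ℕ) : ZMod q)
  have hp0 : 0 ≤ ((p : ℕ) : ℝ) ^ (-σ) := by positivity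
  have hp1 : ((p : ℕ) : ℝ) ^ (-σ) ≤ 1 :=
    Real.rpow_le_one_of_one_le_of_nonpos (by exact_mod_cast p.2.one_le) (by linarith)
  have hfactor : 0 ≤ (1 - e * ((p : ℕ) : ℝ) ^ (-σ))⁻¹ :=
    inv_nonneg.mpr (sub_nonneg.mpr ((mul_le_of_le_one_left hp0 (le_of_abs_le he)).trans hp1))
  rw [hχe, natCast_cpow_neg_ofReal]
  exact_mod_cast hfactor

theorem im_LFunction_ofReal [NeZero q] (hχ : χ.IsQuadratic) (h1 : χ ≠ 1) {σ : ℝ} (hσ : 0 < σ) :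
    (χ.LFunction σ).im = 0 := by
  have hreal (n : ℕ) : abelTerm χ n σ = ((abelTerm χ n σ).re : ℂ) :=
    Complex.ext rfl (im_abelTerm_ofReal hχ n σ)
  rw [LFunction_eq_tsum_abelTerm h1 hσ, tsum_congr hreal, ← ofReal_tsum, ofReal_im]

theorem LFunction_pos_of_forall_ne_zero [NeZero q] (hχ : χ.IsQuadratic) (h1 : χ ≠ 1) {β : ℝ}
    (hβ : 0 < β) (hz : ∀ σ : ℝ, β ≤ σ → σ < 1 → χ.LFunction σ ≠ 0) : 0 < χ.LFunction β := by
  rcases lt_or_ge 1 β with hβ1 | hβ1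
  · exact LFunction_pos_of_one_lt hχ hβ1
  refine pos_iff.mpr ⟨?_, (im_LFunction_ofReal hχ h1 hβ).symm⟩
  by_contra! hneg
  have h2 := (pos_iff.mp (LFunction_pos_of_one_lt hχ one_lt_two)).1
  have hcont : Continuous fun x : ℝ ↦ (χ.LFunction x).re :=
    continuous_re.comp ((differentiable_LFunction h1).continuous.comp continuous_ofReal)
  obtain ⟨x, hx, hx0⟩ := intermediate_value_Icc (by linarith : β ≤ 2) hcont.continuousOn
    (show (0 : ℝ) ∈ Set.Icc _ _ from ⟨hneg, h2.le⟩)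
  have hzero : χ.LFunction x = 0 :=
    Complex.ext hx0 (im_LFunction_ofReal hχ h1 (hβ.trans_le hx.1))
  rcases lt_or_ge x 1 with hx1 | hx1
  · exact hz x hx.1 hx1 hzero
  · exact LFunction_ne_zero_of_one_le_re χ (.inl h1) (by simpa using hx1) hzero

end QuadraticLFunction

section SiegelProduct

open Complex DirichletCharacter ArithmeticFunction
open scoped ComplexOrder

theorem alternating_iteratedDeriv_nonneg_of_deriv_eq {F D : ℂ → ℂ} {x : ℂ} (hF : AnalyticAt ℂ F x)
    (hD : AnalyticAt ℂ D x) (hderiv : deriv F =ᶠ[nhds x] fun z ↦ -(F z * D z)) (hFx : 0 ≤ F x)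
    (hDx : ∀ k : ℕ, 0 ≤ (-1) ^ k * iteratedDeriv k D x) (m : ℕ) :
    0 ≤ (-1) ^ m * iteratedDeriv m F x := by
  induction m using Nat.strong_induction_on with
  | _ m ih =>
    rcases m with _ | m
    · simpa using hFx
    have hLeibniz : (-1) ^ (m + 1) * iteratedDeriv (m + 1) F x =
        ∑ i ∈ Finset.range (m + 1), (m.choose i : ℂ) * ((-1) ^ i * iteratedDeriv i F x) *
          ((-1) ^ (m - i) * iteratedDeriv (m - i) D x) := by
      rw [iteratedDeriv_succ', hderiv.iteratedDeriv_eq, iteratedDeriv_fun_neg,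
        iteratedDeriv_fun_mul hF.contDiffAt hD.contDiffAt, pow_succ, mul_assoc, neg_one_mul,
        neg_neg, Finset.mul_sum]
      refine Finset.sum_congr rfl fun i hi ↦ ?_
      rw [← pow_mul_pow_sub (-1 : ℂ) (Finset.mem_range_succ_iff.mp hi)]
      ring
    rw [hLeibniz]
    exact Finset.sum_nonneg fun i hi ↦ mul_nonneg
      (mul_nonneg (by exact_mod_cast (m.choose i).cast_nonneg) (ih i (Finset.mem_range.mp hi)))
      (hDx _)

variable {q₁ q₂ q₃ : ℕ} [NeZero q₁] [NeZero q₂] [NeZero q₃] {χ₁ : DirichletCharacter ℂ q₁}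
  {χ₂ : DirichletCharacter ℂ q₂} {χ₃ : DirichletCharacter ℂ q₃}

/-- The function `(s - 1) ζ(s) L(s, χ₁) L(s, χ₂) L(s, χ₃)`. For `χ₃ = χ₁ χ₂` with `χ₁`, `χ₂`
quadratic, its quotient by `s - 1` is a Dirichlet series with nonnegative coefficients. -/
noncomputable def siegelProduct (χ₁ : DirichletCharacter ℂ q₁) (χ₂ : DirichletCharacter ℂ q₂)
    (χ₃ : DirichletCharacter ℂ q₃) (s : ℂ) : ℂ :=
  riemannZeta₁ s * (χ₁.LFunction s * χ₂.LFunction s * χ₃.LFunction s)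

theorem differentiable_siegelProduct (h₁ : χ₁ ≠ 1) (h₂ : χ₂ ≠ 1) (h₃ : χ₃ ≠ 1) :
    Differentiable ℂ (siegelProduct χ₁ χ₂ χ₃) :=
  differentiable_riemannZeta₁.mul (((differentiable_LFunction h₁).mul
    (differentiable_LFunction h₂)).mul (differentiable_LFunction h₃))

theorem siegelProduct_div_sub_one {s : ℂ} (hs : s ≠ 1) : siegelProduct χ₁ χ₂ χ₃ s / (s - 1) =
    riemannZeta s * (χ₁.LFunction s * χ₂.LFunction s * χ₃.LFunction s) := by
  rw [siegelProduct, riemannZeta_eq_div hs, mul_div_right_comm]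

theorem siegelProduct_two : siegelProduct χ₁ χ₂ χ₃ 2 =
    riemannZeta (2 : ℝ) *
      (χ₁.LFunction (2 : ℝ) * χ₂.LFunction (2 : ℝ) * χ₃.LFunction (2 : ℝ)) := by
  have h := siegelProduct_div_sub_one (χ₁ := χ₁) (χ₂ := χ₂) (χ₃ := χ₃) (s := 2) (by norm_num)
  norm_num at h ⊢
  exact h

theorem siegelProduct_two_pos (hχ₁ : χ₁.IsQuadratic) (hχ₂ : χ₂.IsQuadratic)
    (hχ₃ : χ₃.IsQuadratic) : 0 < siegelProduct χ₁ χ₂ χ₃ 2 := by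
  rw [siegelProduct_two]
  exact mul_pos (riemannZeta_pos_of_one_lt one_lt_two) (mul_pos (mul_pos
    (LFunction_pos_of_one_lt hχ₁ one_lt_two) (LFunction_pos_of_one_lt hχ₂ one_lt_two))
    (LFunction_pos_of_one_lt hχ₃ one_lt_two))

theorem logDeriv_siegelProduct_div_sub_one (h₁ : χ₁ ≠ 1) (h₂ : χ₂ ≠ 1) (h₃ : χ₃ ≠ 1) {s : ℂ}
    (hs : 1 < s.re) :
    logDeriv (fun z ↦ siegelProduct χ₁ χ₂ χ₃ z / (z - 1)) s =
      logDeriv riemannZeta s + (logDeriv χ₁.LFunction s + logDeriv χ₂.LFunction s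
        + logDeriv χ₃.LFunction s) := by
  have hs1 : s ≠ 1 := by
    rintro rfl
    exact lt_irrefl _ hs
  have hprod : (fun z ↦ siegelProduct χ₁ χ₂ χ₃ z / (z - 1)) =ᶠ[nhds s]
      fun z ↦ riemannZeta z * (χ₁.LFunction z * χ₂.LFunction z * χ₃.LFunction z) := by
    filter_upwards [isOpen_ne.mem_nhds hs1] with z hz using siegelProduct_div_sub_one hz
  have d₁ := differentiable_LFunction h₁ s
  have d₂ := differentiable_LFunction h₂ s
  have d₃ := differentiable_LFunction h₃ s
  have n₁ := LFunction_ne_zero_of_one_le_re χ₁ (.inl h₁) hs.le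
  have n₂ := LFunction_ne_zero_of_one_le_re χ₂ (.inl h₂) hs.le
  have n₃ := LFunction_ne_zero_of_one_le_re χ₃ (.inl h₃) hs.le
  rw [logDeriv_apply, hprod.deriv_eq, hprod.eq_of_nhds, ← logDeriv_apply,
    logDeriv_mul (f := riemannZeta)
      (g := fun z ↦ χ₁.LFunction z * χ₂.LFunction z * χ₃.LFunction z) s
      (riemannZeta_ne_zero_of_one_le_re hs.le) (mul_ne_zero (mul_ne_zero n₁ n₂) n₃)
      (differentiableAt_riemannZeta hs1) ((d₁.mul d₂).mul d₃),
    logDeriv_mul (f := fun z ↦ χ₁.LFunction z * χ₂.LFunction z) s (mul_ne_zero n₁ n₂) n₃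
      (d₁.mul d₂) d₃,
    logDeriv_mul s n₁ n₂ d₁ d₂]

theorem exists_nonneg_LSeriesHasSum_neg_logDeriv (hχ₁ : χ₁.IsQuadratic) (hχ₂ : χ₂.IsQuadratic)
    (h₁ : χ₁ ≠ 1) (h₂ : χ₂ ≠ 1) (h₃ : χ₃ ≠ 1) (hmul : ∀ n : ℕ, χ₃ n = χ₁ n * χ₂ n) :
    ∃ a : ℕ → ℂ, 0 ≤ a ∧ ∀ s : ℂ, 1 < s.re →
      LSeriesHasSum a s (-logDeriv (fun z ↦ siegelProduct χ₁ χ₂ χ₃ z / (z - 1)) s) := by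
  refine ⟨fun n ↦ Λ n * ((1 + χ₁ n) * (1 + χ₂ n)), fun n ↦ ?_, fun s hs ↦ ?_⟩
  · obtain ⟨e₁, he₁, hχe₁⟩ := exists_ofReal_eq_of_isQuadratic hχ₁ (n : ZMod q₁)
    obtain ⟨e₂, he₂, hχe₂⟩ := exists_ofReal_eq_of_isQuadratic hχ₂ (n : ZMod q₂)
    have hreal : 0 ≤ Λ n * ((1 + e₁) * (1 + e₂)) :=
      mul_nonneg vonMangoldt_nonneg (mul_nonneg (by linarith [neg_le_of_abs_le he₁])
        (by linarith [neg_le_of_abs_le he₂]))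
    simp only [Pi.zero_apply, hχe₁, hχe₂]
    exact_mod_cast hreal
  · rw [logDeriv_siegelProduct_div_sub_one h₁ h₂ h₃ hs]
    have hsum := ((LSeriesHasSum_vonMangoldt hs).add (LSeriesHasSum_twist_vonMangoldt χ₁ hs)).add
      ((LSeriesHasSum_twist_vonMangoldt χ₂ hs).add (LSeriesHasSum_twist_vonMangoldt χ₃ hs))
    convert hsum using 1
    · funext n
      simp only [Pi.add_apply, hmul]
      ring
    · ring

theorem alternating_iteratedDeriv_siegelProduct_nonneg (hχ₁ : χ₁.IsQuadratic)
    (hχ₂ : χ₂.IsQuadratic) (hχ₃ : χ₃.IsQuadratic) (h₁ : χ₁ ≠ 1) (h₂ : χ₂ ≠ 1) (h₃ : χ₃ ≠ 1)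
    (hmul : ∀ n : ℕ, χ₃ n = χ₁ n * χ₂ n) (m : ℕ) :
    0 ≤ (-1) ^ m * iteratedDeriv m (fun s ↦ siegelProduct χ₁ χ₂ χ₃ s / (s - 1)) 2 := by
  obtain ⟨a, ha, hasum⟩ := exists_nonneg_LSeriesHasSum_neg_logDeriv hχ₁ hχ₂ h₁ h₂ h₃ hmul
  have habs : LSeries.abscissaOfAbsConv a < ((2 : ℝ) : EReal) := by
    have hle : LSeries.abscissaOfAbsConv a ≤ (1 : ℝ) :=
      LSeries.abscissaOfAbsConv_le_of_forall_lt_LSeriesSummable fun y hy ↦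
        (hasum y (by simpa using hy)).LSeriesSummable
    exact hle.trans_lt (by exact_mod_cast one_lt_two)
  have hpos := siegelProduct_two_pos hχ₁ hχ₂ hχ₃
  refine alternating_iteratedDeriv_nonneg_of_deriv_eq (D := LSeries a) ?_ ?_ ?_ ?_
    (fun k ↦ by exact_mod_cast LSeries.iteratedDeriv_alternating ha habs k) m
  · exact ((differentiable_siegelProduct h₁ h₂ h₃).analyticAt 2).div
      (analyticAt_id.sub analyticAt_const) (by norm_num)
  · exact LSeries_analyticOnNhd a 2 (by simpa using habs)
  · filter_upwards [(isOpen_lt continuous_const continuous_re).mem_nhds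
      (by simp : 1 < (2 : ℂ).re)] with s hs
    have hs1 : s ≠ 1 := by
      rintro rfl
      exact lt_irrefl _ hs
    have hne : siegelProduct χ₁ χ₂ χ₃ s / (s - 1) ≠ 0 := by
      rw [siegelProduct_div_sub_one hs1]
      exact mul_ne_zero (riemannZeta_ne_zero_of_one_le_re hs.le) (mul_ne_zero (mul_ne_zero
        (LFunction_ne_zero_of_one_le_re χ₁ (.inl h₁) hs.le)
        (LFunction_ne_zero_of_one_le_re χ₂ (.inl h₂) hs.le))
        (LFunction_ne_zero_of_one_le_re χ₃ (.inl h₃) hs.le))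
    rw [(hasum s hs).LSeries_eq, logDeriv_apply, mul_neg, neg_neg, mul_div_cancel₀ _ hne]
  · norm_num
    exact hpos.le

theorem exists_le_re_siegelProduct_two : ∃ c > 0, ∀ (q₁ q₂ q₃ : ℕ) [NeZero q₁] [NeZero q₂]
    [NeZero q₃] (χ₁ : DirichletCharacter ℂ q₁) (χ₂ : DirichletCharacter ℂ q₂)
    (χ₃ : DirichletCharacter ℂ q₃), χ₁.IsQuadratic → χ₂.IsQuadratic → χ₃.IsQuadratic →
      c ≤ (siegelProduct χ₁ χ₂ χ₃ 2).re := by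
  obtain ⟨c, hc, hL⟩ := exists_mul_le_norm_LFunction 2
  have hζ : 0 < ‖riemannZeta (2 : ℝ)‖ :=
    norm_pos_iff.mpr (riemannZeta_pos_of_one_lt one_lt_two).ne'
  refine ⟨‖riemannZeta (2 : ℝ)‖ * (c * c * c), by positivity, ?_⟩
  intro q₁ q₂ q₃ _ _ _ χ₁ χ₂ χ₃ hχ₁ hχ₂ hχ₃
  have hLtwo (q : ℕ) [NeZero q] (χ : DirichletCharacter ℂ q) : c ≤ ‖χ.LFunction (2 : ℝ)‖ := by
    have hle := hL q χ (2 : ℝ) (by simp) (by simp)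
    rw [ofReal_re] at hle
    linarith
  rw [re_eq_norm.mpr (siegelProduct_two_pos hχ₁ hχ₂ hχ₃).le, siegelProduct_two, norm_mul,
    norm_mul, norm_mul]
  gcongr
  exacts [hLtwo q₁ χ₁, hLtwo q₂ χ₂, hLtwo q₃ χ₃]

theorem exists_norm_siegelProduct_le : ∃ C > 0, ∀ (q₁ q₂ q₃ : ℕ) [NeZero q₁] [NeZero q₂]
    [NeZero q₃] (χ₁ : DirichletCharacter ℂ q₁) (χ₂ : DirichletCharacter ℂ q₂)
    (χ₃ : DirichletCharacter ℂ q₃), χ₁ ≠ 1 → χ₂ ≠ 1 → χ₃ ≠ 1 → ∀ z : ℂ, ‖z - 2‖ ≤ 4 / 3 →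
      ‖siegelProduct χ₁ χ₂ χ₃ z‖ ≤ C * (q₁ * q₂ * q₃) := by
  obtain ⟨C, hC, hL⟩ := exists_norm_LFunction_le one_pos le_rfl
  obtain ⟨C', hC', hζ⟩ := exists_norm_riemannZeta₁_le one_half_pos
  refine ⟨(1 + C' * (3 * 4)) * (C * 4) ^ 3, by positivity, ?_⟩
  intro q₁ q₂ q₃ _ _ _ χ₁ χ₂ χ₃ h₁ h₂ h₃ z hz
  have hz0 : ‖z‖ ≤ 4 := by
    have := norm_add_le (z - 2) 2
    rw [sub_add_cancel, Complex.norm_two] at this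
    linarith
  have hz1 : ‖z - 1‖ ≤ 3 := by
    have := norm_add_le (z - 2) 1
    rw [show z - 2 + 1 = z - 1 by ring, norm_one] at this
    linarith
  have hre : 1 / 2 ≤ z.re := by
    have := neg_le_of_abs_le ((abs_re_le_norm (z - 2)).trans hz)
    rw [sub_re, re_ofNat] at this
    linarith
  have hLz (q : ℕ) [NeZero q] (χ : DirichletCharacter ℂ q) (hχ : χ ≠ 1) :
      ‖χ.LFunction z‖ ≤ C * 4 * q := by
    refine (hL q χ hχ z (by linarith)).trans ?_
    rw [Real.rpow_one]
    gcongr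
  have hζz : ‖riemannZeta₁ z‖ ≤ 1 + C' * (3 * 4) := (hζ z hre).trans (by gcongr)
  rw [siegelProduct, norm_mul, norm_mul, norm_mul]
  calc _ ≤ (1 + C' * (3 * 4)) * ((C * 4 * q₁) * (C * 4 * q₂) * (C * 4 * q₃)) := by
        gcongr
        exacts [hLz q₁ χ₁ h₁, hLz q₂ χ₂ h₂, hLz q₃ χ₃ h₃]
    _ = _ := by ring

end SiegelProduct

section SiegelTheorem

open Complex DirichletCharacter
open scoped ComplexOrder

instance neZero_four_mul_natAbs (D : ℤ) [NeZero D] : NeZero (4 * D.natAbs) :=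
  ⟨mul_ne_zero four_ne_zero (Int.natAbs_ne_zero.mpr (NeZero.ne D))⟩

theorem exists_le_re_siegelProduct_one : ∃ c > 0, ∃ C > 0, ∀ (q₁ q₂ q₃ : ℕ) [NeZero q₁]
    [NeZero q₂] [NeZero q₃] (χ₁ : DirichletCharacter ℂ q₁) (χ₂ : DirichletCharacter ℂ q₂)
    (χ₃ : DirichletCharacter ℂ q₃), χ₁.IsQuadratic → χ₂.IsQuadratic → χ₃.IsQuadratic →
      χ₁ ≠ 1 → χ₂ ≠ 1 → χ₃ ≠ 1 → (∀ n : ℕ, χ₃ n = χ₁ n * χ₂ n) → ∀ β : ℝ, 7 / 8 ≤ β → β < 1 →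
        0 ≤ (siegelProduct χ₁ χ₂ χ₃ β).re →
        c * (1 - β) * (C * (q₁ * q₂ * q₃)) ^ (-7 * (1 - β)) ≤ (siegelProduct χ₁ χ₂ χ₃ 1).re := by
  obtain ⟨c, hc, htwo⟩ := exists_le_re_siegelProduct_two
  obtain ⟨C, hC, hbound⟩ := exists_norm_siegelProduct_le
  refine ⟨c / 4, by positivity, 80 * C / c, by positivity, ?_⟩
  intro q₁ q₂ q₃ _ _ _ χ₁ χ₂ χ₃ hχ₁ hχ₂ hχ₃ h₁ h₂ h₃ hmul β hβ hβ1 hβ0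
  have h := mul_rpow_le_re_of_alternating (differentiable_siegelProduct h₁ h₂ h₃) hc
    (hbound q₁ q₂ q₃ χ₁ χ₂ χ₃ h₁ h₂ h₃)
    (fun m ↦ (le_def.mp
      (alternating_iteratedDeriv_siegelProduct_nonneg hχ₁ hχ₂ hχ₃ h₁ h₂ h₃ hmul m)).1)
    (htwo q₁ q₂ q₃ χ₁ χ₂ χ₃ hχ₁ hχ₂ hχ₃) hβ hβ1 hβ0
  convert h using 3
  ring

theorem exists_forall_re_riemannZeta₁_pos :
    ∃ κ > 0, ∀ σ : ℝ, 1 - κ ≤ σ → σ ≤ 1 → 0 < (riemannZeta₁ σ).re := by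
  have hcont : Continuous fun σ : ℝ ↦ (riemannZeta₁ σ).re :=
    continuous_re.comp (differentiable_riemannZeta₁.continuous.comp continuous_ofReal)
  have hone : 0 < (riemannZeta₁ (1 : ℝ)).re := by
    rw [ofReal_one, riemannZeta₁_one]
    exact one_pos
  obtain ⟨κ, hκ, hpos⟩ := Metric.eventually_nhds_iff.mp
    (hcont.continuousAt.eventually (lt_mem_nhds hone))
  refine ⟨κ / 2, by positivity, fun σ hσ hσ1 ↦ hpos ?_⟩
  rw [Real.dist_eq, abs_lt]
  constructor <;> linarith

/- If some `L(s, χ_D)` has a zero in `[1 - κ, 1)`, the product vanishes there; otherwise all four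
factors of the product are positive on that interval. -/
theorem exists_forall_re_siegelProduct_jacobiChar_nonneg {κ : ℝ} (hκ : 0 < κ) (hκ1 : κ < 1)
    (hζ : 0 < (riemannZeta₁ (1 - κ : ℝ)).re) :
    ∃ (D : ℤ) (_ : NeZero D) (β : ℝ), Squarefree D ∧ D ≠ 1 ∧ 1 - κ ≤ β ∧ β < 1 ∧
      ∀ (E : ℤ) [NeZero E], Squarefree E → E ≠ 1 → E ≠ D →
        0 ≤ (siegelProduct (jacobiChar D) (jacobiChar E) (jacobiChar (D * E)) β).re := by
  by_cases hex : ∃ (D : ℤ) (_ : NeZero D) (β : ℝ), Squarefree D ∧ D ≠ 1 ∧ 1 - κ ≤ β ∧ β < 1 ∧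
      (jacobiChar D).LFunction β = 0
  · obtain ⟨D, _, β, hD, hD1, hβ, hβ1, hzero⟩ := hex
    refine ⟨D, inferInstance, β, hD, hD1, hβ, hβ1, fun E _ _ _ _ ↦ ?_⟩
    rw [siegelProduct, hzero, zero_mul, zero_mul, mul_zero, zero_re]
  · push Not at hex
    have hpos (D : ℤ) [NeZero D] (hD : Squarefree D) (hD1 : D ≠ 1) :
        0 < (jacobiChar D).LFunction (1 - κ : ℝ) :=
      LFunction_pos_of_forall_ne_zero (isQuadratic_jacobiChar D) (jacobiChar_ne_one hD hD1)
        (by linarith) fun σ hσ hσ1 ↦ hex D inferInstance σ hD hD1 hσ hσ1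
    have hsq : Squarefree (-1 : ℤ) := isUnit_one.neg.squarefree
    have hne : NeZero (-1 : ℤ) := ⟨by norm_num⟩
    refine ⟨-1, hne, 1 - κ, hsq, by norm_num, le_rfl, by linarith, fun E _ hE hE1 hEne ↦ ?_⟩
    have hsqE : Squarefree (-1 * E) := by
      rw [neg_one_mul]
      exact (Associated.neg_left (Associated.refl E)).squarefree_iff.mpr hE
    have hLpos := pos_iff.mp (mul_pos (mul_pos (hpos (-1) hsq (by norm_num)) (hpos E hE hE1))
      (hpos (-1 * E) hsqE (by omega)))
    rw [siegelProduct, mul_re, ← hLpos.2, mul_zero, sub_zero]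
    exact (mul_pos hζ hLpos.1).le

theorem four_mul_natAbs_mul_le (D E : ℤ) :
    ((4 * (D * E).natAbs : ℕ) : ℝ) ≤ (4 * D.natAbs : ℕ) * (4 * E.natAbs : ℕ) := by
  rw [Int.natAbs_mul]
  norm_cast
  nlinarith [Nat.zero_le (D.natAbs * E.natAbs)]

theorem exists_le_re_siegelProduct_jacobiChar_one {ε : ℝ} (hε : 0 < ε) :
    ∃ (D : ℤ) (_ : NeZero D), Squarefree D ∧ D ≠ 1 ∧ ∃ c > 0, ∀ (E : ℤ) [NeZero E],
      Squarefree E → E ≠ 1 → E ≠ D → c * ((4 * E.natAbs : ℕ) : ℝ) ^ (-ε) ≤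
        (siegelProduct (jacobiChar D) (jacobiChar E) (jacobiChar (D * E)) 1).re := by
  obtain ⟨κ₀, hκ₀, hζ⟩ := exists_forall_re_riemannZeta₁_pos
  obtain ⟨κ, hκ, hκκ₀, hκ8, hκε⟩ : ∃ κ > 0, κ ≤ κ₀ ∧ κ ≤ 1 / 8 ∧ 14 * κ ≤ ε :=
    ⟨min κ₀ (min (1 / 8) (ε / 14)), by positivity, min_le_left _ _,
      (min_le_right _ _).trans (min_le_left _ _), by
        linarith [(min_le_right κ₀ (min (1 / 8) (ε / 14))).trans (min_le_right _ _)]⟩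
  obtain ⟨D, _, β, hD, hD1, hβ, hβ1, hnonneg⟩ := exists_forall_re_siegelProduct_jacobiChar_nonneg
    hκ (by linarith) (hζ (1 - κ) (by linarith) (by linarith))
  obtain ⟨c, hc, C, hC, hone⟩ := exists_le_re_siegelProduct_one
  have hD4 : 0 < ((4 * D.natAbs : ℕ) : ℝ) := by exact_mod_cast NeZero.pos _
  have hβ0 : 0 < 1 - β := by linarith
  refine ⟨D, inferInstance, hD, hD1,
    c * (1 - β) * (C * ((4 * D.natAbs : ℕ) : ℝ) ^ 2) ^ (-7 * (1 - β)),
    mul_pos (mul_pos hc hβ0) (by positivity), ?_⟩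
  intro E _ hE hE1 hED
  have h := hone _ _ _ (jacobiChar D) (jacobiChar E) (jacobiChar (D * E))
    (isQuadratic_jacobiChar D) (isQuadratic_jacobiChar E) (isQuadratic_jacobiChar _)
    (jacobiChar_ne_one hD hD1) (jacobiChar_ne_one hE hE1) (jacobiChar_mul_ne_one hD hE hED.symm)
    (jacobiChar_mul_natCast D E) β (by linarith) hβ1 (hnonneg E hE hE1 hED)
  refine le_trans ?_ h
  have hle := four_mul_natAbs_mul_le D E
  have hE4 : 1 ≤ ((4 * E.natAbs : ℕ) : ℝ) := by exact_mod_cast NeZero.one_le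
  have hDE4 : 0 < ((4 * (D * E).natAbs : ℕ) : ℝ) := by exact_mod_cast NeZero.pos _
  generalize ((4 * D.natAbs : ℕ) : ℝ) = Q at *
  generalize ((4 * E.natAbs : ℕ) : ℝ) = q at *
  generalize ((4 * (D * E).natAbs : ℕ) : ℝ) = q' at *
  have hq : 0 < q := by linarith
  calc c * (1 - β) * (C * Q ^ 2) ^ (-7 * (1 - β)) * q ^ (-ε)
      ≤ c * (1 - β) * (C * Q ^ 2) ^ (-7 * (1 - β)) * (q ^ 2) ^ (-7 * (1 - β)) := by
        rw [← Real.rpow_natCast q 2, ← Real.rpow_mul hq.le]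
        gcongr
        push_cast
        linarith
    _ = c * (1 - β) * (C * (Q * q * (Q * q))) ^ (-7 * (1 - β)) := by
        rw [mul_assoc, ← Real.mul_rpow (by positivity) (by positivity)]
        ring_nf
    _ ≤ c * (1 - β) * (C * (Q * q * q')) ^ (-7 * (1 - β)) :=
        mul_le_mul_of_nonneg_left (Real.rpow_le_rpow_of_nonpos (by positivity) (by gcongr)
          (by linarith)) (by positivity)

theorem exists_le_norm_LFunction_jacobiChar_one {ε : ℝ} (hε : 0 < ε) :
    ∃ c > 0, ∀ (E : ℤ) [NeZero E], Squarefree E → E ≠ 1 →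
      c * ((4 * E.natAbs : ℕ) : ℝ) ^ (-ε) ≤ ‖(jacobiChar E).LFunction 1‖ := by
  obtain ⟨D, _, hD, hD1, c, hc, hlow⟩ := exists_le_re_siegelProduct_jacobiChar_one (half_pos hε)
  obtain ⟨δ, hδ, hδ1, hδε⟩ : ∃ δ > 0, δ ≤ 1 ∧ δ ≤ ε / 2 :=
    ⟨min 1 (ε / 2), by positivity, min_le_left _ _, min_le_right _ _⟩
  obtain ⟨C, hC, hup⟩ := exists_norm_LFunction_le hδ hδ1
  have hLD : 0 < ‖(jacobiChar D).LFunction 1‖ :=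
    norm_pos_iff.mpr (LFunction_apply_one_ne_zero (jacobiChar_ne_one hD hD1))
  have hD4 : 0 < ((4 * D.natAbs : ℕ) : ℝ) := by exact_mod_cast NeZero.pos _
  set l := ‖(jacobiChar D).LFunction 1‖
  set Q := ((4 * D.natAbs : ℕ) : ℝ)
  refine ⟨min l (c / (l * (C * Q ^ δ))), by positivity, fun E _ hE hE1 ↦ ?_⟩
  have hE4 : 1 ≤ ((4 * E.natAbs : ℕ) : ℝ) := by exact_mod_cast NeZero.one_le
  rcases eq_or_ne E D with rfl | hED
  · exact (mul_le_of_le_one_right (by positivity)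
      (Real.rpow_le_one_of_one_le_of_nonpos hE4 (by linarith))).trans (min_le_left _ _)
  have hL := (hlow E hE hE1 hED).trans (re_le_norm _)
  rw [siegelProduct, riemannZeta₁_one, one_mul, norm_mul, norm_mul] at hL
  have hLDE : ‖(jacobiChar (D * E)).LFunction 1‖ ≤
      C * (Q ^ δ * ((4 * E.natAbs : ℕ) : ℝ) ^ (ε / 2)) := by
    refine (hup _ _ (jacobiChar_mul_ne_one hD hE hED.symm) 1 (by rw [one_re]; linarith)).trans ?_
    rw [norm_one, mul_one]
    calc _ ≤ C * (Q * ((4 * E.natAbs : ℕ) : ℝ)) ^ δ := by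
          gcongr
          exact four_mul_natAbs_mul_le D E
      _ ≤ _ := by
          rw [Real.mul_rpow hD4.le (by positivity)]
          gcongr
  set q := ((4 * E.natAbs : ℕ) : ℝ)
  have hq : 0 < q := by linarith
  calc _ ≤ c / (l * (C * Q ^ δ)) * q ^ (-ε) := by
        gcongr
        exact min_le_right _ _
    _ = c * q ^ (-(ε / 2)) / (l * (C * (Q ^ δ * q ^ (ε / 2)))) := by
        rw [show -ε = -(ε / 2) - ε / 2 by ring, Real.rpow_sub hq]
        field_simp
    _ ≤ ‖(jacobiChar E).LFunction 1‖ := by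
        rw [div_le_iff₀ (by positivity)]
        calc _ ≤ _ := hL
          _ ≤ l * ‖(jacobiChar E).LFunction 1‖ * (C * (Q ^ δ * q ^ (ε / 2))) := by gcongr
          _ = _ := by ring

end SiegelTheorem

section ZeroFreeRegion

open Complex DirichletCharacter Filter

theorem one_le_log_of_four_le {X : ℝ} (hX : 4 ≤ X) : 1 ≤ Real.log X := by
  rw [Real.le_log_iff_exp_le (by linarith)]
  linarith [Real.exp_one_lt_d9]

theorem four_le_div_re_sub_one {q : ℝ} (hq : 1 ≤ q) {s : ℂ} (hs : 1 < s.re) (hs' : s.re ≤ 3 / 2) :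
    4 ≤ q * (‖s‖ + 2) / (s.re - 1) := by
  rw [le_div_iff₀ (by linarith)]
  nlinarith [norm_nonneg s]

theorem exists_mul_sq_le_norm_riemannZeta₁ (σ₀ : ℝ) :
    ∃ c > 0, ∀ s : ℂ, 1 < s.re → s.re ≤ σ₀ → c * (s.re - 1) ^ 2 ≤ ‖riemannZeta₁ s‖ := by
  obtain ⟨c, hc, hlow⟩ := exists_mul_le_norm_LFunction σ₀
  refine ⟨c, hc, fun s hs hs' ↦ ?_⟩
  have hs1 : s ≠ 1 := by
    rintro rfl
    exact lt_irrefl _ hs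
  have h := hlow 1 1 s hs hs'
  rw [LFunction_modOne_eq, riemannZeta_eq_div hs1, norm_div,
    le_div_iff₀ (norm_pos_iff.mpr (sub_ne_zero.mpr hs1))] at h
  have hle : s.re - 1 ≤ ‖s - 1‖ := by simpa using re_le_norm (s - 1)
  have hσ : 0 < s.re - 1 := by linarith
  calc _ = c * (s.re - 1) * (s.re - 1) := by ring
    _ ≤ c * (s.re - 1) * ‖s - 1‖ := mul_le_mul_of_nonneg_left hle (mul_nonneg hc.le hσ.le)
    _ ≤ _ := h

theorem exists_neg_re_logDeriv_riemannZeta_le_add_log : ∃ C > 0, ∀ s : ℂ, 1 < s.re →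
    s.re ≤ 3 / 2 → (-logDeriv riemannZeta s).re ≤
      (1 / (s - 1)).re + C * Real.log ((‖s‖ + 2) / (s.re - 1)) := by
  obtain ⟨C, hC, hup⟩ := exists_norm_riemannZeta₁_le one_half_pos
  obtain ⟨c, hc, hlow⟩ := exists_mul_sq_le_norm_riemannZeta₁ (3 / 2)
  have hB : 1 < 1 + (1 + C) / c := lt_add_of_pos_right _ (by positivity)
  set B := 1 + (1 + C) / c
  refine ⟨16 * (Real.log B + 2), by linarith [Real.log_pos hB], fun s hs hs' ↦ ?_⟩
  have hs1 : s ≠ 1 := by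
    rintro rfl
    exact lt_irrefl _ hs
  have hX : 4 ≤ (‖s‖ + 2) / (s.re - 1) := by
    simpa only [one_mul] using four_le_div_re_sub_one le_rfl hs hs'
  have hlog := one_le_log_of_four_le hX
  have hdisc := neg_le_re_logDeriv (f := riemannZeta₁) (c := s) (R := 1 / 2)
    (M := Real.log B + 2 * Real.log ((‖s‖ + 2) / (s.re - 1))) (by norm_num)
    (by linarith [Real.log_pos hB]) differentiable_riemannZeta₁
    (riemannZeta₁_ne_zero_of_one_le_re hs.le) (fun z hz ↦ ?_) (fun z _ hz ↦ ?_)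
  · rw [logDeriv_riemannZeta hs1 (riemannZeta₁_ne_zero_of_one_le_re hs.le), neg_re, sub_re]
    nlinarith [Real.log_pos hB]
  · have hzre := neg_le_of_abs_le ((abs_re_le_norm _).trans hz)
    rw [sub_re] at hzre
    have hz0 : ‖z‖ ≤ ‖s‖ + 2 := by linarith [norm_le_norm_sub_add z s]
    have hz1 : ‖z - 1‖ ≤ ‖s‖ + 2 := by
      have := norm_sub_le z 1
      rw [norm_one] at this
      linarith [norm_le_norm_sub_add z s]
    have hσ : 0 < s.re - 1 := by linarith
    rw [two_mul, Real.exp_add, Real.exp_add, Real.exp_log (by linarith),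
      Real.exp_log (by linarith)]
    calc ‖riemannZeta₁ z‖ ≤ 1 + C * (‖z - 1‖ * ‖z‖) := hup z (by linarith)
      _ ≤ (‖s‖ + 2) * (‖s‖ + 2) + C * ((‖s‖ + 2) * (‖s‖ + 2)) := by
          gcongr
          nlinarith [norm_nonneg s]
      _ = (1 + C) / c * ((‖s‖ + 2) / (s.re - 1) * ((‖s‖ + 2) / (s.re - 1))) *
          (c * (s.re - 1) ^ 2) := by field_simp
      _ ≤ B * ((‖s‖ + 2) / (s.re - 1) * ((‖s‖ + 2) / (s.re - 1))) * ‖riemannZeta₁ s‖ := by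
          gcongr
          · exact le_add_of_nonneg_left zero_le_one
          · exact hlow s hs hs'
  · by_contra! hcon
    exact riemannZeta₁_ne_zero_of_one_le_re (hs.trans hcon).le hz

theorem exists_neg_re_logDeriv_LFunction_le : ∃ C > 0, ∀ (q : ℕ) [NeZero q]
    (χ : DirichletCharacter ℂ q), χ ≠ 1 → ∀ s : ℂ, 1 < s.re → s.re ≤ 3 / 2 → ∀ ρ : ℝ, 0 < ρ →
      ρ ≤ 1 / 4 → χ.LFunction (s - ρ) = 0 → (-logDeriv χ.LFunction s).re ≤
        -ρ⁻¹ + C * Real.log (q * (‖s‖ + 2) / (s.re - 1)) := by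
  obtain ⟨C, hC, hup⟩ := exists_norm_LFunction_le one_pos le_rfl
  obtain ⟨c, hc, hlow⟩ := exists_mul_le_norm_LFunction (3 / 2)
  have hB : 1 < 1 + C / c := lt_add_of_pos_right _ (by positivity)
  set B := 1 + C / c
  refine ⟨16 * (Real.log B + 1) + 1, by linarith [Real.log_pos hB], ?_⟩
  intro q _ χ hχ s hs hs' ρ hρ hρ' hzero
  have hq : (1 : ℝ) ≤ q := by exact_mod_cast NeZero.one_le
  have hX := four_le_div_re_sub_one hq hs hs'
  have hlog := one_le_log_of_four_le hX
  have hdisc := inv_sub_le_re_logDeriv (f := χ.LFunction) (c := s) (R := 1 / 2)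
    (M := Real.log B + Real.log (q * (‖s‖ + 2) / (s.re - 1))) (by norm_num)
    (by linarith [Real.log_pos hB]) (differentiable_LFunction hχ)
    (LFunction_ne_zero_of_one_le_re χ (.inl hχ) hs.le) (fun z hz ↦ ?_) (fun z _ hz ↦ ?_) hρ
    (by linarith) hzero
  · rw [neg_re]
    norm_num at hdisc
    linarith [mul_le_mul_of_nonneg_left hlog (Real.log_pos hB).le]
  · have hzre := neg_le_of_abs_le ((abs_re_le_norm _).trans hz)
    rw [sub_re] at hzre
    have hz0 : ‖z‖ ≤ ‖s‖ + 2 := by linarith [norm_le_norm_sub_add z s]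
    have hσ : 0 < s.re - 1 := by linarith
    rw [Real.exp_add, Real.exp_log (by linarith), Real.exp_log (by linarith)]
    calc ‖χ.LFunction z‖ ≤ C * ‖z‖ * (q : ℝ) ^ (1 : ℝ) := hup q χ hχ z (by linarith)
      _ ≤ C * (‖s‖ + 2) * q := by
          rw [Real.rpow_one]
          gcongr
      _ = C / c * (q * (‖s‖ + 2) / (s.re - 1)) * (c * (s.re - 1)) := by field_simp
      _ ≤ B * (q * (‖s‖ + 2) / (s.re - 1)) * ‖χ.LFunction s‖ := by
          gcongr
          · exact le_add_of_nonneg_left zero_le_one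
          · exact hlow q χ s hs hs'
  · by_contra! hcon
    exact LFunction_ne_zero_of_one_le_re χ (.inl hχ) (hs.trans hcon).le hz

theorem log_div_sq_div_le {N Y b ℒ : ℝ} (hN : 0 < N) (hNY : N ≤ 2 * Y) (hY : 2 ≤ Y)
    (hℒ : Real.log Y ≤ ℒ) (hb : 0 < b) (hb2 : b ≤ 1 / 2) :
    Real.log (N / (b ^ 2 / ℒ)) ≤ 6 * (ℒ / b) := by
  have hlog2 : Real.log 2 ≤ ℒ := (Real.log_le_log two_pos hY).trans hℒ
  have hℒ2 : 1 / 2 < ℒ := by linarith [Real.log_two_gt_d9]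
  have hlogN : Real.log N ≤ 2 * ℒ := by
    have := Real.log_le_log hN hNY
    rw [Real.log_mul two_ne_zero (by linarith)] at this
    linarith
  have hlogb : -Real.log b ≤ 1 / b := by
    rw [← Real.log_inv, ← one_div]
    linarith [Real.log_le_sub_one_of_pos (one_div_pos.mpr hb)]
  have hlogℒ : Real.log ℒ ≤ ℒ := by linarith [Real.log_le_sub_one_of_pos (by linarith : 0 < ℒ)]
  have hinv : 2 * ℒ ≤ ℒ / b := by
    rw [le_div_iff₀ hb]
    nlinarith
  have hinv' : 1 / b ≤ 2 * (ℒ / b) := by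
    rw [← mul_div_assoc]
    gcongr
    linarith
  rw [Real.log_div hN.ne' (by positivity), Real.log_div (by positivity) (by linarith),
    Real.log_pow]
  push_cast
  linarith

theorem re_one_div_ofReal_add_mul_I_sub_one_le {σ t : ℝ} (hσ : 1 ≤ σ) (ht : t ≠ 0) :
    (1 / ((σ : ℂ) + t * I - 1)).re ≤ (σ - 1) / t ^ 2 := by
  have hre : ((σ : ℂ) + t * I - 1).re = σ - 1 := by simp
  have him : ((σ : ℂ) + t * I - 1).im = t := by simp
  rw [one_div, inv_re, normSq_apply, hre, him]
  exact div_le_div_of_nonneg_left (by linarith) (by positivity)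
    (by linarith [mul_self_nonneg (σ - 1)])

theorem div_sq_le_div_of_one_le_mul_abs {b ℒ t : ℝ} (hb : 0 < b) (hb1 : b ≤ 1) (hℒ : 0 < ℒ)
    (ht : 1 ≤ ℒ * |t|) : b ^ 2 / ℒ / (2 * t) ^ 2 ≤ ℒ / b := by
  have htsq : 1 / ℒ ^ 2 ≤ t ^ 2 := by
    rw [div_le_iff₀ (by positivity), ← sq_abs t, ← mul_pow, mul_comm]
    exact one_le_pow₀ ht
  calc b ^ 2 / ℒ / (2 * t) ^ 2 ≤ b ^ 2 / ℒ / (1 / ℒ ^ 2) := by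
        gcongr
        nlinarith [sq_nonneg t]
    _ = ℒ * b ^ 2 := by field_simp
    _ ≤ ℒ * b⁻¹ := by
        gcongr
        exact (pow_le_one₀ hb.le hb1).trans ((one_le_inv₀ hb).mpr hb1)
    _ = ℒ / b := (div_eq_mul_inv _ _).symm

theorem norm_ofReal_add_ofReal_mul_I_le {σ t : ℝ} (hσ : 0 ≤ σ) : ‖(σ : ℂ) + t * I‖ ≤ σ + |t| := by
  refine (norm_add_le _ _).trans_eq ?_
  rw [norm_mul, norm_I, mul_one, norm_real, norm_real, Real.norm_of_nonneg hσ, Real.norm_eq_abs]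

theorem exists_four_mul_inv_le_of_LFunction_eq_zero : ∃ K > 0, ∀ (q : ℕ) [NeZero q]
    (χ : DirichletCharacter ℂ q), χ.IsQuadratic → χ ≠ 1 → ∀ ρ t ℒ b : ℝ,
      Real.log (q * (|t| + 2)) ≤ ℒ → 1 ≤ ℒ * |t| → 0 < b → b ≤ 1 / 2 → 0 < ρ → ρ ≤ 1 / 4 →
      χ.LFunction ((1 + b ^ 2 / ℒ : ℝ) + t * I - ρ) = 0 →
        4 * ρ⁻¹ ≤ 3 * (ℒ / b ^ 2) + K * (ℒ / b) := by
  obtain ⟨C₀, hC₀, hpole⟩ := exists_neg_re_logDeriv_riemannZeta_le (3 / 2)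
  obtain ⟨C₁, hC₁, hLχ⟩ := exists_neg_re_logDeriv_LFunction_le
  obtain ⟨C₂, hC₂, hζ⟩ := exists_neg_re_logDeriv_riemannZeta_le_add_log
  refine ⟨3 * C₀ + 24 * C₁ + 6 * C₂ + 1, by positivity, ?_⟩
  intro q _ χ hquad hχ ρ t ℒ b hℒ ht hb hb2 hρ hρ' hzero
  have hq : (1 : ℝ) ≤ q := by exact_mod_cast NeZero.one_le
  have hqt : |t| + 2 ≤ q * (|t| + 2) := le_mul_of_one_le_left (by positivity) hq
  have hY : 2 ≤ q * (|t| + 2) := by linarith [abs_nonneg t]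
  have hℒ2 : 1 / 2 < ℒ := by
    linarith [Real.log_two_gt_d9, (Real.log_le_log two_pos hY).trans hℒ]
  have hδ : b ^ 2 / ℒ ≤ 1 / 2 := by
    rw [div_le_iff₀ (by linarith)]
    nlinarith
  have hδ0 : 0 < b ^ 2 / ℒ := div_pos (by positivity) (by linarith)
  have hb1 : 1 ≤ ℒ / b := by
    rw [le_div_iff₀ hb]
    linarith
  have hre (u : ℝ) : (((1 + b ^ 2 / ℒ : ℝ) : ℂ) + u * I).re = 1 + b ^ 2 / ℒ := by
    rw [add_re, re_ofReal_mul, I_re, ofReal_re, mul_zero, add_zero]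
  have habs : |2 * t| = 2 * |t| := by rw [abs_mul, abs_two]
  have hnorm (u : ℝ) := norm_ofReal_add_ofReal_mul_I_le (σ := 1 + b ^ 2 / ℒ) (t := u) (by linarith)
  have h341 := three_four_one_logDeriv_nonneg hquad (by linarith : 1 < 1 + b ^ 2 / ℒ) t
  have h₀ := hpole (1 + b ^ 2 / ℒ) (by linarith) (by linarith)
  have h₁ := hLχ q χ hχ ((1 + b ^ 2 / ℒ : ℝ) + t * I) (by rw [hre]; linarith)
    (by rw [hre]; linarith) ρ hρ hρ' hzero
  have h₂ := hζ ((1 + b ^ 2 / ℒ : ℝ) + (2 * t : ℝ) * I) (by rw [hre]; linarith)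
    (by rw [hre]; linarith)
  have hlog₁ := log_div_sq_div_le (N := q * (‖((1 + b ^ 2 / ℒ : ℝ) : ℂ) + t * I‖ + 2))
    (by positivity) (by nlinarith [hnorm t, abs_nonneg t]) hY hℒ hb hb2
  have hlog₂ := log_div_sq_div_le (N := ‖((1 + b ^ 2 / ℒ : ℝ) : ℂ) + (2 * t : ℝ) * I‖ + 2)
    (by positivity) (by linarith [hnorm (2 * t), habs]) hY hℒ hb hb2
  have ht0 : 2 * t ≠ 0 := mul_ne_zero two_ne_zero fun h ↦ by norm_num [h] at ht
  have hinv := re_one_div_ofReal_add_mul_I_sub_one_le (σ := 1 + b ^ 2 / ℒ) (by linarith) ht0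
  rw [add_sub_cancel_left] at hinv
  have hinv' := div_sq_le_div_of_one_le_mul_abs hb (by linarith) (by linarith) ht
  rw [hre, add_sub_cancel_left] at h₁ h₂
  rw [add_sub_cancel_left, one_div_div] at h₀
  linarith [mul_le_mul_of_nonneg_left hlog₁ hC₁.le, mul_le_mul_of_nonneg_left hlog₂ hC₂.le,
    mul_le_mul_of_nonneg_left hb1 hC₀.le]

/- The pole of `ζ` in the `3`-`4`-`1` inequality is harmless as long as `|t|` is at least `1 / ℒ`.
Keeping `ℒ` free allows a weak bound `ℒ` to be traded for a smaller excluded interval. -/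
theorem exists_LFunction_ne_zero_of_one_le_mul_abs : ∃ c > 0, ∀ (q : ℕ) [NeZero q]
    (χ : DirichletCharacter ℂ q), χ.IsQuadratic → χ ≠ 1 → ∀ β t ℒ : ℝ,
      Real.log (q * (|t| + 2)) ≤ ℒ → 1 ≤ ℒ * |t| → 1 - c / ℒ ≤ β →
        χ.LFunction (β + t * I) ≠ 0 := by
  obtain ⟨K, hK, hrepel⟩ := exists_four_mul_inv_le_of_LFunction_eq_zero
  obtain ⟨b, hb, hb4, hbK⟩ : ∃ b > 0, b ≤ 1 / 4 ∧ K * b ≤ 1 / 4 :=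
    ⟨min (1 / 4) (1 / (4 * K)), by positivity, min_le_left _ _, by
      refine (mul_le_mul_of_nonneg_left (min_le_right _ _) hK.le).trans_eq ?_
      field_simp⟩
  refine ⟨b ^ 2 / 8, by positivity, ?_⟩
  intro q _ χ hquad hχ β t ℒ hℒ ht hβ hzero
  have hq : (1 : ℝ) ≤ q := by exact_mod_cast NeZero.one_le
  have hY : 2 ≤ q * (|t| + 2) := by nlinarith [abs_nonneg t]
  have hℒ2 : 1 / 2 < ℒ := by
    linarith [Real.log_two_gt_d9, (Real.log_le_log two_pos hY).trans hℒ]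
  have hβ1 : β < 1 := by
    by_contra! hcon
    exact LFunction_ne_zero_of_one_le_re χ (.inl hχ) (by simpa using hcon) hzero
  have hδ : b ^ 2 / ℒ ≤ 1 / 8 := by
    rw [div_le_iff₀ (by linarith)]
    nlinarith
  have hδ0 : 0 < b ^ 2 / ℒ := div_pos (by positivity) (by linarith)
  rw [div_right_comm] at hβ
  have hρ : 0 < 1 + b ^ 2 / ℒ - β := by linarith
  have hle := hrepel q χ hquad hχ (1 + b ^ 2 / ℒ - β) t ℒ b hℒ ht hb (by linarith) hρ
    (by linarith) (by
      rw [← hzero]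
      congr 1
      push_cast
      ring)
  have hlow : 8 / 9 * (ℒ / b ^ 2) ≤ (1 + b ^ 2 / ℒ - β)⁻¹ := by
    rw [← one_div, le_div_iff₀ hρ]
    calc _ ≤ 8 / 9 * (ℒ / b ^ 2) * (9 / 8 * (b ^ 2 / ℒ)) :=
          mul_le_mul_of_nonneg_left (by linarith)
            (mul_nonneg (by norm_num) (div_nonneg (by linarith) (by positivity)))
      _ = 1 := by field_simp
  have hsmall : K * (ℒ / b) ≤ 1 / 4 * (ℒ / b ^ 2) := by
    calc K * (ℒ / b) = K * b * (ℒ / b ^ 2) := by field_simp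
      _ ≤ _ := mul_le_mul_of_nonneg_right hbK (div_nonneg (by linarith) (by positivity))
  have hpos : 0 < ℒ / b ^ 2 := div_pos (by linarith) (by positivity)
  linarith

theorem exists_norm_LFunction_le_of_norm_sub_one_lt {ε : ℝ} (hε : 0 < ε) :
    ∃ δ > 0, ∃ C > 0, ∀ (q : ℕ) [NeZero q] (χ : DirichletCharacter ℂ q), χ ≠ 1 → ∀ z : ℂ,
      ‖z - 1‖ < δ → ‖χ.LFunction z‖ ≤ C * (q : ℝ) ^ ε := by
  obtain ⟨δ, hδ, hδ1, hδε⟩ : ∃ δ > 0, δ ≤ 1 ∧ δ ≤ ε :=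
    ⟨min 1 ε, by positivity, min_le_left _ _, min_le_right _ _⟩
  obtain ⟨C, hC, hup⟩ := exists_norm_LFunction_le hδ hδ1
  refine ⟨δ / 2, by positivity, C * 2, by positivity, fun q _ χ hχ z hz ↦ ?_⟩
  have hq : 1 ≤ (q : ℝ) := by exact_mod_cast NeZero.one_le
  have hre := neg_lt_of_abs_lt ((abs_re_le_norm (z - 1)).trans_lt hz)
  rw [sub_re, one_re] at hre
  have hz2 : ‖z‖ ≤ 2 := by
    have := norm_le_norm_sub_add z 1
    rw [norm_one] at this
    linarith
  refine (hup q χ hχ z (by linarith)).trans ?_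
  gcongr

theorem exists_LFunction_jacobiChar_ne_zero_of_norm_sub_one_lt {ε : ℝ} (hε : 0 < ε) :
    ∃ c > 0, ∀ (E : ℤ) [NeZero E], Squarefree E → E ≠ 1 → ∀ s : ℂ,
      ‖s - 1‖ < c * ((4 * E.natAbs : ℕ) : ℝ) ^ (-ε) → (jacobiChar E).LFunction s ≠ 0 := by
  obtain ⟨c, hc, hone⟩ := exists_le_norm_LFunction_jacobiChar_one (half_pos hε)
  obtain ⟨δ, hδ, C, hC, hup⟩ := exists_norm_LFunction_le_of_norm_sub_one_lt (half_pos hε)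
  refine ⟨min (c * δ / (2 * C)) δ, by positivity, fun E _ hE hE1 s hs hzero ↦ ?_⟩
  have hq : 1 ≤ ((4 * E.natAbs : ℕ) : ℝ) := by exact_mod_cast NeZero.one_le
  have hL := hone E hE hE1
  have hbound := hup _ _ (jacobiChar_ne_one hE hE1)
  generalize ((4 * E.natAbs : ℕ) : ℝ) = q at *
  have hq0 : 0 < q := by linarith
  have hs_mem : s ∈ Metric.ball (1 : ℂ) δ := by
    rw [mem_ball_iff_norm]
    exact hs.trans_le ((mul_le_of_le_one_right (by positivity)
      (Real.rpow_le_one_of_one_le_of_nonpos hq (by linarith))).trans (min_le_right _ _))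
  have hdist := dist_le_div_mul_dist_of_mapsTo_ball (R₂ := 2 * (C * q ^ (ε / 2)))
    (differentiable_LFunction (jacobiChar_ne_one hE hE1)).differentiableOn
    (fun z hz ↦ by
      rw [Metric.mem_closedBall]
      linarith [dist_le_norm_add_norm ((jacobiChar E).LFunction z) ((jacobiChar E).LFunction 1),
        hbound z (mem_ball_iff_norm.mp hz), hbound 1 (by simpa using hδ)]) hs_mem
  rw [hzero, dist_zero_left, dist_eq_norm] at hdist
  refine (hL.trans hdist).not_gt ?_
  calc 2 * (C * q ^ (ε / 2)) / δ * ‖s - 1‖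
      < 2 * (C * q ^ (ε / 2)) / δ * (c * δ / (2 * C) * q ^ (-ε)) := by
        gcongr
        exact hs.trans_le (by gcongr; exact min_le_left _ _)
    _ = c * (q ^ (ε / 2) * q ^ (-ε)) := by field_simp
    _ = c * q ^ (-(ε / 2)) := by
        rw [← Real.rpow_add hq0]
        ring_nf

theorem eventually_mul_log_add_le (A B : ℝ) : ∀ᶠ l : ℝ in atTop, A * Real.log l + B ≤ l := by
  have := (Real.isLittleO_log_id_atTop.const_mul_left A).add
    (Asymptotics.isLittleO_const_id_atTop B)
  filter_upwards [this.bound one_pos, eventually_ge_atTop 0] with l hl hl0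
  simpa only [id, one_mul, Real.norm_of_nonneg hl0] using (Real.le_norm_self _).trans hl

theorem rpow_neg_half_le_rpow_of_le_rpow {A l q : ℝ} (hl : 1 ≤ l) (hq0 : 0 < q) (hq : q ≤ l ^ A) :
    l ^ (-1 / 2 : ℝ) ≤ q ^ (-(1 / (2 * (|A| + 1)))) :=
  calc l ^ (-1 / 2 : ℝ) = (l ^ (|A| + 1)) ^ (-(1 / (2 * (|A| + 1)))) := by
        rw [← Real.rpow_mul (by linarith)]
        congr 1
        field_simp
    _ ≤ q ^ (-(1 / (2 * (|A| + 1)))) :=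
        Real.rpow_le_rpow_of_nonpos hq0 (hq.trans (Real.rpow_le_rpow_of_exponent_le hl
          (by linarith [le_abs_self A]))) (neg_nonpos.mpr (by positivity))

theorem exists_eventually_LFunction_jacobiChar_ne_zero : ∃ c > 0, ∀ A : ℝ, ∀ᶠ l : ℝ in atTop,
    ∀ (E : ℤ) [NeZero E], Squarefree E → E ≠ 1 → ((4 * E.natAbs : ℕ) : ℝ) ≤ l ^ A →
      ∀ s : ℂ, 1 - c / l ≤ s.re → |s.im| ≤ Real.exp (2 * l) → (jacobiChar E).LFunction s ≠ 0 := by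
  obtain ⟨c, hc, hfree⟩ := exists_LFunction_ne_zero_of_one_le_mul_abs
  refine ⟨c / 3, by positivity, fun A ↦ ?_⟩
  obtain ⟨d, hd, hreal⟩ := exists_LFunction_jacobiChar_ne_zero_of_norm_sub_one_lt
    (ε := 1 / (2 * (|A| + 1))) (by positivity)
  have hsmall : ∀ᶠ l : ℝ in atTop, c / 3 + 1 / 3 < d * l ^ (1 / 2 : ℝ) :=
    ((tendsto_rpow_atTop one_half_pos).const_mul_atTop hd).eventually_gt_atTop _
  filter_upwards [eventually_mul_log_add_le A (Real.log 2), hsmall, eventually_ge_atTop 1]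
    with l hlog hsmall hl E _ hE hE1 hq s hs ht
  have hq1 : 1 ≤ ((4 * E.natAbs : ℕ) : ℝ) := by exact_mod_cast NeZero.one_le
  have hχ := jacobiChar_ne_one hE hE1
  rcases le_or_gt 1 s.re with hs1 | hs1
  · exact LFunction_ne_zero_of_one_le_re _ (.inl hχ) hs1
  rcases le_or_gt 1 (3 * l * |s.im|) with hfar | hnear
  · rw [← re_add_im s]
    refine hfree _ _ (isQuadratic_jacobiChar E) hχ s.re s.im (3 * l) ?_ hfar
      (by rwa [← div_div])
    calc Real.log (((4 * E.natAbs : ℕ) : ℝ) * (|s.im| + 2))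
        ≤ Real.log (l ^ A * (2 * Real.exp (2 * l))) := by
          gcongr
          linarith [Real.add_one_le_exp (2 * l)]
      _ = A * Real.log l + Real.log 2 + 2 * l := by
          rw [Real.log_mul (by positivity) (by positivity), Real.log_rpow (by linarith),
            Real.log_mul two_ne_zero (by positivity), Real.log_exp, add_assoc]
      _ ≤ 3 * l := by linarith
  · refine hreal E hE hE1 s ?_
    have hdist : ‖s - 1‖ ≤ (c / 3 + 1 / 3) / l := by
      refine (norm_le_abs_re_add_abs_im _).trans ?_
      have him : |s.im| ≤ 1 / 3 / l := by
        rw [le_div_iff₀ (by linarith)]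
        linarith
      rw [sub_re, one_re, sub_im, one_im, sub_zero, abs_of_neg (by linarith), add_div]
      linarith
    refine hdist.trans_lt ?_
    calc (c / 3 + 1 / 3) / l < d * l ^ (1 / 2 : ℝ) / l := by gcongr
      _ = d * l ^ (-1 / 2 : ℝ) := by
          rw [mul_div_assoc, ← Real.rpow_sub_one (by linarith)]
          norm_num
      _ ≤ d * ((4 * E.natAbs : ℕ) : ℝ) ^ (-(1 / (2 * (|A| + 1)))) := by
          gcongr
          exact rpow_neg_half_le_rpow_of_le_rpow hl (by linarith) hq

end ZeroFreeRegion

section LogDerivative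

open Complex DirichletCharacter Filter Metric

theorem exists_norm_logDeriv_LFunction_le : ∃ C > 0, ∀ (q : ℕ) [NeZero q]
    (χ : DirichletCharacter ℂ q), χ ≠ 1 → ∀ (s : ℂ) (η M : ℝ), 0 < η → η ≤ 1 / 4 → 0 < M →
      (∀ z : ℂ, 1 - η < z.re → |z.im - s.im| < 2 * η → χ.LFunction z ≠ 0) →
      C * (q * (|s.im| + 2)) ≤ η * Real.exp M → 1 - η / 2 ≤ s.re → s.re ≤ 1 + η / 2 →
        ‖logDeriv χ.LFunction s‖ ≤ 56 * M / η := by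
  obtain ⟨b, hb, hlow⟩ := exists_mul_le_norm_LFunction 2
  obtain ⟨C, hC, hup⟩ := exists_norm_LFunction_le one_pos le_rfl
  refine ⟨C / b, by positivity, fun q _ χ hχ s η M hη hη4 hM hfree hgrow hs hs' ↦ ?_⟩
  set z₀ : ℂ := (1 + η : ℝ) + s.im * I with hz₀
  have hre₀ : z₀.re = 1 + η := by
    rw [hz₀, add_re, re_ofReal_mul, I_re, mul_zero, add_zero, ofReal_re]
  have him₀ : z₀.im = s.im := by rw [hz₀, add_im, im_ofReal_mul, I_im, mul_one, ofReal_im, zero_add]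
  have hnorm₀ : ‖z₀‖ ≤ 1 + η + |s.im| := norm_ofReal_add_ofReal_mul_I_le (by linarith)
  have hball (z : ℂ) (hz : z ∈ ball z₀ (2 * η)) :
      1 - η < z.re ∧ |z.im - s.im| < 2 * η ∧ ‖z‖ ≤ |s.im| + 2 := by
    rw [mem_ball_iff_norm] at hz
    have hre := (abs_lt.mp ((abs_re_le_norm _).trans_lt hz)).1
    have him := (abs_im_le_norm _).trans_lt hz
    rw [sub_re, hre₀] at hre
    rw [sub_im, him₀] at him
    exact ⟨by linarith, him, by linarith [norm_le_norm_sub_add z z₀]⟩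
  have hgrowth (z : ℂ) (hz : z ∈ ball z₀ (2 * η)) :
      ‖χ.LFunction z‖ ≤ Real.exp M * ‖χ.LFunction z₀‖ := by
    have hlow₀ := hlow q χ z₀ (by linarith) (by linarith)
    have hup_z := hup q χ hχ z (by linarith [(hball z hz).1])
    rw [hre₀, add_sub_cancel_left] at hlow₀
    rw [Real.rpow_one] at hup_z
    calc ‖χ.LFunction z‖ ≤ C * (|s.im| + 2) * q :=
          hup_z.trans (by gcongr; exact (hball z hz).2.2)
      _ = b * (C / b * (q * (|s.im| + 2))) := by field_simp
      _ ≤ b * (η * Real.exp M) := by gcongr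
      _ = Real.exp M * (b * η) := by ring
      _ ≤ _ := by gcongr
  have hsz₀ : ‖s - z₀‖ ≤ 3 / 2 * η := by
    refine (norm_le_abs_re_add_abs_im _).trans ?_
    rw [sub_re, sub_im, hre₀, him₀, sub_self, abs_zero, add_zero, abs_le]
    constructor <;> linarith
  calc _ ≤ 4 * M * (2 * η + 3 / 2 * η) / (2 * η - 3 / 2 * η) ^ 2 :=
        norm_logDeriv_le_of_norm_le_exp_mul hM (differentiable_LFunction hχ).differentiableOn
          (fun z hz ↦ hfree z (hball z hz).1 (hball z hz).2.1) hgrowth (by linarith) hsz₀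
    _ = _ := by
        field_simp
        norm_num

theorem eventually_mul_rpow_le_exp (C A : ℝ) : ∀ᶠ l : ℝ in atTop, C * l ^ A ≤ Real.exp l := by
  filter_upwards [((isLittleO_rpow_exp_atTop A).const_mul_left C).bound one_pos] with l hl
  simpa only [one_mul, Real.norm_of_nonneg (Real.exp_nonneg l)] using
    (Real.le_norm_self _).trans hl

theorem exists_eventually_norm_logDeriv_LFunction_jacobiChar_le :
    ∃ c > 0, ∃ K > 0, ∀ A : ℝ, ∀ᶠ l : ℝ in atTop, ∀ (E : ℤ) [NeZero E], Squarefree E → E ≠ 1 →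
      ((4 * E.natAbs : ℕ) : ℝ) ≤ l ^ A → ∀ s : ℂ, 1 - c / l ≤ s.re → s.re ≤ 1 + c / l →
        |s.im| ≤ Real.exp l → (jacobiChar E).LFunction s ≠ 0 ∧
          ‖logDeriv (jacobiChar E).LFunction s‖ ≤ K * l ^ 2 := by
  obtain ⟨c₀, hc₀, hfree⟩ := exists_eventually_LFunction_jacobiChar_ne_zero
  obtain ⟨C, hC, hlog⟩ := exists_norm_logDeriv_LFunction_le
  obtain ⟨a, ha, ha₀, ha4⟩ : ∃ a > 0, a ≤ c₀ ∧ a ≤ 1 / 4 :=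
    ⟨min c₀ (1 / 4), by positivity, min_le_left _ _, min_le_right _ _⟩
  refine ⟨a / 2, by positivity, 168 / a, by positivity, fun A ↦ ?_⟩
  filter_upwards [hfree A, eventually_ge_atTop 1,
    eventually_mul_rpow_le_exp (C / a) (A + 1)] with l hfree hl hexp
  intro E _ hE hE1 hq s hs hs' ht
  have hal : a / l ≤ a := div_le_self ha.le hl
  have hac : a / l ≤ c₀ / l := by gcongr
  rw [div_right_comm] at hs hs'
  have hexp2 : Real.exp l + 2 ≤ Real.exp (2 * l) := by
    rw [two_mul, Real.exp_add]
    nlinarith [Real.add_one_le_exp l]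
  refine ⟨hfree E hE hE1 hq s (by linarith [div_pos ha (one_pos.trans_le hl)]) (by linarith), ?_⟩
  refine (hlog _ _ (jacobiChar_ne_one hE hE1) s (a / l) (3 * l) (by positivity) (by linarith)
    (by positivity) (fun z hre him ↦ hfree E hE hE1 hq z (by linarith)
      (by linarith [abs_sub_abs_le_abs_sub z.im s.im])) ?_ hs hs').trans_eq ?_
  · calc C * (((4 * E.natAbs : ℕ) : ℝ) * (|s.im| + 2)) ≤ C * (l ^ A * Real.exp (2 * l)) := by
          gcongr
          linarith
      _ = a / l * (C / a * l ^ (A + 1) * Real.exp (2 * l)) := by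
          rw [Real.rpow_add_one (by linarith)]
          field_simp
      _ ≤ a / l * (Real.exp l * Real.exp (2 * l)) := by gcongr
      _ = a / l * Real.exp (3 * l) := by
          rw [← Real.exp_add]
          ring_nf
  · field_simp
    norm_num

end LogDerivative

section Perron

open Complex Filter MeasureTheory Set

/-- The kernel `1 / (s (s + 1))` of the smoothed Perron formula, which attaches the weight
`max (1 - n / u) 0` to the `n`-th term of a Dirichlet series. -/
noncomputable def perronKernel (s : ℂ) : ℂ := 1 / (s * (s + 1))

theorem differentiableAt_perronKernel {s : ℂ} (hs : 0 < s.re) :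
    DifferentiableAt ℂ perronKernel s := by
  have hs0 : s ≠ 0 := ne_zero_of_re_pos hs
  have hs1 : s + 1 ≠ 0 := ne_zero_of_re_pos (by rw [add_re, one_re]; linarith)
  unfold perronKernel
  fun_prop (disch := exact mul_ne_zero hs0 hs1)

theorem hasMellin_max_one_sub {s : ℂ} (hs : 0 < s.re) :
    HasMellin (fun x : ℝ ↦ ((max (1 - x) 0 : ℝ) : ℂ)) s (perronKernel s) := by
  have hone := hasMellin_one_Ioc hs
  have hid := hasMellin_cpow_Ioc (s := s) 1 (by simpa using hs.trans (lt_add_one s.re))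
  have hsub := hasMellin_sub hone.1 hid.1
  have hval : 1 / s - 1 / (s + 1) = perronKernel s := by
    have hs0 : s ≠ 0 := ne_zero_of_re_pos hs
    have hs1 : s + 1 ≠ 0 := ne_zero_of_re_pos (by rw [add_re, one_re]; linarith)
    rw [perronKernel, div_sub_div _ _ hs0 hs1]
    ring
  rw [hone.2, hid.2, hval] at hsub
  have heq : EqOn (fun x : ℝ ↦ (x : ℂ) ^ (s - 1) • ((Ioc 0 1).indicator (fun _ : ℝ ↦ (1 : ℂ)) x -
      (Ioc 0 1).indicator (fun t : ℝ ↦ (t : ℂ) ^ (1 : ℂ)) x))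
      (fun x : ℝ ↦ (x : ℂ) ^ (s - 1) • ((max (1 - x) 0 : ℝ) : ℂ)) (Ioi 0) := by
    intro x hx
    rcases le_or_gt x 1 with hx1 | hx1
    · have hmem : x ∈ Ioc (0 : ℝ) 1 := ⟨hx, hx1⟩
      simp [hmem, hx1]
    · simp [hx1, hx1.le]
  exact ⟨hsub.1.congr_fun heq measurableSet_Ioi,
    (setIntegral_congr_fun measurableSet_Ioi heq).symm.trans hsub.2⟩

theorem norm_perronKernel_le {σ : ℝ} (hσ : 0 ≤ σ) (t : ℝ) :
    ‖perronKernel (σ + t * I)‖ ≤ 1 / (σ ^ 2 + t ^ 2) := by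
  have hadd : (σ + t * I : ℂ) + 1 = (σ + 1 : ℝ) + t * I := by
    push_cast
    ring
  rw [perronKernel, hadd, norm_div, norm_one, norm_mul, norm_add_mul_I, norm_add_mul_I]
  rcases (by positivity : 0 ≤ σ ^ 2 + t ^ 2).eq_or_lt with hzero | hpos
  · simp [← hzero]
  refine one_div_le_one_div_of_le hpos ?_
  calc σ ^ 2 + t ^ 2 = √(σ ^ 2 + t ^ 2) * √(σ ^ 2 + t ^ 2) := (Real.mul_self_sqrt hpos.le).symm
    _ ≤ √(σ ^ 2 + t ^ 2) * √((σ + 1) ^ 2 + t ^ 2) := by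
        gcongr
        linarith

theorem norm_perronKernel_le_mul_inv_one_add_sq {σ : ℝ} (hσ : 0 < σ) (t : ℝ) :
    ‖perronKernel (σ + t * I)‖ ≤ (1 + (σ ^ 2)⁻¹) * (1 + t ^ 2)⁻¹ := by
  refine (norm_perronKernel_le hσ.le t).trans ?_
  rw [← div_eq_mul_inv, div_le_div_iff₀ (by positivity) (by positivity)]
  have hcancel : (σ ^ 2)⁻¹ * σ ^ 2 = 1 := inv_mul_cancel₀ (by positivity)
  nlinarith [sq_nonneg σ, mul_nonneg (inv_nonneg.mpr (sq_nonneg σ)) (sq_nonneg t)]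

theorem continuous_perronKernel_vertical {σ : ℝ} (hσ : 0 < σ) :
    Continuous fun t : ℝ ↦ perronKernel (σ + t * I) :=
  continuous_iff_continuousAt.mpr fun t ↦
    ContinuousAt.comp (f := fun t : ℝ ↦ (σ + t * I : ℂ)) (g := perronKernel)
      (differentiableAt_perronKernel (by simpa using hσ)).continuousAt (by fun_prop)

theorem integrable_perronKernel {σ : ℝ} (hσ : 0 < σ) :
    Integrable fun t : ℝ ↦ perronKernel (σ + t * I) :=
  (integrable_inv_one_add_sq.const_mul _).mono'
    (continuous_perronKernel_vertical hσ).aestronglyMeasurable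
    (.of_forall (norm_perronKernel_le_mul_inv_one_add_sq hσ))

theorem integral_cpow_neg_mul_perronKernel {σ : ℝ} (hσ : 0 < σ) {y : ℝ} (hy : 0 < y) :
    ∫ t : ℝ, (y : ℂ) ^ (-(σ + t * I)) * perronKernel (σ + t * I) =
      2 * Real.pi * (max (1 - y) 0 : ℝ) := by
  have hmellin (t : ℝ) := hasMellin_max_one_sub (s := σ + t * I) (by simpa using hσ)
  have hinv := mellinInv_mellin_eq σ (fun x : ℝ ↦ ((max (1 - x) 0 : ℝ) : ℂ)) hy
    (hasMellin_max_one_sub (by simpa using hσ)).1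
    (by simpa only [VerticalIntegrable, (hmellin _).2] using integrable_perronKernel hσ)
    (by fun_prop)
  simp_rw [mellinInv, (hmellin _).2, smul_eq_mul, real_smul] at hinv
  have hpi : 2 * (Real.pi : ℂ) * ((1 / (2 * Real.pi) : ℝ) : ℂ) = 1 := by
    rw [← ofReal_ofNat, ← ofReal_mul, ← ofReal_mul, mul_one_div_cancel (by positivity), ofReal_one]
  rw [← hinv, ← mul_assoc, hpi, one_mul]

theorem continuous_LSeries_term_vertical (f : ℕ → ℂ) (σ : ℝ) (n : ℕ) :
    Continuous fun t : ℝ ↦ LSeries.term f (σ + t * I) n := by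
  rcases eq_or_ne n 0 with rfl | hn
  · simpa only [LSeries.term_zero] using continuous_const
  have hn0 : (n : ℂ) ≠ 0 := Nat.cast_ne_zero.mpr hn
  simp only [LSeries.term_of_ne_zero hn]
  exact continuous_const.div (.const_cpow (by fun_prop) (.inl hn0))
    fun t ↦ by simp [cpow_eq_zero_iff, hn0]

theorem norm_LSeries_term_vertical (f : ℕ → ℂ) (σ t : ℝ) (n : ℕ) :
    ‖LSeries.term f (σ + t * I) n‖ = ‖LSeries.term f σ n‖ := by
  simp [LSeries.norm_term_eq]

theorem integrable_cpow_mul_perronKernel {σ u : ℝ} (hσ : 0 < σ) (hu : 0 < u) :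
    Integrable fun t : ℝ ↦ (u : ℂ) ^ (σ + t * I) * perronKernel (σ + t * I) := by
  refine (integrable_perronKernel hσ).bdd_mul (c := u ^ σ) ?_ (.of_forall fun t ↦ ?_)
  · exact (Continuous.const_cpow (by fun_prop)
      (.inl (ofReal_ne_zero.mpr hu.ne'))).aestronglyMeasurable
  · rw [norm_cpow_eq_rpow_re_of_pos hu]
    simp

theorem integral_LSeries_term_mul_perronKernel (f : ℕ → ℂ) {σ u : ℝ} (hσ : 0 < σ) (hu : 0 < u)
    {n : ℕ} (hn : n ≠ 0) :
    ∫ t : ℝ, LSeries.term f (σ + t * I) n * ((u : ℂ) ^ (σ + t * I) * perronKernel (σ + t * I)) =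
      2 * Real.pi * (f n * (max (1 - n / u) 0 : ℝ)) := by
  have hn0 : (0 : ℝ) < n := by positivity
  have hcpow (s : ℂ) : LSeries.term f s n * ((u : ℂ) ^ s * perronKernel s) =
      f n * (((n / u : ℝ) : ℂ) ^ (-s) * perronKernel s) := by
    rw [LSeries.term_of_ne_zero hn, cpow_neg, ofReal_div,
      div_cpow_ofReal_nonneg hn0.le hu.le, inv_div, ofReal_natCast]
    ring
  simp_rw [hcpow]
  rw [integral_const_mul, integral_cpow_neg_mul_perronKernel hσ (div_pos hn0 hu)]
  ring

theorem two_pi_mul_sum_eq_integral_LSeries {f : ℕ → ℂ} {σ u : ℝ} (hσ : 0 < σ) (hu : 0 < u)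
    (hf : LSeriesSummable f σ) :
    2 * Real.pi * ∑ n ∈ Finset.Ioc 0 ⌊u⌋₊, f n * (1 - n / u : ℝ) =
      ∫ t : ℝ, LSeries f (σ + t * I) * ((u : ℂ) ^ (σ + t * I) * perronKernel (σ + t * I)) := by
  have hnorm (n : ℕ) := fun t : ℝ ↦ norm_LSeries_term_vertical f σ t n
  have hkernel := integrable_cpow_mul_perronKernel hσ hu
  have hint (n : ℕ) := hkernel.bdd_mul (c := ‖LSeries.term f σ n‖)
    (continuous_LSeries_term_vertical f σ n).aestronglyMeasurable
    (.of_forall fun t ↦ (hnorm n t).le)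
  have hsum := hasSum_integral_of_summable_integral_norm hint (by
    simp_rw [norm_mul (LSeries.term _ _ _), hnorm, integral_const_mul]
    exact hf.norm.mul_right _)
  simp_rw [tsum_mul_right] at hsum
  refine Eq.trans ?_ ((hasSum_sum_of_ne_finset_zero (s := Finset.Ioc 0 ⌊u⌋₊) ?_).unique hsum)
  · rw [Finset.mul_sum]
    refine Finset.sum_congr rfl fun n hn ↦ ?_
    obtain ⟨hn0, hnu⟩ := Finset.mem_Ioc.mp hn
    rw [integral_LSeries_term_mul_perronKernel f hσ hu hn0.ne', max_eq_left]
    rw [sub_nonneg, div_le_one hu]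
    exact (Nat.le_floor_iff hu.le).mp hnu
  · intro n hn
    rcases eq_or_ne n 0 with rfl | hn0
    · simp
    have hun : u ≤ n := (Nat.lt_of_floor_lt (by simpa [hn0.pos] using hn)).le
    rw [integral_LSeries_term_mul_perronKernel f hσ hu hn0, max_eq_right]
    · simp
    · rwa [sub_nonpos, one_le_div hu]

end Perron

section ContourShift

open Complex Filter MeasureTheory Set

theorem pi_div_two_sub_arctan_le {T : ℝ} (hT : 0 < T) : Real.pi / 2 - Real.arctan T ≤ 1 / T := by
  rw [← Real.arctan_inv_of_pos hT, one_div]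
  have htan := Real.le_tan (Real.arctan_nonneg.mpr (inv_nonneg.mpr hT.le))
    (Real.arctan_lt_pi_div_two T⁻¹)
  rwa [Real.tan_arctan] at htan

theorem norm_integral_sub_intervalIntegral_le {E : Type*} [NormedAddCommGroup E]
    [NormedSpace ℝ E] {g : ℝ → E} {M T : ℝ} (hT : 0 < T) (hg : Integrable g)
    (hM : ∀ t, ‖g t‖ ≤ M * (1 + t ^ 2)⁻¹) :
    ‖(∫ t, g t) - ∫ t in (-T)..T, g t‖ ≤ 2 * M / T := by
  have hM0 : 0 ≤ M := by simpa using (norm_nonneg _).trans (hM 0)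
  have htail (s : Set ℝ) : ‖∫ t in s, g t‖ ≤ M * ∫ t in s, (1 + t ^ 2)⁻¹ := by
    rw [← integral_const_mul]
    exact norm_integral_le_of_norm_le (integrable_inv_one_add_sq.const_mul M).integrableOn
      (.of_forall hM)
  have hleft : ‖∫ t in Iic (-T), g t‖ ≤ M * (1 / T) := by
    refine (htail _).trans (mul_le_mul_of_nonneg_left ?_ hM0)
    rw [integral_Iic_inv_one_add_sq, Real.arctan_neg]
    linarith [pi_div_two_sub_arctan_le hT]
  have hright : ‖∫ t in Ioi T, g t‖ ≤ M * (1 / T) := by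
    refine (htail _).trans (mul_le_mul_of_nonneg_left ?_ hM0)
    rw [integral_Ioi_inv_one_add_sq]
    exact pi_div_two_sub_arctan_le hT
  rw [← intervalIntegral.integral_Iic_add_Ioi (b := -T) hg.integrableOn hg.integrableOn,
    ← intervalIntegral.integral_interval_add_Ioi (b := T) hg.integrableOn hg.integrableOn]
  calc _ = ‖(∫ t in Iic (-T), g t) + ∫ t in Ioi T, g t‖ := by
        congr 1
        abel
    _ ≤ M * (1 / T) + M * (1 / T) := norm_add_le_of_le hleft hright
    _ = 2 * M / T := by ring

theorem norm_intervalIntegral_le_mul_pi {E : Type*} [NormedAddCommGroup E]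
    [NormedSpace ℝ E] {g : ℝ → E} {M a b : ℝ} (hM : 0 ≤ M) (hab : a ≤ b)
    (hg : ∀ t ∈ Ioc a b, ‖g t‖ ≤ M * (1 + t ^ 2)⁻¹) : ‖∫ t in a..b, g t‖ ≤ M * Real.pi := by
  refine (intervalIntegral.norm_integral_le_of_norm_le hab (.of_forall hg)
    (integrable_inv_one_add_sq.const_mul M).intervalIntegrable).trans ?_
  rw [intervalIntegral.integral_const_mul, integral_inv_one_add_sq]
  gcongr
  linarith [Real.arctan_lt_pi_div_two b, Real.neg_pi_div_two_lt_arctan a]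

theorem norm_vertical_integral_sub_le {E : Type*} [NormedAddCommGroup E] [NormedSpace ℂ E]
    [CompleteSpace E] {G : ℂ → E} {a b T M : ℝ} (hab : a ≤ b) (hT : 0 ≤ T)
    (hG : ∀ s : ℂ, a ≤ s.re → s.re ≤ b → |s.im| ≤ T → DifferentiableAt ℂ G s)
    (hM : ∀ s : ℂ, a ≤ s.re → s.re ≤ b → |s.im| = T → ‖G s‖ ≤ M) :
    ‖(∫ t in (-T)..T, G (b + t * I)) - ∫ t in (-T)..T, G (a + t * I)‖ ≤ 2 * M * (b - a) := by
  have hrect := integral_boundary_rect_eq_zero_of_differentiableOn G (a + (-T : ℝ) * I)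
    (b + T * I) fun s hs ↦ by
      simp only [add_re, ofReal_re, re_ofReal_mul, I_re, mul_zero, add_zero, add_im, ofReal_im,
        im_ofReal_mul, I_im, mul_one, zero_add, uIcc_of_le hab,
        uIcc_of_le (neg_le_self hT), mem_reProdIm] at hs
      exact (hG s hs.1.1 hs.1.2 (abs_le.mpr hs.2)).differentiableWithinAt
  simp only [add_re, ofReal_re, re_ofReal_mul, I_re, mul_zero, add_zero, add_im, ofReal_im,
    im_ofReal_mul, I_im, mul_one, zero_add] at hrect
  have hside (t : ℝ) (ht : |t| = T) : ‖∫ x in a..b, G (x + t * I)‖ ≤ M * (b - a) := by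
    rw [← abs_of_nonneg (sub_nonneg.mpr hab)]
    refine intervalIntegral.norm_integral_le_of_norm_le_const fun x hx ↦ ?_
    rw [uIoc_of_le hab] at hx
    exact hM _ (by simpa using hx.1.le) (by simpa using hx.2) (by simpa using ht)
  rw [← one_mul ‖_ - _‖, ← norm_I, ← norm_smul, smul_sub]
  calc _ = ‖(∫ x in a..b, G (x + T * I)) - ∫ x in a..b, G (x + (-T : ℝ) * I)‖ := by
        congr 1
        rw [← sub_eq_zero, ← hrect]
        abel
    _ ≤ M * (b - a) + M * (b - a) := (norm_sub_le _ _).trans (add_le_add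
        (hside T (abs_of_nonneg hT)) (hside (-T) (by rw [abs_neg, abs_of_nonneg hT])))
    _ = 2 * M * (b - a) := by ring

theorem norm_mul_cpow_mul_perronKernel_le {u B k : ℝ} (hu : 0 < u) {w s : ℂ} (hw : ‖w‖ ≤ B)
    (hk : ‖perronKernel s‖ ≤ k) :
    ‖w * ((u : ℂ) ^ s * perronKernel s)‖ ≤ B * u ^ s.re * k := by
  rw [norm_mul, norm_mul, norm_cpow_eq_rpow_re_of_pos hu, mul_assoc]
  gcongr
  exact (norm_nonneg w).trans hw

theorem norm_integral_mul_perronKernel_le {F : ℂ → ℂ} {a b T B u : ℝ} (ha : 1 / 2 ≤ a)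
    (hab : a ≤ b) (hb : 1 ≤ b) (hba : b - a ≤ 1) (hT : 1 ≤ T) (hB : 0 ≤ B) (hu : 1 ≤ u)
    (hF : ∀ s : ℂ, a ≤ s.re → s.re ≤ b → |s.im| ≤ T → DifferentiableAt ℂ F s ∧ ‖F s‖ ≤ B)
    (hFc : Continuous fun t : ℝ ↦ F (b + t * I)) (hFb : ∀ t : ℝ, ‖F (b + t * I)‖ ≤ B) :
    ‖∫ t : ℝ, F (b + t * I) * ((u : ℂ) ^ (b + t * I) * perronKernel (b + t * I))‖ ≤
      B * (6 * u ^ b / T + 20 * u ^ a) := by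
  have hu0 : 0 < u := by linarith
  have huc : (u : ℂ) ≠ 0 := ofReal_ne_zero.mpr hu0.ne'
  set G : ℂ → ℂ := fun s ↦ F s * ((u : ℂ) ^ s * perronKernel s)
  have hvert {σ t : ℝ} (hσ : 0 < σ) (hFσ : ‖F (σ + t * I)‖ ≤ B) :
      ‖G (σ + t * I)‖ ≤ B * u ^ σ * (1 + (σ ^ 2)⁻¹) * (1 + t ^ 2)⁻¹ := by
    have hre : ((σ : ℂ) + t * I).re = σ := by simp
    have h := norm_mul_cpow_mul_perronKernel_le hu0 hFσ
      (norm_perronKernel_le_mul_inv_one_add_sq hσ t)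
    rw [hre] at h
    exact h.trans_eq (mul_assoc _ _ _).symm
  have htail := norm_integral_sub_intervalIntegral_le (one_pos.trans_le hT)
    ((integrable_cpow_mul_perronKernel (σ := b) (by linarith) hu0).bdd_mul
      hFc.aestronglyMeasurable (.of_forall hFb)) fun t ↦ hvert (by linarith) (hFb t)
  have hshift := norm_vertical_integral_sub_le (G := G) (M := B * u ^ b * (1 / T)) hab
    (by linarith) (fun s hs hs' ht ↦ (hF s hs hs' ht).1.mul ((differentiableAt_id.const_cpow
      (.inl huc)).mul (differentiableAt_perronKernel (by linarith)))) (fun s hs hs' ht ↦ by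
      refine (norm_mul_cpow_mul_perronKernel_le hu0 (hF s hs hs' ht.le).2
        (k := 1 / T) ?_).trans (by gcongr)
      have hker := norm_perronKernel_le (σ := s.re) (by linarith) s.im
      rw [re_add_im] at hker
      refine hker.trans (one_div_le_one_div_of_le (by linarith) ?_)
      rw [← sq_abs s.im, ht]
      nlinarith [sq_nonneg s.re])
  have hleft := norm_intervalIntegral_le_mul_pi (g := fun t : ℝ ↦ G (a + t * I)) (by positivity)
    (neg_le_self (zero_le_one.trans hT)) fun t ht ↦ hvert (by linarith)
      (hF _ (by simp) (by simpa using hab) (by simpa [abs_le] using ⟨ht.1.le, ht.2⟩)).2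
  have hb2 : 1 + (b ^ 2)⁻¹ ≤ 2 := by linarith [inv_le_one_of_one_le₀ (one_le_pow₀ hb (n := 2))]
  have ha5 : 1 + (a ^ 2)⁻¹ ≤ 5 := by
    have := inv_anti₀ (by norm_num) (pow_le_pow_left₀ (by norm_num) ha 2)
    linarith
  have htri := (norm_le_norm_sub_add (∫ t : ℝ, G (b + t * I)) _).trans (add_le_add htail
    ((norm_le_norm_sub_add _ _).trans (add_le_add hshift hleft)))
  calc _ ≤ 2 * (B * u ^ b * (1 + (b ^ 2)⁻¹)) / T + (2 * (B * u ^ b * (1 / T)) * (b - a) +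
        B * u ^ a * (1 + (a ^ 2)⁻¹) * Real.pi) := htri
    _ ≤ 2 * (B * u ^ b * 2) / T + (2 * (B * u ^ b * (1 / T)) * 1 + B * u ^ a * 5 * 4) := by
        gcongr
        exact Real.pi_le_four
    _ = B * (6 * u ^ b / T + 20 * u ^ a) := by ring

end ContourShift

section SmoothedSum

open ArithmeticFunction Complex DirichletCharacter Filter MeasureTheory

theorem norm_logDeriv_LFunction_le_re {q : ℕ} [NeZero q] (χ : DirichletCharacter ℂ q) {s : ℂ}
    (hs : 1 < s.re) : ‖logDeriv χ.LFunction s‖ ≤ (-logDeriv riemannZeta (s.re : ℂ)).re := by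
  rw [← norm_neg, ← (LSeriesHasSum_twist_vonMangoldt χ hs).LSeries_eq]
  refine norm_LSeries_le_re (g := fun n ↦ Λ n) (fun n ↦ ?_)
    (LSeriesHasSum_vonMangoldt (by simpa using hs))
  rw [norm_mul, norm_real, Real.norm_of_nonneg vonMangoldt_nonneg]
  exact mul_le_of_le_one_left vonMangoldt_nonneg (χ.norm_le_one n)

theorem norm_sum_twist_vonMangoldt_mul_one_sub_le {q : ℕ} [NeZero q] {χ : DirichletCharacter ℂ q}
    (hχ : χ ≠ 1) {a b T B u : ℝ} (ha : 1 / 2 ≤ a) (hab : a ≤ b) (hb : 1 < b) (hba : b - a ≤ 1)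
    (hT : 1 ≤ T) (hu : 1 ≤ u) (hζ : (-logDeriv riemannZeta b).re ≤ B)
    (hL : ∀ s : ℂ, a ≤ s.re → s.re ≤ b → |s.im| ≤ T →
      χ.LFunction s ≠ 0 ∧ ‖logDeriv χ.LFunction s‖ ≤ B) :
    ‖∑ n ∈ Finset.Ioc 0 ⌊u⌋₊, χ n * (Λ n : ℂ) * (1 - n / u : ℝ)‖ ≤
      B * (6 * u ^ b / T + 20 * u ^ a) := by
  have hdiff := differentiable_LFunction hχ
  have hlogDeriv {s : ℂ} (hs : χ.LFunction s ≠ 0) : DifferentiableAt ℂ (logDeriv χ.LFunction) s :=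
    (hdiff.contDiff.differentiable_deriv_two s).div (hdiff s) hs
  have hre (t : ℝ) : ((b : ℂ) + t * I).re = b := by simp
  have hline (t : ℝ) : ‖logDeriv χ.LFunction (b + t * I)‖ ≤ B := by
    have h := norm_logDeriv_LFunction_le_re χ (s := b + t * I) (by rwa [hre])
    rw [hre] at h
    exact h.trans hζ
  have hcont : Continuous fun t : ℝ ↦ logDeriv χ.LFunction (b + t * I) :=
    continuous_iff_continuousAt.mpr fun t ↦ (hlogDeriv (LFunction_ne_zero_of_one_le_re χ (.inl hχ)
      (by rw [hre]; exact hb.le))).continuousAt.comp (by fun_prop)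
  have hperron := two_pi_mul_sum_eq_integral_LSeries (one_pos.trans hb) (one_pos.trans_le hu)
    (LSeriesHasSum_twist_vonMangoldt χ (s := b) (by simpa using hb)).LSeriesSummable
  simp_rw [fun t : ℝ ↦ (LSeriesHasSum_twist_vonMangoldt χ (s := b + t * I)
    (by rwa [hre])).LSeries_eq, neg_mul, integral_neg] at hperron
  have hbound := norm_integral_mul_perronKernel_le ha hab hb.le hba hT
    ((norm_nonneg _).trans (hline 0)) hu
    (fun s hs hs' ht ↦ ⟨hlogDeriv (hL s hs hs' ht).1, (hL s hs hs' ht).2⟩) hcont hline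
  rw [← norm_neg, ← hperron, norm_mul, ← ofReal_ofNat, ← ofReal_mul, norm_real,
    Real.norm_of_nonneg Real.two_pi_pos.le] at hbound
  exact (le_mul_of_one_le_left (norm_nonneg _) (by linarith [Real.pi_gt_three])).trans hbound

theorem rpow_le_two_rpow_mul_exp {x u σ : ℝ} (hu : 0 ≤ u) (hux : u ≤ 2 * Real.exp x)
    (hσ : 0 ≤ σ) : u ^ σ ≤ 2 ^ σ * Real.exp (x * σ) := by
  rw [Real.exp_mul, ← Real.mul_rpow (by positivity) (by positivity)]
  gcongr

theorem rpow_one_add_one_div_sq_le {l u : ℝ} (hl : 1 ≤ l) (hu : 0 ≤ u)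
    (hul : u ≤ 2 * Real.exp (l ^ 2)) : u ^ (1 + 1 / l ^ 2) ≤ 12 * Real.exp (l ^ 2) := by
  have hexp : Real.exp (l ^ 2 * (1 + 1 / l ^ 2)) = Real.exp (l ^ 2) * Real.exp 1 := by
    rw [← Real.exp_add]
    field_simp
  have htwo : (2 : ℝ) ^ (1 + 1 / l ^ 2) ≤ 4 :=
    calc (2 : ℝ) ^ (1 + 1 / l ^ 2) ≤ 2 ^ (2 : ℝ) := by
          gcongr
          · norm_num
          · linarith [div_le_one_of_le₀ (one_le_pow₀ hl (n := 2)) (by positivity)]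
      _ = 4 := by norm_num
  calc u ^ (1 + 1 / l ^ 2) ≤ 2 ^ (1 + 1 / l ^ 2) * Real.exp (l ^ 2 * (1 + 1 / l ^ 2)) :=
        rpow_le_two_rpow_mul_exp hu hul (by positivity)
    _ ≤ 4 * (Real.exp (l ^ 2) * 3) := by
        rw [hexp]
        gcongr
        exact Real.exp_one_lt_three.le
    _ = 12 * Real.exp (l ^ 2) := by ring

theorem rpow_one_sub_div_le {c l u : ℝ} (hc : 0 ≤ c) (hcl : c ≤ l) (hl : 0 < l) (hu : 0 ≤ u)
    (hul : u ≤ 2 * Real.exp (l ^ 2)) :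
    u ^ (1 - c / l) ≤ 2 * (Real.exp (l ^ 2) * Real.exp (-(c * l))) := by
  have hexp : Real.exp (l ^ 2 * (1 - c / l)) = Real.exp (l ^ 2) * Real.exp (-(c * l)) := by
    rw [← Real.exp_add]
    field_simp
    ring_nf
  rw [← hexp]
  refine (rpow_le_two_rpow_mul_exp hu hul (sub_nonneg.mpr ((div_le_one hl).mpr hcl))).trans ?_
  gcongr
  exact Real.rpow_le_self_of_one_le one_le_two (sub_le_self _ (by positivity))

theorem exists_eventually_norm_sum_jacobiChar_mul_one_sub_le :
    ∃ c > 0, ∃ K > 0, ∀ A : ℝ, ∀ᶠ l : ℝ in atTop, ∀ (E : ℤ) [NeZero E], Squarefree E → E ≠ 1 →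
      ((4 * E.natAbs : ℕ) : ℝ) ≤ l ^ A → ∀ u : ℝ, 1 ≤ u → u ≤ 2 * Real.exp (l ^ 2) →
        ‖∑ n ∈ Finset.Ioc 0 ⌊u⌋₊, jacobiChar E n * (Λ n : ℂ) * (1 - n / u : ℝ)‖ ≤
          K * l ^ 2 * Real.exp (l ^ 2) * Real.exp (-(c * l)) := by
  obtain ⟨c₀, hc₀, K, hK, hL⟩ := exists_eventually_norm_logDeriv_LFunction_jacobiChar_le
  obtain ⟨C, hC, hζ⟩ := exists_neg_re_logDeriv_riemannZeta_le 2
  obtain ⟨c, hc, hcc₀, hc2⟩ : ∃ c > 0, c ≤ c₀ ∧ c ≤ 1 / 2 :=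
    ⟨min c₀ (1 / 2), by positivity, min_le_left _ _, min_le_right _ _⟩
  refine ⟨c, hc, 200 * (K + C + 1), by positivity, fun A ↦ ?_⟩
  filter_upwards [hL A, eventually_ge_atTop 2, eventually_ge_atTop (1 / c)] with l hL hl hlc
  intro E _ hE hE1 hq u hu hux
  have hl0 : 0 < l := by linarith
  have hcl : c / l ≤ c₀ / l := by gcongr
  have hcl4 : c / l ≤ 1 / 4 := by
    rw [div_le_iff₀ hl0]
    linarith
  have hlsq : 1 / l ^ 2 ≤ c / l := by
    rw [div_le_div_iff₀ (by positivity) hl0, one_mul, pow_two, ← mul_assoc]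
    exact le_mul_of_one_le_left hl0.le ((div_le_iff₀' hc).mp hlc)
  have hlsq0 : 0 < 1 / l ^ 2 := by positivity
  have h := norm_sum_twist_vonMangoldt_mul_one_sub_le (jacobiChar_ne_one hE hE1)
    (a := 1 - c / l) (b := 1 + 1 / l ^ 2) (T := Real.exp l) (B := (K + C + 1) * l ^ 2)
    (by linarith) (by linarith) (by linarith) (by linarith) (Real.one_le_exp hl0.le) hu
    ((hζ _ (by linarith) (by linarith)).trans (by
      rw [add_sub_cancel_left, one_div_one_div]
      linarith [mul_pos hK (pow_pos hl0 2), le_mul_of_one_le_right hC.le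
        (one_le_pow₀ (one_le_two.trans hl) (n := 2))]))
    fun s hs hs' ht ↦ (hL E hE hE1 hq s (by linarith) (by linarith) ht).imp_right fun h ↦
      h.trans (by gcongr; linarith)
  have hright : 6 * u ^ (1 + 1 / l ^ 2) / Real.exp l ≤
      72 * (Real.exp (l ^ 2) * Real.exp (-(c * l))) :=
    calc _ ≤ 6 * (12 * Real.exp (l ^ 2)) / Real.exp l := by
          gcongr
          exact rpow_one_add_one_div_sq_le (by linarith) (by linarith) hux
      _ = 72 * (Real.exp (l ^ 2) * Real.exp (-l)) := by
          rw [Real.exp_neg]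
          ring
      _ ≤ _ := by
          gcongr
          nlinarith
  have hleft := rpow_one_sub_div_le hc.le (by linarith) hl0 (zero_le_one.trans hu) hux
  calc _ ≤ _ := h
    _ ≤ (K + C + 1) * l ^ 2 * (200 * (Real.exp (l ^ 2) * Real.exp (-(c * l)))) := by
        gcongr
        linarith [mul_pos (Real.exp_pos (l ^ 2)) (Real.exp_pos (-(c * l)))]
    _ = _ := by ring

end SmoothedSum

section PartialSummation

open ArithmeticFunction Complex Finset Nat

theorem norm_sum_range_smul_le_of_antitone {E : Type*} [NormedAddCommGroup E] [NormedSpace ℝ E]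
    {f : ℕ → ℝ} (hf : Antitone f) (hf0 : ∀ n, 0 ≤ f n) {g : ℕ → E} {T : ℝ} {n : ℕ}
    (hg : ∀ m ≤ n, ‖∑ i ∈ range m, g i‖ ≤ T) : ‖∑ i ∈ range n, f i • g i‖ ≤ f 0 * T := by
  rw [sum_range_by_parts]
  calc _ ≤ f (n - 1) * T + ∑ i ∈ range (n - 1), (f i - f (i + 1)) * T := by
        refine norm_sub_le_of_le ?_ (norm_sum_le_of_le _ fun i hi ↦ ?_)
        · rw [norm_smul, Real.norm_of_nonneg (hf0 _)]
          exact mul_le_mul_of_nonneg_left (hg n le_rfl) (hf0 _)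
        · rw [norm_smul, norm_sub_rev, Real.norm_of_nonneg (sub_nonneg.mpr (hf i.le_succ))]
          have := mem_range.mp hi
          exact mul_le_mul_of_nonneg_left (hg _ (by lia)) (sub_nonneg.mpr (hf i.le_succ))
    _ = f 0 * T := by
        rw [← sum_mul, sum_range_sub']
        ring

theorem norm_sum_primesLE_le {f : ℕ → ℂ} {T : ℝ} {N : ℕ}
    (hf : ∀ m ≤ N, ‖∑ p ∈ primesLE m, f p * (Real.log p : ℂ)‖ ≤ T) :
    ‖∑ p ∈ primesLE N, f p‖ ≤ 2 * T := by
  have hlog {n : ℕ} : 0 < Real.log (max n 2 : ℕ) := Real.log_pos (by simp)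
  have hweight : Antitone fun n : ℕ ↦ (Real.log (max n 2 : ℕ))⁻¹ := fun m n hmn ↦
    inv_anti₀ hlog (Real.log_le_log (by positivity) (by gcongr))
  have hT : 0 ≤ T := by simpa using hf 0 N.zero_le
  have h := norm_sum_range_smul_le_of_antitone hweight (fun n ↦ (inv_pos.mpr hlog).le)
    (g := fun n ↦ if n.Prime then f n * (Real.log n : ℂ) else 0) (T := T) (n := N + 1)
    fun m hm ↦ by
      rcases m with _ | m
      · simpa using hT
      · rw [← sum_filter, ← primesLE_eq_filter_range]
        exact hf m (by lia)
  simp_rw [smul_ite, smul_zero] at h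
  rw [← sum_filter, ← primesLE_eq_filter_range, sum_congr rfl (g := f) fun p hp ↦ ?_] at h
  · refine h.trans (mul_le_mul_of_nonneg_right ?_ hT)
    rw [inv_le_comm₀ hlog two_pos]
    norm_num
    linarith [Real.log_two_gt_d9]
  · have hp2 := two_le_of_mem_primesLE hp
    rw [max_eq_left hp2, real_smul, ofReal_inv, mul_left_comm, inv_mul_cancel₀, mul_one]
    exact ofReal_ne_zero.mpr (Real.log_pos (mod_cast hp2)).ne'

theorem norm_sum_vonMangoldt_sub_sum_primesLE_le {f : ℕ → ℂ} (hf : ∀ n, ‖f n‖ ≤ 1) {N : ℕ}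
    (hN : 1 ≤ N) :
    ‖∑ n ∈ Ioc 0 N, f n * (Λ n : ℂ) - ∑ p ∈ primesLE N, f p * (Real.log p : ℂ)‖ ≤
      2 * √N * Real.log N := by
  refine le_trans ?_ (Chebyshev.psi_sub_theta_le (mod_cast hN))
  rw [Chebyshev.psi, Chebyshev.theta, floor_natCast, primesLE_eq_filter_Ioc_zero, sum_filter,
    sum_filter, ← sum_sub_distrib, ← sum_sub_distrib]
  refine norm_sum_le_of_le _ fun n _ ↦ ?_
  split_ifs with hp
  · simp [vonMangoldt_apply_prime hp]
  · rw [sub_zero, sub_zero, norm_mul, norm_real, Real.norm_of_nonneg vonMangoldt_nonneg]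
    exact mul_le_of_le_one_left vonMangoldt_nonneg (hf n)

end PartialSummation

section Desmoothing

open Complex Finset

theorem mul_sum_mul_one_sub_div (a : ℕ → ℂ) (s : Finset ℕ) {u : ℝ} (hu : u ≠ 0) :
    (u : ℂ) * ∑ n ∈ s, a n * (1 - n / u : ℝ) = ∑ n ∈ s, a n * (u - n : ℝ) := by
  rw [mul_sum]
  refine sum_congr rfl fun n _ ↦ ?_
  have : (u : ℂ) ≠ 0 := ofReal_ne_zero.mpr hu
  push_cast
  field_simp

theorem norm_sum_Ioc_floor_mul_sub_le {a : ℕ → ℂ} {B u H : ℝ} (hu : 0 ≤ u) (hH : 0 ≤ H)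
    (hB : 0 ≤ B) (ha : ∀ n : ℕ, (n : ℝ) ≤ u + H → ‖a n‖ ≤ B) :
    ‖∑ n ∈ Ioc ⌊u⌋₊ ⌊u + H⌋₊, a n * (u + H - n : ℝ)‖ ≤ (H + 1) * (B * H) := by
  have hcard : ((Ioc ⌊u⌋₊ ⌊u + H⌋₊).card : ℝ) ≤ H + 1 := by
    rw [Nat.card_Ioc, Nat.cast_sub (by gcongr; linarith)]
    linarith [Nat.floor_le (add_nonneg hu hH), Nat.lt_floor_add_one u]
  calc _ ≤ ∑ _n ∈ Ioc ⌊u⌋₊ ⌊u + H⌋₊, B * H := norm_sum_le_of_le _ fun n hn ↦ by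
        have hun : u < n := Nat.lt_of_floor_lt (mem_Ioc.mp hn).1
        have hnH : n ≤ u + H := (Nat.le_floor_iff (by linarith)).mp (mem_Ioc.mp hn).2
        rw [norm_mul, norm_real, Real.norm_of_nonneg (by linarith)]
        gcongr
        · exact ha n hnH
        · linarith
    _ ≤ _ := by
        rw [sum_const, nsmul_eq_mul]
        gcongr

theorem mul_norm_sum_Ioc_floor_le {a : ℕ → ℂ} {B M u H : ℝ} (hu : 0 < u) (hH : 0 ≤ H)
    (hB : 0 ≤ B) (ha : ∀ n : ℕ, (n : ℝ) ≤ u + H → ‖a n‖ ≤ B)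
    (hsum : ∀ v, u ≤ v → v ≤ u + H → ‖∑ n ∈ Ioc 0 ⌊v⌋₊, a n * (1 - n / v : ℝ)‖ ≤ M) :
    H * ‖∑ n ∈ Ioc 0 ⌊u⌋₊, a n‖ ≤ 2 * (u + H) * M + H * ((H + 1) * B) := by
  have hscaled {v : ℝ} (hv : u ≤ v) (hv' : v ≤ u + H) :
      ‖∑ n ∈ Ioc 0 ⌊v⌋₊, a n * (v - n : ℝ)‖ ≤ (u + H) * M := by
    rw [← mul_sum_mul_one_sub_div _ _ (hu.trans_le hv).ne', norm_mul, norm_real,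
      Real.norm_of_nonneg (hu.le.trans hv)]
    exact mul_le_mul hv' (hsum v hv hv') (norm_nonneg _) (by linarith)
  have hdecomp : (H : ℂ) * ∑ n ∈ Ioc 0 ⌊u⌋₊, a n =
      ∑ n ∈ Ioc 0 ⌊u + H⌋₊, a n * (u + H - n : ℝ) - ∑ n ∈ Ioc 0 ⌊u⌋₊, a n * (u - n : ℝ) -
        ∑ n ∈ Ioc ⌊u⌋₊ ⌊u + H⌋₊, a n * (u + H - n : ℝ) := by
    rw [← sum_Ioc_consecutive _ ⌊u⌋₊.zero_le (Nat.floor_mono (le_add_of_nonneg_right hH)),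
      add_sub_right_comm, add_sub_cancel_right, ← sum_sub_distrib, mul_sum]
    refine sum_congr rfl fun n _ ↦ ?_
    push_cast
    ring
  calc H * ‖∑ n ∈ Ioc 0 ⌊u⌋₊, a n‖ = ‖(H : ℂ) * ∑ n ∈ Ioc 0 ⌊u⌋₊, a n‖ := by
        rw [norm_mul, norm_real, Real.norm_of_nonneg hH]
    _ ≤ (u + H) * M + (u + H) * M + (H + 1) * (B * H) := by
        rw [hdecomp]
        exact norm_sub_le_of_le (norm_sub_le_of_le (hscaled (by linarith) le_rfl)
          (hscaled le_rfl (by linarith))) (norm_sum_Ioc_floor_mul_sub_le hu.le hH hB ha)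
    _ = _ := by ring

end Desmoothing

section SiegelWalfisz

open ArithmeticFunction Complex Filter Finset Nat

theorem vonMangoldt_le_two_mul_sq {l : ℝ} (hl : 1 ≤ l) {n : ℕ}
    (hn : n ≤ 2 * Real.exp (l ^ 2)) : Λ n ≤ 2 * l ^ 2 := by
  rcases n.eq_zero_or_pos with rfl | hn0
  · simpa using by positivity
  · calc Λ n ≤ Real.log n := vonMangoldt_le_log
      _ ≤ Real.log (2 * Real.exp (l ^ 2)) := Real.log_le_log (mod_cast hn0) hn
      _ = Real.log 2 + l ^ 2 := by rw [Real.log_mul two_ne_zero (Real.exp_ne_zero _), Real.log_exp]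
      _ ≤ 2 * l ^ 2 := by linarith [Real.log_two_lt_d9, one_le_pow₀ hl (n := 2)]

theorem exists_eventually_norm_sum_jacobiChar_mul_vonMangoldt_le :
    ∃ c > 0, ∃ K > 0, ∀ A : ℝ, ∀ᶠ l : ℝ in atTop, ∀ (E : ℤ) [NeZero E], Squarefree E → E ≠ 1 →
      ((4 * E.natAbs : ℕ) : ℝ) ≤ l ^ A → ∀ N : ℕ, 1 ≤ N → N ≤ Real.exp (l ^ 2) →
        ‖∑ n ∈ Ioc 0 N, jacobiChar E n * (Λ n : ℂ)‖ ≤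
          K * l ^ 2 * (Real.exp (l ^ 2) * Real.exp (-(c * l))) := by
  obtain ⟨c, hc, K, hK, hS⟩ := exists_eventually_norm_sum_jacobiChar_mul_one_sub_le
  refine ⟨c / 2, by positivity, 4 * (K + 1), by positivity, fun A ↦ ?_⟩
  filter_upwards [hS A, eventually_ge_atTop 1, eventually_ge_atTop c] with l hS hl hlc
  intro E _ hE hE1 hq N hN hNl
  set x := Real.exp (l ^ 2)
  set H := x * Real.exp (-(c / 2 * l)) with hH
  have hH1 : 1 ≤ H := by
    rw [hH, ← Real.exp_add]
    exact Real.one_le_exp (by nlinarith)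
  have hHx : H ≤ x :=
    mul_le_of_le_one_right (Real.exp_nonneg _) (Real.exp_le_one_iff.mpr (by nlinarith))
  have hHsq : H * H = x * (x * Real.exp (-(c * l))) := by
    have hexp : Real.exp (-(c * l)) = Real.exp (-(c / 2 * l)) * Real.exp (-(c / 2 * l)) := by
      rw [← Real.exp_add]
      ring_nf
    rw [hH, hexp]
    ring
  have hN' : (1 : ℝ) ≤ N := mod_cast hN
  have h := mul_norm_sum_Ioc_floor_le (B := 2 * l ^ 2) (zero_lt_one.trans_le hN')
    (zero_le_one.trans hH1) (by positivity) (fun n hn ↦ by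
      rw [norm_mul, norm_real, Real.norm_of_nonneg vonMangoldt_nonneg]
      exact (mul_le_of_le_one_left vonMangoldt_nonneg ((jacobiChar E).norm_le_one n)).trans
        (vonMangoldt_le_two_mul_sq hl (by linarith)))
    fun v hv hv' ↦ hS E hE hE1 hq v (hN'.trans hv) (by linarith)
  rw [floor_natCast] at h
  refine le_of_mul_le_mul_left (h.trans ?_) (zero_lt_one.trans_le hH1)
  calc 2 * (N + H) * (K * l ^ 2 * x * Real.exp (-(c * l))) + H * ((H + 1) * (2 * l ^ 2)) ≤
        2 * (x + x) * (K * l ^ 2 * x * Real.exp (-(c * l))) + H * ((H + H) * (2 * l ^ 2)) := by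
        gcongr
    _ = 4 * K * l ^ 2 * (x * (x * Real.exp (-(c * l)))) + 4 * l ^ 2 * (H * H) := by ring
    _ = H * (4 * (K + 1) * l ^ 2 * H) := by
        rw [← hHsq]
        ring

theorem two_mul_sqrt_mul_log_le {c l : ℝ} (hl : 0 ≤ l) (hcl : 2 * c ≤ l) {N : ℕ} (hN : 1 ≤ N)
    (hNl : N ≤ Real.exp (l ^ 2)) :
    2 * √N * Real.log N ≤ 2 * l ^ 2 * (Real.exp (l ^ 2) * Real.exp (-(c * l))) := by
  have hlog : Real.log N ≤ l ^ 2 := by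
    simpa only [Real.log_exp] using Real.log_le_log (by positivity) hNl
  have hsqrt : √N ≤ Real.exp (l ^ 2) * Real.exp (-(c * l)) :=
    calc √N ≤ √(Real.exp (l ^ 2)) := Real.sqrt_le_sqrt hNl
      _ = Real.exp (l ^ 2 / 2) := (Real.exp_half _).symm
      _ ≤ Real.exp (l ^ 2 + -(c * l)) := Real.exp_le_exp.mpr (by nlinarith)
      _ = _ := Real.exp_add _ _
  calc 2 * √N * Real.log N ≤ 2 * (Real.exp (l ^ 2) * Real.exp (-(c * l))) * l ^ 2 := by gcongr
    _ = _ := by ring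

theorem exists_eventually_norm_sum_jacobiChar_mul_log_le :
    ∃ c > 0, ∃ K > 0, ∀ A : ℝ, ∀ᶠ l : ℝ in atTop, ∀ (E : ℤ) [NeZero E], Squarefree E → E ≠ 1 →
      ((4 * E.natAbs : ℕ) : ℝ) ≤ l ^ A → ∀ N : ℕ, N ≤ Real.exp (l ^ 2) →
        ‖∑ p ∈ primesLE N, jacobiChar E p * (Real.log p : ℂ)‖ ≤
          K * l ^ 2 * (Real.exp (l ^ 2) * Real.exp (-(c * l))) := by
  obtain ⟨c, hc, K, hK, hψ⟩ := exists_eventually_norm_sum_jacobiChar_mul_vonMangoldt_le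
  refine ⟨c, hc, K + 2, by positivity, fun A ↦ ?_⟩
  filter_upwards [hψ A, eventually_ge_atTop (2 * c)] with l hψ hcl
  intro E _ hE hE1 hq N hNl
  rcases N.eq_zero_or_pos with rfl | hN
  · simpa using by positivity
  · have hl : 0 ≤ l := by linarith
    linarith [hψ E hE hE1 hq N hN hNl, two_mul_sqrt_mul_log_le hl hcl hN hNl,
      (norm_le_norm_sub_add _ _).trans (add_le_add_left
        ((norm_sub_rev _ _).trans_le (norm_sum_vonMangoldt_sub_sum_primesLE_le
          (fun n ↦ (jacobiChar E).norm_le_one n) hN)) _)]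

theorem exists_eventually_abs_sum_oddJacobiSym_le :
    ∃ c > 0, ∀ A : ℝ, ∀ᶠ l : ℝ in atTop, ∀ E : ℤ, Squarefree E → E ≠ 1 →
      ((4 * E.natAbs : ℕ) : ℝ) ≤ l ^ A →
        |∑ p ∈ primesLE ⌊Real.exp (l ^ 2)⌋₊, (oddJacobiSym E p : ℝ)| ≤
          Real.exp (l ^ 2) * Real.exp (-(c * l)) := by
  obtain ⟨c, hc, K, hK, hθ⟩ := exists_eventually_norm_sum_jacobiChar_mul_log_le
  refine ⟨c / 2, by positivity, fun A ↦ ?_⟩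
  have hlin : Tendsto (fun l : ℝ ↦ c / 2 * l) atTop atTop :=
    tendsto_id.const_mul_atTop (by positivity)
  filter_upwards [hθ A,
    hlin.eventually (eventually_mul_rpow_le_exp (2 * K * (2 / c) ^ 2) 2)] with l hθ hexp
  intro E hE hE1 hq
  have : NeZero E := ⟨hE.ne_zero⟩
  have h := norm_sum_primesLE_le fun m hm ↦
    hθ E hE hE1 hq m ((le_floor_iff (Real.exp_nonneg _)).mp hm)
  simp_rw [jacobiChar_natCast, ← ofReal_intCast, ← ofReal_sum, norm_real, Real.norm_eq_abs] at h
  have hsq : 2 * K * l ^ 2 ≤ Real.exp (c / 2 * l) := by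
    convert! hexp using 1
    rw [Real.rpow_two]
    field_simp
  calc _ ≤ 2 * K * l ^ 2 * (Real.exp (l ^ 2) * Real.exp (-(c * l))) := h.trans_eq (by ring)
    _ ≤ Real.exp (c / 2 * l) * (Real.exp (l ^ 2) * Real.exp (-(c * l))) := by gcongr
    _ = Real.exp (l ^ 2) * Real.exp (-(c / 2 * l)) := by
        rw [mul_left_comm, ← Real.exp_add]
        ring_nf

end SiegelWalfisz

section SignDetection

open Finset

theorem one_add_mul_eq_ite_of_sign {a b : ℤ} (ha : a = 1 ∨ a = -1) (hb : b = 1 ∨ b = -1) :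
    1 + a * b = if b = a then 2 else 0 := by
  rcases ha with rfl | rfl <;> rcases hb with rfl | rfl <;> rfl

variable {ι α : Type*} {s : Finset ι}

theorem prod_one_add_mul_eq_ite {η j : ι → ℤ} (hη : ∀ i ∈ s, η i = 1 ∨ η i = -1)
    (hj : ∀ i ∈ s, j i = 1 ∨ j i = -1) :
    ∏ i ∈ s, (1 + η i * j i) = if ∀ i ∈ s, j i = η i then 2 ^ #s else 0 := by
  rw [prod_congr rfl fun i hi ↦ one_add_mul_eq_ite_of_sign (hη i hi) (hj i hi), prod_ite_zero,
    prod_const]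

theorem prod_one_add_mul_mem_Icc {η j : ι → ℤ} (hη : ∀ i ∈ s, η i = 1 ∨ η i = -1)
    (hj : ∀ i ∈ s, j i = 0 ∨ j i = 1 ∨ j i = -1) :
    ∏ i ∈ s, (1 + η i * j i) ∈ Set.Icc 0 (2 ^ #s) := by
  have hfactor : ∀ i ∈ s, 0 ≤ 1 + η i * j i ∧ 1 + η i * j i ≤ 2 := fun i hi ↦ by
    rcases hη i hi with h | h <;> rcases hj i hi with h' | h' | h' <;> rw [h, h'] <;> norm_num
  exact ⟨prod_nonneg fun i hi ↦ (hfactor i hi).1,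
    (prod_le_prod (fun i hi ↦ (hfactor i hi).1) fun i hi ↦ (hfactor i hi).2).trans_eq
      (prod_const _)⟩

theorem abs_ite_sub_prod_one_add_mul_le {η j : ι → ℤ} (hη : ∀ i ∈ s, η i = 1 ∨ η i = -1)
    (hj : ∀ i ∈ s, j i = 0 ∨ j i = 1 ∨ j i = -1) :
    |(if ∀ i ∈ s, j i = η i then 2 ^ #s else 0) - ∏ i ∈ s, (1 + η i * j i)| ≤
      if ∃ i ∈ s, j i = 0 then 2 ^ #s else 0 := by
  by_cases h0 : ∃ i ∈ s, j i = 0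
  · obtain ⟨hnonneg, hle⟩ := prod_one_add_mul_mem_Icc hη hj
    rw [if_pos h0, abs_le]
    split_ifs <;> constructor <;> linarith
  · push Not at h0
    rw [prod_one_add_mul_eq_ite hη fun i hi ↦ (hj i hi).resolve_left (h0 i hi), sub_self, abs_zero]
    positivity

variable {Q : Finset α} {η : ι → ℤ} {j : ι → α → ℤ}

theorem abs_two_pow_mul_card_filter_sub_sum_prod_le (hη : ∀ i ∈ s, η i = 1 ∨ η i = -1)
    (hj : ∀ i ∈ s, ∀ p ∈ Q, j i p = 0 ∨ j i p = 1 ∨ j i p = -1) :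
    |2 ^ #s * (#{p ∈ Q | ∀ i ∈ s, j i p = η i} : ℤ) - ∑ p ∈ Q, ∏ i ∈ s, (1 + η i * j i p)| ≤
      2 ^ #s * (#{p ∈ Q | ∃ i ∈ s, j i p = 0} : ℤ) := by
  have hcard (P : α → Prop) [DecidablePred P] :
      2 ^ #s * (#{p ∈ Q | P p} : ℤ) = ∑ p ∈ Q, if P p then (2 : ℤ) ^ #s else 0 := by
    rw [← sum_filter, sum_const, nsmul_eq_mul, mul_comm]
  rw [hcard, hcard, ← sum_sub_distrib]
  exact (abs_sum_le_sum_abs _ _).trans (sum_le_sum fun p hp ↦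
    abs_ite_sub_prod_one_add_mul_le hη fun i hi ↦ hj i hi p hp)

theorem sum_prod_one_add_mul_sub_card :
    ∑ p ∈ Q, ∏ i ∈ s, (1 + η i * j i p) - (#Q : ℤ) =
      ∑ t ∈ s.powerset.erase ∅, (∏ i ∈ t, η i) * ∑ p ∈ Q, ∏ i ∈ t, j i p := by
  simp_rw [prod_one_add, prod_mul_distrib]
  rw [sum_comm, ← add_sum_erase _ _ (empty_mem_powerset s)]
  simp only [prod_empty, mul_one, sum_const, nsmul_eq_mul, mul_sum]
  ring

theorem abs_sum_prod_one_add_mul_sub_card_le {B : ℝ} (hB : 0 ≤ B)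
    (hη : ∀ i ∈ s, η i = 1 ∨ η i = -1)
    (hsum : ∀ t ⊆ s, t.Nonempty → |((∑ p ∈ Q, ∏ i ∈ t, j i p : ℤ) : ℝ)| ≤ B) :
    |((∑ p ∈ Q, ∏ i ∈ s, (1 + η i * j i p) - (#Q : ℤ) : ℤ) : ℝ)| ≤ 2 ^ #s * B := by
  have hsign {t : Finset ι} (ht : t ⊆ s) : |∏ i ∈ t, η i| = 1 := by
    rw [abs_prod]
    exact prod_eq_one fun i hi ↦ by rcases hη i (ht hi) with h | h <;> rw [h] <;> rfl
  rw [sum_prod_one_add_mul_sub_card, Int.cast_sum]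
  calc _ ≤ ∑ _t ∈ s.powerset.erase ∅, B := by
        refine (abs_sum_le_sum_abs _ _).trans (sum_le_sum fun t ht ↦ ?_)
        obtain ⟨ht0, hts⟩ := mem_erase.mp ht
        rw [mem_powerset] at hts
        rw [Int.cast_mul, abs_mul, ← Int.cast_abs, hsign hts, Int.cast_one, one_mul]
        exact hsum t hts (nonempty_iff_ne_empty.mpr ht0)
    _ ≤ ∑ _t ∈ s.powerset, B := sum_le_sum_of_subset_of_nonneg (erase_subset _ _) fun _ _ _ ↦ hB
    _ = 2 ^ #s * B := by rw [sum_const, card_powerset, nsmul_eq_mul, Nat.cast_pow, Nat.cast_ofNat]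

theorem abs_card_filter_sub_card_div_two_pow_le {B : ℝ} (hB : 0 ≤ B)
    (hη : ∀ i ∈ s, η i = 1 ∨ η i = -1)
    (hj : ∀ i ∈ s, ∀ p ∈ Q, j i p = 0 ∨ j i p = 1 ∨ j i p = -1)
    (hsum : ∀ t ⊆ s, t.Nonempty → |((∑ p ∈ Q, ∏ i ∈ t, j i p : ℤ) : ℝ)| ≤ B) :
    |(#{p ∈ Q | ∀ i ∈ s, j i p = η i} : ℝ) - #Q / 2 ^ #s| ≤
      #{p ∈ Q | ∃ i ∈ s, j i p = 0} + B := by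
  have hcount : |2 ^ #s * (#{p ∈ Q | ∀ i ∈ s, j i p = η i} : ℝ) -
      (∑ p ∈ Q, ∏ i ∈ s, (1 + η i * j i p) : ℤ)| ≤ 2 ^ #s * #{p ∈ Q | ∃ i ∈ s, j i p = 0} :=
    mod_cast abs_two_pow_mul_card_filter_sub_sum_prod_le hη hj
  have hmain := abs_sum_prod_one_add_mul_sub_card_le hB hη hsum
  rw [Int.cast_sub, Int.cast_natCast] at hmain
  have h2 : (0 : ℝ) < 2 ^ #s := by positivity
  refine le_of_mul_le_mul_left ?_ h2
  calc 2 ^ #s * |(#{p ∈ Q | ∀ i ∈ s, j i p = η i} : ℝ) - #Q / 2 ^ #s| =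
        |2 ^ #s * (#{p ∈ Q | ∀ i ∈ s, j i p = η i} : ℝ) - #Q| := by
        rw [← abs_of_pos h2, ← abs_mul, abs_of_pos h2, mul_sub, mul_div_cancel₀ _ h2.ne']
    _ ≤ 2 ^ #s * #{p ∈ Q | ∃ i ∈ s, j i p = 0} + 2 ^ #s * B :=
        (abs_sub_le _ _ _).trans (add_le_add hcount hmain)
    _ = _ := by ring

end SignDetection

section PrescribedSymbols

open Finset Nat

/-- The generators `-1` and the primes `q ≤ Y`. For odd `n` the Jacobi symbols `(g / n)` at these
`g` determine `n` modulo `4` and all the symbols `(q / n)`. -/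
def signGenerators (Y : ℕ) : Finset ℤ := insert (-1) ((primesLE Y).map castEmbedding)

/-- The value which the conditions `n ≡ a [MOD 4]` and `(q / n) = ε q` prescribe for the Jacobi
symbol `(g / n)` at the generator `g`. -/
def prescribedSign (ε : ℕ → ℤ) (a : ℕ) (g : ℤ) : ℤ :=
  if g = -1 then ZMod.χ₄ a else ε g.natAbs

theorem forall_mem_signGenerators {Y : ℕ} {P : ℤ → Prop} :
    (∀ g ∈ signGenerators Y, P g) ↔ P (-1) ∧ ∀ q ∈ primesLE Y, P q := by
  simp [signGenerators]

theorem neg_one_notMem_map_castEmbedding (s : Finset ℕ) : (-1 : ℤ) ∉ s.map castEmbedding := by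
  simp only [mem_map, castEmbedding_apply, not_exists, not_and]
  omega

theorem card_signGenerators (Y : ℕ) : #(signGenerators Y) = primeCounting Y + 1 := by
  rw [signGenerators, card_insert_of_notMem (neg_one_notMem_map_castEmbedding _), card_map,
    primesLE_card_eq_primeCounting]

theorem eq_neg_one_of_mem_signGenerators_of_isUnit {Y : ℕ} :
    ∀ g ∈ signGenerators Y, IsUnit g → g = -1 :=
  forall_mem_signGenerators.mpr ⟨fun _ ↦ rfl, fun _ hq hunit ↦
    absurd hunit (prime_iff_prime_int.mp (prime_of_mem_primesLE hq)).not_isUnit⟩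

theorem χ₄_eq_one_or_neg_one {a : ℕ} (ha : a = 1 ∨ a = 3) : ZMod.χ₄ a = 1 ∨ ZMod.χ₄ a = -1 := by
  rcases ha with rfl | rfl
  · exact Or.inl rfl
  · exact Or.inr rfl

theorem prescribedSign_eq_one_or_neg_one {ε : ℕ → ℤ} (hε : ∀ q, ε q = 1 ∨ ε q = -1) {a : ℕ}
    (ha : a = 1 ∨ a = 3) (g : ℤ) : prescribedSign ε a g = 1 ∨ prescribedSign ε a g = -1 := by
  unfold prescribedSign
  split_ifs
  · exact χ₄_eq_one_or_neg_one ha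
  · exact hε _

theorem prescribedSign_natCast (ε : ℕ → ℤ) (a q : ℕ) : prescribedSign ε a q = ε q := by
  rw [prescribedSign, if_neg (by omega), Int.natAbs_natCast]

theorem oddJacobiSym_neg_one_eq_χ₄_iff {a : ℕ} (ha : a = 1 ∨ a = 3) (n : ℕ) :
    oddJacobiSym (-1) n = ZMod.χ₄ a ↔ n % 4 = a := by
  by_cases hn : Odd n
  · rw [oddJacobiSym_of_odd _ hn, jacobiSym.at_neg_one hn, ZMod.χ₄_nat_mod_four n]
    rcases odd_mod_four_iff.mp (odd_iff.mp hn) with h | h <;> rcases ha with rfl | rfl <;>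
      rw [h] <;> decide
  · rw [oddJacobiSym, if_neg hn]
    rw [odd_iff] at hn
    rcases ha with rfl | rfl
    · exact iff_of_false (by decide) (by omega)
    · exact iff_of_false (by decide) (by omega)

theorem forall_oddJacobiSym_eq_prescribedSign_iff {a : ℕ} (ha : a = 1 ∨ a = 3) (ε : ℕ → ℤ)
    (Y n : ℕ) :
    (∀ g ∈ signGenerators Y, oddJacobiSym g n = prescribedSign ε a g) ↔
      n % 4 = a ∧ ∀ q ∈ range (Y + 1), q.Prime → jacobiSym q n = ε q := by
  rw [forall_mem_signGenerators, prescribedSign, if_pos rfl, oddJacobiSym_neg_one_eq_χ₄_iff ha]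
  refine and_congr_right fun hn ↦ ?_
  have hodd : Odd n := odd_iff.mpr (by omega)
  simp only [mem_primesLE, mem_range, Nat.lt_succ_iff, and_imp, prescribedSign_natCast,
    oddJacobiSym_of_odd _ hodd]

theorem oddJacobiSym_prod {t : Finset ℤ} (ht : t.Nonempty) (n : ℕ) :
    oddJacobiSym (∏ g ∈ t, g) n = ∏ g ∈ t, oddJacobiSym g n := by
  induction ht using Finset.Nonempty.cons_induction with
  | singleton g => rw [prod_singleton, prod_singleton]
  | cons g t hg _ ih => rw [prod_cons, prod_cons, oddJacobiSym_mul_left, ih]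

theorem prod_natAbs_signGenerators (Y : ℕ) : ∏ g ∈ signGenerators Y, g.natAbs = primorial Y := by
  rw [signGenerators, prod_insert (neg_one_notMem_map_castEmbedding _), prod_map,
    primorial_eq_prod_primesLE]
  simp only [castEmbedding_apply, Int.natAbs_natCast, Int.natAbs_neg, Int.natAbs_one, one_mul]

theorem natAbs_prod_dvd_primorial {Y : ℕ} {t : Finset ℤ} (ht : t ⊆ signGenerators Y) :
    (∏ g ∈ t, g).natAbs ∣ primorial Y := by
  rw [← Int.natAbsHom_apply, map_prod, ← prod_natAbs_signGenerators]
  exact prod_dvd_prod_of_subset _ _ _ ht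

theorem squarefree_prod_of_subset_signGenerators {Y : ℕ} {t : Finset ℤ}
    (ht : t ⊆ signGenerators Y) : Squarefree (∏ g ∈ t, g) :=
  Int.squarefree_natAbs.mp
    ((squarefree_primorial Y).squarefree_of_dvd (natAbs_prod_dvd_primorial ht))

theorem prod_ne_one_of_subset_signGenerators {Y : ℕ} {t : Finset ℤ} (ht : t ⊆ signGenerators Y)
    (hne : t.Nonempty) : ∏ g ∈ t, g ≠ 1 := by
  intro h
  have hunit : ∀ g ∈ t, g = -1 := fun g hg ↦
    eq_neg_one_of_mem_signGenerators_of_isUnit g (ht hg)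
      (isUnit_of_dvd_one (h ▸ dvd_prod_of_mem (fun g ↦ g) hg))
  rw [eq_singleton_iff_nonempty_unique_mem.mpr ⟨hne, hunit⟩, prod_singleton] at h
  exact absurd h (by decide)

theorem mem_of_oddJacobiSym_eq_zero {Y p : ℕ} (hp : p.Prime) :
    ∀ g ∈ signGenerators Y, oddJacobiSym g p = 0 → p ∈ insert 2 (primesLE Y) := by
  have hdvd {g : ℤ} (hg : oddJacobiSym g p = 0) : p ∣ 4 * g.natAbs :=
    (hp.dvd_iff_not_coprime).mpr fun hcop ↦ oddJacobiSym_ne_zero_iff.mpr hcop hg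
  have htwo (h : p ∣ 4) : p = 2 :=
    (prime_dvd_prime_iff_eq hp prime_two).mp (hp.dvd_of_dvd_pow (n := 2) h)
  refine forall_mem_signGenerators.mpr ⟨fun h ↦ ?_, fun q hq h ↦ ?_⟩
  · exact mem_insert.mpr (Or.inl (htwo (hdvd h)))
  · rcases (hp.dvd_mul).mp (hdvd h) with h4 | hpq
    · exact mem_insert.mpr (Or.inl (htwo h4))
    · rw [Int.natAbs_natCast, prime_dvd_prime_iff_eq hp (prime_of_mem_primesLE hq)] at hpq
      exact mem_insert_of_mem (hpq ▸ hq)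

theorem card_filter_oddJacobiSym_eq_zero_le (N Y : ℕ) :
    #{p ∈ primesLE N | ∃ g ∈ signGenerators Y, oddJacobiSym g p = 0} ≤ primeCounting Y + 1 := by
  rw [← primesLE_card_eq_primeCounting]
  refine (card_le_card fun p hp ↦ ?_).trans (card_insert_le 2 _)
  obtain ⟨hpN, g, hg, hzero⟩ := mem_filter.mp hp
  exact mem_of_oddJacobiSym_eq_zero (prime_of_mem_primesLE hpN) g hg hzero

theorem filter_primes_eq_filter_prescribedSign {a : ℕ} (ha : a = 1 ∨ a = 3) (ε : ℕ → ℤ)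
    (N Y : ℕ) :
    {p ∈ range (N + 1) | p.Prime ∧ p % 4 = a ∧
        ∀ q ∈ range (Y + 1), q.Prime → jacobiSym q p = ε q} =
      {p ∈ primesLE N | ∀ g ∈ signGenerators Y, oddJacobiSym g p = prescribedSign ε a g} := by
  ext p
  rw [mem_filter, mem_filter, forall_oddJacobiSym_eq_prescribedSign_iff ha, mem_primesLE,
    mem_range, Nat.lt_succ_iff, and_assoc]

theorem abs_card_primes_sub_primeCounting_div_le {N Y : ℕ} {B : ℝ} (hB : 0 ≤ B)
    (hsum : ∀ E : ℤ, Squarefree E → E ≠ 1 → E.natAbs ≤ primorial Y →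
      |∑ p ∈ primesLE N, (oddJacobiSym E p : ℝ)| ≤ B)
    {ε : ℕ → ℤ} (hε : ∀ q, ε q = 1 ∨ ε q = -1) {a : ℕ} (ha : a = 1 ∨ a = 3) :
    |(#{p ∈ range (N + 1) | p.Prime ∧ p % 4 = a ∧
          ∀ q ∈ range (Y + 1), q.Prime → jacobiSym q p = ε q} : ℝ) -
        primeCounting N / 2 ^ (primeCounting Y + 1)| ≤ primeCounting Y + 1 + B := by
  have hsubset (t : Finset ℤ) (ht : t ⊆ signGenerators Y) (hne : t.Nonempty) :
      |((∑ p ∈ primesLE N, ∏ g ∈ t, oddJacobiSym g p : ℤ) : ℝ)| ≤ B := by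
    simp_rw [← oddJacobiSym_prod hne, Int.cast_sum]
    exact hsum _ (squarefree_prod_of_subset_signGenerators ht)
      (prod_ne_one_of_subset_signGenerators ht hne)
      (le_of_dvd (primorial_pos Y) (natAbs_prod_dvd_primorial ht))
  rw [filter_primes_eq_filter_prescribedSign ha, ← card_signGenerators,
    ← primesLE_card_eq_primeCounting N]
  refine (abs_card_filter_sub_card_div_two_pow_le hB
    (fun g _ ↦ prescribedSign_eq_one_or_neg_one hε ha g)
    (fun g _ p _ ↦ oddJacobiSym_trichotomy g p) hsubset).trans ?_
  gcongr
  exact mod_cast card_filter_oddJacobiSym_eq_zero_le N Y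

end PrescribedSymbols

section Uniformity

open Filter Nat
open Finset (range)
open scoped Finset

theorem primeCounting_le_self (n : ℕ) : primeCounting n ≤ n := by
  rw [← primesLE_card_eq_primeCounting, primesLE_eq_filter_Ioc_zero]
  exact (Finset.card_filter_le _ _).trans_eq (card_Ioc 0 n)

theorem four_mul_primorial_le_rpow {K l : ℝ} (hl : 4 ≤ l) {Y : ℕ} (hY : Y ≤ K * Real.log l) :
    4 * primorial Y ≤ l ^ (1 + K * Real.log 4) := by
  have hl0 : 0 < l := by linarith
  have hpow : (4 : ℝ) ^ Y ≤ l ^ (K * Real.log 4) := by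
    rw [← Real.rpow_natCast, Real.rpow_def_of_pos four_pos, Real.rpow_def_of_pos hl0,
      Real.exp_le_exp]
    calc Real.log 4 * Y ≤ Real.log 4 * (K * Real.log l) := by gcongr
      _ = Real.log l * (K * Real.log 4) := by ring
  calc (4 * primorial Y : ℝ) ≤ 4 * 4 ^ Y := by
        gcongr
        exact mod_cast primorial_le_four_pow Y
    _ ≤ l * l ^ (K * Real.log 4) := by gcongr
    _ = l ^ (1 + K * Real.log 4) := by rw [Real.rpow_add hl0, Real.rpow_one]

theorem eventually_primeCounting_add_one_le {c : ℝ} (hc : c ≤ 1) (K : ℝ) :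
    ∀ᶠ l : ℝ in atTop, ∀ Y : ℕ, Y ≤ K * Real.log l →
      (primeCounting Y + 1 : ℝ) ≤ Real.exp (l ^ 2) * Real.exp (-c * l) := by
  filter_upwards [eventually_mul_rpow_le_exp (|K| + 1) 1, eventually_ge_atTop 2] with l hexp hl Y hY
  rw [Real.rpow_one] at hexp
  have hlog : Real.log l ≤ l := (Real.log_le_sub_one_of_pos (by linarith)).trans (by linarith)
  calc (primeCounting Y + 1 : ℝ) ≤ |K| * l + l := by
        have hπ : (primeCounting Y : ℝ) ≤ Y := mod_cast primeCounting_le_self Y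
        have hK : K * Real.log l ≤ |K| * l :=
          mul_le_mul (le_abs_self K) hlog (Real.log_nonneg (by linarith)) (abs_nonneg K)
        linarith
    _ ≤ Real.exp l := by linarith
    _ ≤ Real.exp (l ^ 2) * Real.exp (-c * l) := by
        rw [← Real.exp_add, Real.exp_le_exp]
        nlinarith

theorem natFloor_le_mul_log_sqrt_log {A x y : ℝ} (hx : 1 ≤ Real.log x)
    (hy : y ≤ A * Real.log (Real.log x)) :
    (⌊y⌋₊ : ℝ) ≤ 2 * |A| * Real.log (√(Real.log x)) := by
  have hloglog : 0 ≤ Real.log (Real.log x) := Real.log_nonneg hx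
  calc (⌊y⌋₊ : ℝ) ≤ ⌊|A| * Real.log (Real.log x)⌋₊ := by
        gcongr
        exact hy.trans (by gcongr; exact le_abs_self A)
    _ ≤ |A| * Real.log (Real.log x) := floor_le (by positivity)
    _ = 2 * |A| * Real.log (√(Real.log x)) := by
        rw [Real.log_sqrt (by linarith)]
        ring

theorem exists_eventually_abs_card_primes_sub_primeCounting_div_le :
    ∃ c > 0, ∀ K : ℝ, ∀ᶠ l : ℝ in atTop, ∀ Y : ℕ, Y ≤ K * Real.log l →
      ∀ ε : ℕ → ℤ, (∀ q, ε q = 1 ∨ ε q = -1) → ∀ a : ℕ, (a = 1 ∨ a = 3) →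
      |(#{p ∈ range (⌊Real.exp (l ^ 2)⌋₊ + 1) | p.Prime ∧ p % 4 = a ∧
            ∀ q ∈ range (Y + 1), q.Prime → jacobiSym q p = ε q} : ℝ) -
          primeCounting ⌊Real.exp (l ^ 2)⌋₊ / 2 ^ (primeCounting Y + 1)| ≤
        2 * Real.exp (l ^ 2) * Real.exp (-c * l) := by
  obtain ⟨c, hc, hSW⟩ := exists_eventually_abs_sum_oddJacobiSym_le
  refine ⟨min c 1, by positivity, fun K ↦ ?_⟩
  filter_upwards [hSW (1 + K * Real.log 4), eventually_ge_atTop 4,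
    eventually_primeCounting_add_one_le (min_le_right c 1) K] with l hsum hl hπ
  intro Y hY ε hε a ha
  have hB (E : ℤ) (hE : Squarefree E) (hE1 : E ≠ 1) (hEY : E.natAbs ≤ primorial Y) :
      |∑ p ∈ primesLE ⌊Real.exp (l ^ 2)⌋₊, (oddJacobiSym E p : ℝ)| ≤
        Real.exp (l ^ 2) * Real.exp (-min c 1 * l) := by
    have hmod : ((4 * E.natAbs : ℕ) : ℝ) ≤ l ^ (1 + K * Real.log 4) :=
      (mod_cast Nat.mul_le_mul_left 4 hEY : ((4 * E.natAbs : ℕ) : ℝ) ≤ 4 * primorial Y).trans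
        (four_mul_primorial_le_rpow hl hY)
    refine (hsum E hE hE1 hmod).trans ?_
    rw [neg_mul]
    gcongr
    exact min_le_left c 1
  linarith [abs_card_primes_sub_primeCounting_div_le (by positivity) hB hε ha, hπ Y hY]

end Uniformity

theorem stmt_12_general :
    ∃ c > 0, ∃ C > 0, ∀ A : ℝ, ∃ x₀ : ℝ, ∀ x y : ℝ, x₀ ≤ x →
      y ≤ A * Real.log (Real.log x) →
      ∀ ε : ℕ → ℤ, (∀ q, ε q = 1 ∨ ε q = -1) →
      ∀ a : ℕ, (a = 1 ∨ a = 3) →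
      |(((Finset.range (⌊x⌋₊ + 1)).filter (fun p : ℕ => p.Prime ∧ p % 4 = a ∧
            ∀ q ∈ Finset.range (⌊y⌋₊ + 1), Nat.Prime q → jacobiSym (q : ℤ) p = ε q)).card
          : ℝ) - (Nat.primeCounting ⌊x⌋₊ : ℝ) / 2 ^ (Nat.primeCounting ⌊y⌋₊ + 1)| ≤
        C * x * Real.exp (-c * Real.sqrt (Real.log x)) := by
  obtain ⟨c, hc, hcount⟩ := exists_eventually_abs_card_primes_sub_primeCounting_div_le
  refine ⟨c, hc, 2, two_pos, fun A ↦ ?_⟩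
  obtain ⟨l₀, hl₀⟩ := Filter.eventually_atTop.mp (hcount (2 * |A|))
  refine ⟨Real.exp (max l₀ 1 ^ 2), fun x y hx hy ε hε a ha ↦ ?_⟩
  have hx0 : 0 < x := (Real.exp_pos _).trans_le hx
  have hlog : max l₀ 1 ^ 2 ≤ Real.log x := (Real.le_log_iff_exp_le hx0).mpr hx
  have hl : max l₀ 1 ≤ √(Real.log x) := Real.le_sqrt_of_sq_le hlog
  have hlog1 : 1 ≤ Real.log x := Real.one_le_sqrt.mp ((le_max_right l₀ 1).trans hl)
  have hexp : Real.exp (√(Real.log x) ^ 2) = x := by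
    rw [Real.sq_sqrt (by linarith), Real.exp_log hx0]
  have h := hl₀ _ ((le_max_left l₀ 1).trans hl) _ (natFloor_le_mul_log_sqrt_log hlog1 hy) ε hε a ha
  rw [hexp] at h
  -- The two filters carry different decidability instances.
  convert h

/-- Prescribing Legendre symbols at all primes `q ≤ y ≤ log log x` together with a
congruence class `a mod 4`: the number of primes `p ≤ x` with `p ≡ a (mod 4)` and
`(q/p) = ε_q` for all primes `q ≤ y` equals `π(x)/2^{π(y)+1} + O(x e^{-c√(log x)})`. -/
theorem stmt_12 :
    ∃ c > 0, ∃ C > 0, ∃ x₀ : ℝ, ∀ (x y : ℝ), x₀ ≤ x → 3 ≤ y →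
      y ≤ Real.log (Real.log x) →
      ∀ (ε : ℕ → ℤ), (∀ q, ε q = 1 ∨ ε q = -1) →
      ∀ a : ℕ, (a = 1 ∨ a = 3) →
      |(((Finset.range (⌊x⌋₊ + 1)).filter (fun p : ℕ => p.Prime ∧ p % 4 = a ∧
            ∀ q ∈ Finset.range (⌊y⌋₊ + 1), Nat.Prime q → jacobiSym (q : ℤ) p = ε q)).card
          : ℝ) - (Nat.primeCounting ⌊x⌋₊ : ℝ) / 2 ^ (Nat.primeCounting ⌊y⌋₊ + 1)| ≤
        C * x * Real.exp (-c * Real.sqrt (Real.log x)) := by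
  obtain ⟨c, hc, C, hC, h⟩ := stmt_12_general
  obtain ⟨x₀, hx₀⟩ := h 1
  exact ⟨c, hc, C, hC, x₀, fun x y hx _ hy ↦ hx₀ x y hx (by rwa [one_mul])⟩
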